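/- Mean-value property, volume version: assume m > 4. Let a ∈ ℝ^m, r > 0, and let f ∈ C²(B(a,r)×𝔹^m, ℋ_k) extend continuously to (closed ball B̄(a,r)) × (closed unit ball), with 𝒟_k f = 0 in B(a,r) × 𝔹^m. Then for every ν ∈ 𝔹^m, f(a,ν) = ((m+2k−2)/((m−2) V(B(a,r)))) ∫_{B(a,r)} f(x, R_{η(x)}(ν)) dx, where η(x) = (x−a)/|x−a|, R_{η}(ν) = ν − 2⟨η,ν⟩η, and V(B(a,r)) is the Lebesgue volume of B(a,r). -/

import Mathlib

noncomputable section

open MeasureTheory Metric Filter Topology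
open scoped RealInnerProductSpace

/-- `ℝ^m` as a Euclidean space. -/
abbrev Evec (m : ℕ) : Type := EuclideanSpace ℝ (Fin m)

/-- Partial derivative in the `i`-th coordinate direction. -/
def pdv {m : ℕ} (i : Fin m) (f : Evec m → ℝ) (x : Evec m) : ℝ :=
  fderiv ℝ f x (EuclideanSpace.single i 1)

/-- Euclidean Laplacian on `ℝ^m`. -/
def lapl {m : ℕ} (f : Evec m → ℝ) (x : Evec m) : ℝ :=
  ∑ i : Fin m, pdv i (pdv i f) x

/-- `p` is a real-valued polynomial function on `ℝ^m`, homogeneous of degree `k` and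
harmonic; i.e. `p ∈ ℋ_k`. -/
def IsHk (m k : ℕ) (p : Evec m → ℝ) : Prop :=
  (∃ P : MvPolynomial (Fin m) ℝ, ∀ x : Evec m, p x = MvPolynomial.eval (fun i => x i) P) ∧
  (∀ (c : ℝ) (x : Evec m), p (c • x) = c ^ k * p x) ∧
  (∀ x : Evec m, lapl p x = 0)

/-- The surface measure `dS` on the unit sphere `𝕊^{m-1}`, as a measure on `ℝ^m`. -/
def sphereM (m : ℕ) : Measure (Evec m) :=
  Measure.map Subtype.val ((volume : Measure (Evec m)).toSphere)

/-- `ω_m`, the surface area of the unit sphere `𝕊^{m-1}`. -/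
def omegaS (m : ℕ) : ℝ := (sphereM m Set.univ).toReal

/-- The constant `c_{m,k} = 2(m+2k-2)/((m-2)ω_m)`. -/
def cmk (m k : ℕ) : ℝ := 2 * ((m : ℝ) + 2 * k - 2) / (((m : ℝ) - 2) * omegaS m)

/-- The reflection `R_a(u) = u - 2⟨a,u⟩a/|a|²` (in Clifford notation `a u a/|a|²`). -/
def reflv {m : ℕ} (a u : Evec m) : Evec m :=
  u - (2 * ⟪a, u⟫ / ‖a‖ ^ 2) • a

/-- `dim ℋ_k`. -/
def hdim (m k : ℕ) : ℕ :=
  Nat.choose (m + k - 1) (m - 1) - Nat.choose (m + k - 3) (m - 1)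

/-- `Z` is the reproducing kernel `Z_k` of `ℋ_k` on the unit sphere: a symmetric,
rotation invariant kernel, bounded by `dim ℋ_k` on the unit ball, belonging to `ℋ_k`
in the first variable and reproducing elements of `ℋ_k` from their spherical values. -/
def IsZk (m k : ℕ) (Z : Evec m → Evec m → ℝ) : Prop :=
  (∀ v : Evec m, IsHk m k (fun u => Z u v)) ∧
  (∀ p : Evec m → ℝ, IsHk m k p → ∀ v : Evec m, (∫ u, Z u v * p u ∂(sphereM m)) = p v) ∧
  (∀ u v : Evec m, Z u v = Z v u) ∧
  (∀ u v : Evec m, ‖u‖ ≤ 1 → ‖v‖ ≤ 1 → |Z u v| ≤ (hdim m k : ℝ)) ∧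
  (∀ (A : Evec m ≃ₗᵢ[ℝ] Evec m) (u v : Evec m), Z (A u) (A v) = Z u v)

/-- The point `(x', y) ∈ ℝ^{d+1}` with first `d` coordinates `x'` and last coordinate `y`. -/
def upP (d : ℕ) (x' : Evec d) (y : ℝ) : Evec (d + 1) :=
  (EuclideanSpace.equiv (Fin (d + 1)) ℝ).symm
    (Fin.snoc (⇑(EuclideanSpace.equiv (Fin d) ℝ) x') y)

/-- The first `d` coordinates of a point of `ℝ^{d+1}`. -/
def downP (d : ℕ) (x : Evec (d + 1)) : Evec d :=
  (EuclideanSpace.equiv (Fin d) ℝ).symm (fun i => x (Fin.castSucc i))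

/-- The last coordinate of a point of `ℝ^{d+1}`. -/
def lastP (d : ℕ) (x : Evec (d + 1)) : ℝ := x (Fin.last d)

/-- The Poisson kernel `P_H` for bosonic Laplacians in the upper half-space `ℝ^{d+1}_+`,
`P_H(x,t,u,v) = c_{m,k} (y/|x-t|^m) Z_k(R_{x-t}(u), v)` with `m = d+1`, `x = (x',y)`,
`t = (t',0)`. -/
def PH (d k : ℕ) (Z : Evec (d + 1) → Evec (d + 1) → ℝ) (x' : Evec d) (y : ℝ)
    (t' : Evec d) (u v : Evec (d + 1)) : ℝ :=
  cmk (d + 1) k * (y / ‖upP d x' y - upP d t' 0‖ ^ (d + 1)) *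
    Z (reflv (upP d x' y - upP d t' 0) u) v

/-- The Poisson integral `P_H[f]` in the upper half-space. -/
def PHint (d k : ℕ) (Z : Evec (d + 1) → Evec (d + 1) → ℝ)
    (f : Evec d → Evec (d + 1) → ℝ) (x' : Evec d) (y : ℝ) (v : Evec (d + 1)) : ℝ :=
  ∫ t' : Evec d, (∫ u, PH d k Z x' y t' u v * f t' u ∂(sphereM (d + 1)))

/-- The Poisson kernel `P_B` for bosonic Laplacians in the unit ball. -/
def PB (m k : ℕ) (Z : Evec m → Evec m → ℝ) (x ζ ω ν : Evec m) : ℝ :=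
  (cmk m k / 2) * ((1 - ‖x‖ ^ 2) / ‖x - ζ‖ ^ m) * Z (reflv (x - ζ) ω) ν

/-- The Poisson integral `P_B[h]` in the unit ball. -/
def PBint (m k : ℕ) (Z : Evec m → Evec m → ℝ) (h : Evec m → Evec m → ℝ)
    (x ν : Evec m) : ℝ :=
  ∫ ζ, (∫ ω, PB m k Z x ζ ω ν * h ζ ω ∂(sphereM m)) ∂(sphereM m)

/-- Partial derivative in the first (`x`) variable. -/
def pd1 {m : ℕ} (i : Fin m) (f : Evec m → Evec m → ℝ) : Evec m → Evec m → ℝ :=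
  fun x u => fderiv ℝ (fun x₁ => f x₁ u) x (EuclideanSpace.single i 1)

/-- Partial derivative in the second (`u`) variable. -/
def pd2 {m : ℕ} (i : Fin m) (f : Evec m → Evec m → ℝ) : Evec m → Evec m → ℝ :=
  fun x u => fderiv ℝ (fun u₁ => f x u₁) u (EuclideanSpace.single i 1)

/-- The bosonic Laplacian `𝒟_k`. -/
def Dk (m k : ℕ) (f : Evec m → Evec m → ℝ) : Evec m → Evec m → ℝ := fun x u =>
  (∑ i : Fin m, pd1 i (pd1 i f) x u)
    - (4 / ((m : ℝ) + 2 * k - 2)) *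
        ∑ i : Fin m, ∑ j : Fin m, u i * pd1 i (pd2 j (pd1 j f)) x u
    + (4 * ‖u‖ ^ 2 / (((m : ℝ) + 2 * k - 2) * ((m : ℝ) + 2 * k - 4))) *
        ∑ i : Fin m, ∑ j : Fin m, pd2 i (pd1 i (pd2 j (pd1 j f))) x u

/-- `f ∈ C²(Ω×𝔹^m, ℋ_k)`: twice continuously differentiable on `Ω × 𝔹^m` and, for each
fixed `x ∈ Ω`, coinciding in the second variable with an element of `ℋ_k`. -/
def C2Hk (m k : ℕ) (Ω : Set (Evec m)) (f : Evec m → Evec m → ℝ) : Prop :=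
  ContDiffOn ℝ 2 (fun q : Evec m × Evec m => f q.1 q.2) (Ω ×ˢ ball (0 : Evec m) 1) ∧
  ∀ x ∈ Ω, ∃ q, IsHk m k q ∧ ∀ u ∈ closedBall (0 : Evec m) 1, f x u = q u

/-- The `L^p` norm `(∫_{ℝ^{m-1}} ∫_{𝕊^{m-1}} |f(x',u)|^p dS(u) dx')^{1/p}` (`m = d+1`),
valued in `ℝ≥0∞`. -/
def lpH (d : ℕ) (p : ℝ) (f : Evec d → Evec (d + 1) → ℝ) : ENNReal :=
  (∫⁻ x' : Evec d, ∫⁻ u, ENNReal.ofReal (|f x' u| ^ p) ∂(sphereM (d + 1))) ^ (1 / p)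

/-- `f ∈ L^p(ℝ^{m-1}×𝔹^m, ℋ_k)` (`m = d+1`). -/
def MemLpH (d k : ℕ) (p : ℝ) (f : Evec d → Evec (d + 1) → ℝ) : Prop :=
  Measurable (fun q : Evec d × Evec (d + 1) => f q.1 q.2) ∧
  (∀ x' : Evec d, ∃ q, IsHk (d + 1) k q ∧
    ∀ u ∈ closedBall (0 : Evec (d + 1)) 1, f x' u = q u) ∧
  lpH d p f < ⊤

/-- The `L^p` norm `(∫_{𝕊^{m-1}} ∫_{𝕊^{m-1}} |h(ζ,ω)|^p dS(ω) dS(ζ))^{1/p}`,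
valued in `ℝ≥0∞`. -/
def lpS (m : ℕ) (p : ℝ) (h : Evec m → Evec m → ℝ) : ENNReal :=
  (∫⁻ ζ, ∫⁻ ω, ENNReal.ofReal (|h ζ ω| ^ p) ∂(sphereM m) ∂(sphereM m)) ^ (1 / p)

/-- `h ∈ L^p(𝕊^{m-1}×𝔹^m, ℋ_k)`. -/
def MemLpS (m k : ℕ) (p : ℝ) (h : Evec m → Evec m → ℝ) : Prop :=
  Measurable (fun q : Evec m × Evec m => h q.1 q.2) ∧
  (∀ ζ : Evec m, ‖ζ‖ = 1 → ∃ q, IsHk m k q ∧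
    ∀ ω ∈ closedBall (0 : Evec m) 1, h ζ ω = q ω) ∧
  lpS m p h < ⊤

/-- Iterated partial derivative `D_x^α` in the first variable, for a multi-index `α ∈ ℕ^m`. -/
def Dx {m : ℕ} (α : Fin m → ℕ) (f : Evec m → Evec m → ℝ) : Evec m → Evec m → ℝ :=
  (List.finRange m).foldr (fun i g => (pd1 i)^[α i] g) f

/-- Iterated partial derivative `D_ν^β` in the second variable, for a multi-index `β ∈ ℕ^m`. -/
def Dv {m : ℕ} (β : Fin m → ℕ) (f : Evec m → Evec m → ℝ) : Evec m → Evec m → ℝ :=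
  (List.finRange m).foldr (fun i g => (pd2 i)^[β i] g) f

/-- The mean over the unit sphere of the restriction of `F`. -/
def angularMean {m : ℕ} (F : Evec m → ℝ) : ℝ :=
  (∫ ω : sphere (0 : Evec m) 1, F ω ∂(volume : Measure (Evec m)).toSphere) /
    (volume : Measure (Evec m)).toSphere.real Set.univ

lemma evec_nontrivial {m : ℕ} (hm : 0 < m) : Nontrivial (Evec m) :=
  Module.nontrivial_of_finrank_pos (R := ℝ) (by simpa using hm)

lemma toSphere_real_pos {m : ℕ} (hm : 0 < m) :
    0 < (volume : Measure (Evec m)).toSphere.real Set.univ := by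
  have := evec_nontrivial hm
  rw [measureReal_def, ENNReal.toReal_pos_iff]
  refine ⟨?_, measure_lt_top _ _⟩
  rw [Measure.measure_univ_pos]
  exact Measure.toSphere_ne_zero _

lemma homeomorphUnitSphereProd_snd_smul_fst {m : ℕ} (x : ({(0 : Evec m)}ᶜ : Set (Evec m))) :
    (homeomorphUnitSphereProd (Evec m) x).2.1 • (homeomorphUnitSphereProd (Evec m) x).1.1
      = x.1 := by
  have hx : ‖x.1‖ ≠ 0 := norm_ne_zero_iff.2 x.2
  simp [smul_smul, hx]

/-- Integration in polar coordinates, as an integral over a product measure. -/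
lemma integral_eq_integral_prod_sphere {m : ℕ} (hm : 0 < m) (G : Evec m → ℝ) :
    ∫ y, G y = ∫ z : sphere (0 : Evec m) 1 × Set.Ioi (0 : ℝ), G (z.2.1 • z.1.1)
      ∂((volume : Measure (Evec m)).toSphere.prod (Measure.volumeIoiPow (m - 1))) := by
  have := evec_nontrivial hm
  have hd : Module.finrank ℝ (Evec m) = m := by simp
  have key := (volume : Measure (Evec m)).measurePreserving_homeomorphUnitSphereProd.integral_comp
    (Homeomorph.measurableEmbedding _)
    (fun z : sphere (0 : Evec m) 1 × Set.Ioi (0 : ℝ) => G (z.2.1 • z.1.1))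
  rw [hd] at key
  rw [← key]
  simp only [homeomorphUnitSphereProd_snd_smul_fst]
  rw [integral_subtype_comap (measurableSet_singleton _).compl G, restrict_compl_singleton]

lemma integrable_prod_sphere {m : ℕ} (hm : 0 < m) {G : Evec m → ℝ} (hG : Integrable G) :
    Integrable (fun z : sphere (0 : Evec m) 1 × Set.Ioi (0 : ℝ) => G (z.2.1 • z.1.1))
      ((volume : Measure (Evec m)).toSphere.prod (Measure.volumeIoiPow (m - 1))) := by
  have := evec_nontrivial hm
  have hd : Module.finrank ℝ (Evec m) = m := by simp
  have key :=
    (volume : Measure (Evec m)).measurePreserving_homeomorphUnitSphereProd.integrable_comp_emb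
    (Homeomorph.measurableEmbedding _)
    (g := fun z : sphere (0 : Evec m) 1 × Set.Ioi (0 : ℝ) => G (z.2.1 • z.1.1))
  rw [hd] at key
  rw [← key]
  simp only [Function.comp_def, homeomorphUnitSphereProd_snd_smul_fst]
  have := (integrableOn_iff_comap_subtypeVal (measurableSet_singleton (0 : Evec m)).compl).1
    (hG.integrableOn (s := {(0 : Evec m)}ᶜ))
  exact this

lemma integral_volumeIoiPow (n : ℕ) (g : ℝ → ℝ) :
    ∫ r : Set.Ioi (0 : ℝ), g r ∂(Measure.volumeIoiPow n) =
      ∫ r in Set.Ioi (0 : ℝ), r ^ n * g r := by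
  simp only [Measure.volumeIoiPow, ENNReal.ofReal]
  rw [integral_withDensity_eq_integral_smul,
    integral_subtype_comap measurableSet_Ioi fun a ↦ Real.toNNReal (a ^ n) • g a,
    setIntegral_congr_fun measurableSet_Ioi fun x hx ↦ ?_]
  · simp only [NNReal.smul_def, Real.coe_toNNReal _ (pow_nonneg (Set.mem_Ioi.1 hx).le _), smul_eq_mul]
  · exact (measurable_subtype_coe.pow_const _).real_toNNReal

lemma integral_angular_mul_radial {m : ℕ} (hm : 0 < m) (F : Evec m → ℝ)
    (hF : ∀ (c : ℝ) (y : Evec m), 0 < c → F (c • y) = F y) (τ : ℝ → ℝ) :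
    ∫ y, F y * τ ‖y‖ = angularMean F * ∫ y : Evec m, τ ‖y‖ := by
  have h1 : ∀ H : Evec m → ℝ, (∀ (c : ℝ) (y : Evec m), 0 < c → H (c • y) = H y) →
      ∫ y, H y * τ ‖y‖ = (∫ ω : sphere (0 : Evec m) 1, H ω ∂(volume : Measure (Evec m)).toSphere) *
        ∫ r : Set.Ioi (0 : ℝ), τ r ∂(Measure.volumeIoiPow (m - 1)) := by
    intro H hH
    rw [integral_eq_integral_prod_sphere hm, ← integral_prod_mul]
    refine integral_congr_ae (.of_forall fun z => ?_)
    have hz : (0 : ℝ) < z.2.1 := z.2.2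
    simp only [hH _ _ hz, norm_smul, Real.norm_eq_abs, abs_of_pos hz]
    simp
  have h2 := h1 (fun _ => 1) (fun _ _ _ => rfl)
  simp only [one_mul, integral_const, smul_eq_mul, mul_one] at h2
  rw [h1 F hF, h2, angularMean]
  have := (toSphere_real_pos hm).ne'
  field_simp

/-- The polynomial function on `ℝ^m` defined by `P`. -/
def ev {m : ℕ} (P : MvPolynomial (Fin m) ℝ) (x : Evec m) : ℝ :=
  MvPolynomial.eval (fun i => x i) P

/-- The derivative of polynomials in the direction `v`. -/
def dd {m : ℕ} (v : Evec m) :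
    Derivation ℝ (MvPolynomial (Fin m) ℝ) (MvPolynomial (Fin m) ℝ) :=
  MvPolynomial.mkDerivation ℝ (fun i => MvPolynomial.C (v i))

/-- The standard basis vectors of `ℝ^m`. -/
abbrev eb {m : ℕ} (i : Fin m) : Evec m := EuclideanSpace.single i 1

/-- The linear form `x ↦ ⟨v, x⟩` as a polynomial. -/
def linP {m : ℕ} (v : Evec m) : MvPolynomial (Fin m) ℝ :=
  ∑ i, MvPolynomial.C (v i) * MvPolynomial.X i

/-- `P` is homogeneous of degree `k` and harmonic. -/
def HarmP {m : ℕ} (k : ℕ) (P : MvPolynomial (Fin m) ℝ) : Prop :=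
  P.IsHomogeneous k ∧ ∑ i, dd (eb i) (dd (eb i) P) = 0

section Polynomials

variable {m : ℕ}

lemma ev_add (P Q : MvPolynomial (Fin m) ℝ) (x : Evec m) : ev (P + Q) x = ev P x + ev Q x := by
  simp [ev]

lemma ev_mul (P Q : MvPolynomial (Fin m) ℝ) (x : Evec m) : ev (P * Q) x = ev P x * ev Q x := by
  simp [ev]

lemma ev_pow (P : MvPolynomial (Fin m) ℝ) (n : ℕ) (x : Evec m) : ev (P ^ n) x = ev P x ^ n := by
  simp [ev]

lemma ev_smul (c : ℝ) (P : MvPolynomial (Fin m) ℝ) (x : Evec m) : ev (c • P) x = c * ev P x := by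
  simp [ev]

lemma ev_sum {ι : Type*} (s : Finset ι) (P : ι → MvPolynomial (Fin m) ℝ) (x : Evec m) :
    ev (∑ i ∈ s, P i) x = ∑ i ∈ s, ev (P i) x := by
  simp [ev]

@[simp] lemma ev_zero (x : Evec m) : ev (0 : MvPolynomial (Fin m) ℝ) x = 0 := by
  simp [ev]

@[simp] lemma ev_one (x : Evec m) : ev (1 : MvPolynomial (Fin m) ℝ) x = 1 := by
  simp [ev]

@[simp] lemma ev_C (c : ℝ) (x : Evec m) : ev (MvPolynomial.C c) x = c := by
  simp [ev]

@[simp] lemma ev_X (i : Fin m) (x : Evec m) : ev (MvPolynomial.X i) x = x i := by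
  simp [ev]

lemma inner_eq_sum (v w : Evec m) : ⟪v, w⟫ = ∑ i, v i * w i := by
  simp [PiLp.inner_apply, mul_comm]

lemma ev_linP (v x : Evec m) : ev (linP v) x = ⟪v, x⟫ := by
  simp [linP, ev_sum, ev_mul, inner_eq_sum]

lemma ev_injective {P Q : MvPolynomial (Fin m) ℝ} (h : ∀ x, ev P x = ev Q x) : P = Q :=
  MvPolynomial.funext fun x => by simpa [ev] using h (WithLp.toLp 2 x)

lemma contDiff_ev (P : MvPolynomial (Fin m) ℝ) : ContDiff ℝ ⊤ (ev P) := by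
  induction P using MvPolynomial.induction_on with
  | C c => simpa only [funext (ev_C c)] using contDiff_const
  | add P Q hP hQ => simpa only [funext (ev_add P Q)] using hP.add hQ
  | mul_X P i hP =>
    have : ContDiff ℝ ⊤ (fun x : Evec m => x i) := by fun_prop
    simpa only [funext (ev_mul P _), ev_X] using hP.mul this

lemma differentiable_ev (P : MvPolynomial (Fin m) ℝ) : Differentiable ℝ (ev P) :=
  (contDiff_ev P).differentiable (by simp)

lemma continuous_ev (P : MvPolynomial (Fin m) ℝ) : Continuous (ev P) :=
  (contDiff_ev P).continuous

lemma dd_X (v : Evec m) (i : Fin m) : dd v (MvPolynomial.X i) = MvPolynomial.C (v i) := by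
  simp [dd]

lemma dd_C (v : Evec m) (c : ℝ) : dd v (MvPolynomial.C c) = 0 := by
  simp [dd]

lemma dd_mul (v : Evec m) (P Q : MvPolynomial (Fin m) ℝ) :
    dd v (P * Q) = P * dd v Q + Q * dd v P := by
  simp

lemma fderiv_ev (P : MvPolynomial (Fin m) ℝ) (x v : Evec m) :
    fderiv ℝ (ev P) x v = ev (dd v P) x := by
  induction P using MvPolynomial.induction_on with
  | C c =>
    rw [show ev (MvPolynomial.C c) = fun _ : Evec m => c from funext (ev_C c), dd_C]
    simp
  | add P Q hP hQ =>
    rw [show ev (P + Q) = fun x => ev P x + ev Q x from funext (ev_add P Q), map_add, ev_add,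
      fderiv_fun_add (differentiable_ev P x) (differentiable_ev Q x)]
    simp [hP, hQ]
  | mul_X P i hP =>
    have hX : HasFDerivAt (ev (MvPolynomial.X i)) (EuclideanSpace.proj (𝕜 := ℝ) i) x := by
      rw [show ev (MvPolynomial.X i) = fun x : Evec m => x i from funext (ev_X i)]
      exact (EuclideanSpace.proj (𝕜 := ℝ) i).hasFDerivAt
    rw [show ev (P * MvPolynomial.X i) = fun x => ev P x * ev (MvPolynomial.X i) x from
      funext (ev_mul P _), dd_mul, ev_add, ev_mul, ev_mul,
      fderiv_fun_mul (differentiable_ev P x) (differentiable_ev _ x), hX.fderiv, dd_X]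
    simp [hP]

lemma dd_comm (v w : Evec m) (P : MvPolynomial (Fin m) ℝ) : dd v (dd w P) = dd w (dd v P) := by
  have : ⁅dd v, dd w⁆ = (0 : Derivation ℝ (MvPolynomial (Fin m) ℝ) _) := by
    refine MvPolynomial.derivation_ext fun i => ?_
    simp [Derivation.commutator_apply, dd_X]
  have h := congrArg (fun D => D P) this
  simp only [Derivation.commutator_apply] at h
  exact sub_eq_zero.1 (by simpa using h)

lemma dd_eq_sum (v : Evec m) (P : MvPolynomial (Fin m) ℝ) :
    dd v P = ∑ i, v i • dd (eb i) P := by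
  induction P using MvPolynomial.induction_on with
  | C c => simp
  | add P Q hP hQ => simp [hP, hQ, Finset.sum_add_distrib]
  | mul_X P j hP =>
    simp only [dd_mul, hP, dd_X, smul_add, Finset.sum_add_distrib, Finset.mul_sum]
    congr 1
    · rw [Finset.sum_eq_single j]
      · simp [MvPolynomial.smul_eq_C_mul, mul_comm]
      · intro b _ hb
        simp [hb.symm]
      · simp
    · simp

lemma dd_eb (i : Fin m) (P : MvPolynomial (Fin m) ℝ) : dd (eb i) P = MvPolynomial.pderiv i P := by
  have : dd (eb i) = MvPolynomial.pderiv (R := ℝ) i := by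
    refine MvPolynomial.derivation_ext fun j => ?_
    rw [dd_X, MvPolynomial.pderiv_X]
    by_cases h : i = j <;> simp [h, eq_comm]
  rw [this]

lemma ev_dd_eq_sum (v : Evec m) (P : MvPolynomial (Fin m) ℝ) (x : Evec m) :
    ev (dd v P) x = ∑ i, v i * ev (dd (eb i) P) x := by
  rw [dd_eq_sum, ev_sum]
  simp [ev_smul]

lemma ev_dd_add (v w : Evec m) (P : MvPolynomial (Fin m) ℝ) (x : Evec m) :
    ev (dd (v + w) P) x = ev (dd v P) x + ev (dd w P) x := by
  simp only [← fderiv_ev, map_add]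

lemma ev_dd_sub (v w : Evec m) (P : MvPolynomial (Fin m) ℝ) (x : Evec m) :
    ev (dd (v - w) P) x = ev (dd v P) x - ev (dd w P) x := by
  simp only [← fderiv_ev, map_sub]

lemma ev_dd_smul (c : ℝ) (v : Evec m) (P : MvPolynomial (Fin m) ℝ) (x : Evec m) :
    ev (dd (c • v) P) x = c * ev (dd v P) x := by
  simp only [← fderiv_ev, map_smul, smul_eq_mul]

lemma ev_homogeneous {k : ℕ} {P : MvPolynomial (Fin m) ℝ} (hP : P.IsHomogeneous k) (c : ℝ)
    (x : Evec m) : ev P (c • x) = c ^ k * ev P x := by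
  simp only [ev, MvPolynomial.eval_eq, Finset.mul_sum]
  refine Finset.sum_congr rfl fun d hd => ?_
  have hd' := hP (MvPolynomial.mem_support_iff.1 hd)
  simp only [PiLp.smul_apply, smul_eq_mul, mul_pow, Finset.prod_mul_distrib,
    Finset.prod_pow_eq_pow_sum]
  have : ∑ i ∈ d.support, d i = k := by
    simpa [Finsupp.weight_apply, Finsupp.sum] using hd'
  rw [this]
  ring

lemma isHomogeneous_dd {k : ℕ} {P : MvPolynomial (Fin m) ℝ} (hP : P.IsHomogeneous k)
    (v : Evec m) : (dd v P).IsHomogeneous (k - 1) := by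
  rw [dd_eq_sum]
  refine MvPolynomial.IsHomogeneous.sum _ _ _ fun i _ => ?_
  rw [dd_eb, MvPolynomial.smul_eq_C_mul]
  exact hP.pderiv.C_mul _

lemma HarmP.dd {k : ℕ} {P : MvPolynomial (Fin m) ℝ} (hP : HarmP k P) (v : Evec m) :
    HarmP (k - 1) (dd v P) := by
  refine ⟨isHomogeneous_dd hP.1 v, ?_⟩
  have h := congrArg (_root_.dd v) hP.2
  simpa only [map_sum, dd_comm v, map_zero] using h

lemma ev_euler {k : ℕ} {P : MvPolynomial (Fin m) ℝ} (hP : P.IsHomogeneous k) (x : Evec m) :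
    ev (dd x P) x = k * ev P x := by
  have h := congrArg (fun Q => ev Q x) hP.sum_X_mul_pderiv
  simp only [ev_sum, ev_mul, ev_X] at h
  rw [ev_dd_eq_sum]
  simp only [dd_eb, h]
  simp [ev]

lemma dd_eq_zero_of_isHomogeneous_zero {P : MvPolynomial (Fin m) ℝ} (hP : P.IsHomogeneous 0)
    (v : Evec m) : dd v P = 0 := by
  rw [← MvPolynomial.totalDegree_zero_iff_isHomogeneous,
    MvPolynomial.totalDegree_eq_zero_iff_eq_C] at hP
  rw [hP, dd_C]

lemma ev_euler_dd {k : ℕ} {P : MvPolynomial (Fin m) ℝ} (hP : P.IsHomogeneous k) (x v : Evec m) :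
    ev (dd x (dd v P)) x = ((k : ℝ) - 1) * ev (dd v P) x := by
  rcases Nat.eq_zero_or_pos k with rfl | hk
  · simp [dd_eq_zero_of_isHomogeneous_zero hP]
  · rw [ev_euler (isHomogeneous_dd hP v)]
    push_cast [Nat.cast_sub hk]
    ring

lemma pdv_ev (i : Fin m) (P : MvPolynomial (Fin m) ℝ) : pdv i (ev P) = ev (dd (eb i) P) :=
  funext fun x => fderiv_ev P x _

lemma lapl_ev (P : MvPolynomial (Fin m) ℝ) (x : Evec m) :
    lapl (ev P) x = ev (∑ i, dd (eb i) (dd (eb i) P)) x := by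
  simp [lapl, pdv_ev, ev_sum]

lemma IsHk.exists_harmP {k : ℕ} {p : Evec m → ℝ} (hp : IsHk m k p) :
    ∃ P, HarmP k P ∧ p = ev P := by
  obtain ⟨⟨P, hP⟩, hh, hl⟩ := hp
  have hcomp : p = ev (MvPolynomial.homogeneousComponent k P) := by
    funext x
    set n := P.totalDegree + 1 + k
    have hsum : ∀ c : ℝ, ∑ j ∈ Finset.range (n + 1),
        c ^ j * ev (MvPolynomial.homogeneousComponent j P) x = c ^ k * p x := by
      intro c
      rw [← hh c x, hP]
      conv_rhs => rw [← MvPolynomial.sum_homogeneousComponent P]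
      rw [Finset.sum_subset (Finset.range_subset_range.2 (show P.totalDegree + 1 ≤ n + 1 by omega))]
      · change _ = ev (∑ i ∈ Finset.range (n + 1), _) (c • x)
        rw [ev_sum]
        exact Finset.sum_congr rfl fun j _ =>
          (ev_homogeneous (MvPolynomial.homogeneousComponent_isHomogeneous j P) c x).symm
      · intro j _ hj
        exact MvPolynomial.homogeneousComponent_eq_zero _ _ (by simp at hj; omega)
    have hpol : ∑ j ∈ Finset.range (n + 1), Polynomial.monomial j
        (ev (MvPolynomial.homogeneousComponent j P) x) = Polynomial.monomial k (p x) := by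
      refine Polynomial.funext fun c => ?_
      simp only [Polynomial.eval_finsetSum, Polynomial.eval_monomial]
      rw [mul_comm (p x), ← hsum c]
      exact Finset.sum_congr rfl fun j _ => mul_comm _ _
    have hk := congrArg (fun Q => Polynomial.coeff Q k) hpol
    simp only [Polynomial.finsetSum_coeff, Polynomial.coeff_monomial] at hk
    rw [Finset.sum_ite_eq', if_pos (by simp [n])] at hk
    simpa using hk.symm
  refine ⟨_, ⟨MvPolynomial.homogeneousComponent_isHomogeneous k P, ?_⟩, hcomp⟩
  refine ev_injective fun x => ?_
  rw [← lapl_ev, ← hcomp, hl, ev_zero]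

/-- Taylor's formula for homogeneous polynomials. -/
lemma ev_add_smul {k : ℕ} : ∀ {P : MvPolynomial (Fin m) ℝ}, P.IsHomogeneous k →
    ∀ (x v : Evec m) (t : ℝ), ev P (x + t • v) =
      ∑ i ∈ Finset.range (k + 1), t ^ i / i.factorial * ev ((dd v)^[i] P) x := by
  induction k with
  | zero =>
    intro P hP x v t
    rw [← MvPolynomial.totalDegree_zero_iff_isHomogeneous,
      MvPolynomial.totalDegree_eq_zero_iff_eq_C] at hP
    rw [hP]
    simp
  | succ k ih =>
    intro P hP x v t
    have hd : ∀ s : ℝ, HasDerivAt (fun s : ℝ => ev P (x + s • v))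
        (ev (dd v P) (x + s • v)) s := by
      intro s
      have h1 : HasDerivAt (fun s : ℝ => x + s • v) v s := by
        simpa using ((hasDerivAt_id s).smul_const v).const_add x
      have := (differentiable_ev P (x + s • v)).hasFDerivAt.comp_hasDerivAt s h1
      rwa [fderiv_ev] at this
    have hd' : ∀ s : ℝ, HasDerivAt (fun s : ℝ => ∑ i ∈ Finset.range (k + 1 + 1),
        s ^ i / i.factorial * ev ((dd v)^[i] P) x) (ev (dd v P) (x + s • v)) s := by
      intro s
      rw [ih (isHomogeneous_dd hP v)]
      have := HasDerivAt.fun_sum (u := Finset.range (k + 1 + 1))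
        (A := fun i s => s ^ i / i.factorial * ev ((dd v)^[i] P) x) (x := s)
        fun i _ => ((hasDerivAt_pow i s).div_const (i.factorial : ℝ)).mul_const _
      convert! this using 1
      rw [Finset.sum_range_succ' _ (k + 1)]
      simp only [Function.iterate_succ_apply, Nat.factorial_succ]
      simp only [zero_mul, zero_div, add_zero, CharP.cast_eq_zero]
      refine Finset.sum_congr rfl fun i _ => ?_
      push_cast
      have := Nat.factorial_ne_zero i
      have h2 : (i : ℝ) + 1 ≠ 0 := by positivity
      field_simp
    have := is_const_of_deriv_eq_zero (fun s => ((hd s).sub (hd' s)).differentiableAt)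
      (fun s => by simpa using ((hd s).sub (hd' s)).deriv) t 0
    simp only [Pi.sub_apply] at this
    rw [Finset.sum_range_succ' (fun i => (0 : ℝ) ^ i / _ * _)] at this
    simp at this
    simpa using sub_eq_zero.1 this

end Polynomials

/-- The integral of the polynomial `P` against the Gaussian weight `exp (-|x|²/2)`. -/
def gm {m : ℕ} (P : MvPolynomial (Fin m) ℝ) : ℝ :=
  ∫ x : Evec m, ev P x * Real.exp (-(‖x‖ ^ 2 / 2))

/-- The polynomial `|x|²`. -/
def rsqP (m : ℕ) : MvPolynomial (Fin m) ℝ := ∑ i, MvPolynomial.X i * MvPolynomial.X i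

section Gaussian

variable {m : ℕ}

lemma ev_rsqP (x : Evec m) : ev (rsqP m) x = ‖x‖ ^ 2 := by
  rw [← real_inner_self_eq_norm_sq, inner_eq_sum]
  simp [rsqP, ev_sum, ev_mul]

lemma integrable_gaussian {b : ℝ} (hb : 0 < b) :
    Integrable (fun x : Evec m => Real.exp (-(b * ‖x‖ ^ 2))) := by
  have := (GaussianFourier.integrable_cexp_neg_mul_sq_norm_add (V := Evec m) (b := b)
    (by simpa using hb) 0 0).re
  refine this.congr (.of_forall fun x => ?_)
  dsimp only
  rw [zero_mul, add_zero, show (-(b : ℂ) * (‖x‖ : ℂ) ^ 2) = ((-(b * ‖x‖ ^ 2) : ℝ) : ℂ) by push_cast; ring,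
    ← Complex.ofReal_exp]
  exact Complex.ofReal_re _

lemma abs_ev_le_exp (P : MvPolynomial (Fin m) ℝ) : ∀ ε : ℝ, 0 < ε →
    ∃ C : ℝ, 0 ≤ C ∧ ∀ x : Evec m, |ev P x| ≤ C * Real.exp (ε * ‖x‖ ^ 2) := by
  induction P using MvPolynomial.induction_on with
  | C c =>
    intro ε hε
    refine ⟨|c|, abs_nonneg _, fun x => ?_⟩
    rw [ev_C]
    exact le_mul_of_one_le_right (abs_nonneg _) (Real.one_le_exp (by positivity))
  | add P Q hP hQ =>
    intro ε hε
    obtain ⟨C, hC, h⟩ := hP ε hε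
    obtain ⟨C', hC', h'⟩ := hQ ε hε
    refine ⟨C + C', by positivity, fun x => ?_⟩
    rw [ev_add, add_mul]
    exact (abs_add_le _ _).trans (add_le_add (h x) (h' x))
  | mul_X P i hP =>
    intro ε hε
    obtain ⟨C, hC, h⟩ := hP (ε / 2) (by positivity)
    refine ⟨C * (2 / ε + 1), by positivity, fun x => ?_⟩
    have h1 : |x i| ≤ (2 / ε + 1) * Real.exp (ε / 2 * ‖x‖ ^ 2) := by
      have h2 : |x i| ≤ ‖x‖ := PiLp.norm_apply_le x i
      have h3 := Real.add_one_le_exp (ε / 2 * ‖x‖ ^ 2)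
      have h4 : ‖x‖ ≤ (2 / ε + 1) * (ε / 2 * ‖x‖ ^ 2 + 1) := by
        have : (2 / ε + 1) * (ε / 2 * ‖x‖ ^ 2 + 1)
            = ‖x‖ ^ 2 + 2 / ε + ε / 2 * ‖x‖ ^ 2 + 1 := by
          field_simp
          ring
        rw [this]
        have : 0 ≤ 2 / ε := by positivity
        have : 0 ≤ ε / 2 * ‖x‖ ^ 2 := by positivity
        nlinarith [sq_nonneg (‖x‖ - 1)]
      exact h2.trans (h4.trans (by gcongr))
    rw [ev_mul, ev_X, abs_mul,
      show ε * ‖x‖ ^ 2 = ε / 2 * ‖x‖ ^ 2 + ε / 2 * ‖x‖ ^ 2 by ring, Real.exp_add]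
    calc |ev P x| * |x i| ≤ (C * Real.exp (ε / 2 * ‖x‖ ^ 2)) *
          ((2 / ε + 1) * Real.exp (ε / 2 * ‖x‖ ^ 2)) := by gcongr; exact h x
      _ = _ := by ring

lemma integrable_ev_mul_gaussian (P : MvPolynomial (Fin m) ℝ) :
    Integrable (fun x : Evec m => ev P x * Real.exp (-(‖x‖ ^ 2 / 2))) := by
  obtain ⟨C, hC, h⟩ := abs_ev_le_exp P (1 / 4) (by norm_num)
  refine ((integrable_gaussian (m := m) (b := 1 / 4) (by norm_num)).const_mul C).mono' ?_
    (.of_forall fun x => ?_)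
  · exact ((continuous_ev P).mul (by fun_prop)).aestronglyMeasurable
  · rw [Real.norm_eq_abs, abs_mul, abs_of_pos (Real.exp_pos _)]
    calc |ev P x| * Real.exp (-(‖x‖ ^ 2 / 2))
        ≤ C * Real.exp (1 / 4 * ‖x‖ ^ 2) * Real.exp (-(‖x‖ ^ 2 / 2)) := by gcongr; exact h x
      _ = _ := by rw [mul_assoc, ← Real.exp_add]; ring_nf

lemma gm_add (P Q : MvPolynomial (Fin m) ℝ) : gm (P + Q) = gm P + gm Q := by
  rw [gm, gm, gm, ← integral_add (integrable_ev_mul_gaussian P) (integrable_ev_mul_gaussian Q)]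
  simp only [ev_add, add_mul]

lemma gm_smul (c : ℝ) (P : MvPolynomial (Fin m) ℝ) : gm (c • P) = c * gm P := by
  rw [gm, gm, ← integral_const_mul]
  simp only [ev_smul, mul_assoc]

lemma gm_sum {ι : Type*} (s : Finset ι) (P : ι → MvPolynomial (Fin m) ℝ) :
    gm (∑ i ∈ s, P i) = ∑ i ∈ s, gm (P i) := by
  simp only [gm]
  rw [← integral_finsetSum _ fun i _ => integrable_ev_mul_gaussian (P i)]
  simp only [ev_sum, Finset.sum_mul]

lemma gm_one_pos : 0 < gm (1 : MvPolynomial (Fin m) ℝ) := by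
  have h := GaussianFourier.integral_rexp_neg_mul_sq_norm (V := Evec m) (b := 1 / 2) (by norm_num)
  have : gm (1 : MvPolynomial (Fin m) ℝ) = ∫ v : Evec m, Real.exp (-(1 / 2) * ‖v‖ ^ 2) := by
    rw [gm]
    refine integral_congr_ae (.of_forall fun x => ?_)
    simp only [ev_one, one_mul]
    ring_nf
  rw [this, h]
  positivity

/-- Gaussian integration by parts. -/
lemma gm_linP_mul (v : Evec m) (P : MvPolynomial (Fin m) ℝ) : gm (linP v * P) = gm (dd v P) := by
  have hg : ∀ x : Evec m, HasFDerivAt (fun x : Evec m => Real.exp (-(‖x‖ ^ 2 / 2)))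
      (Real.exp (-(‖x‖ ^ 2 / 2)) • (-(innerSL ℝ x))) x := by
    intro x
    have h1 := (hasStrictFDerivAt_norm_sq x).hasFDerivAt
    have h2 : HasFDerivAt (fun x : Evec m => -(‖x‖ ^ 2 / 2)) (-(innerSL ℝ x)) x := by
      convert! (h1.const_mul (1 / 2 : ℝ)).neg using 1
      · ext y; simp; ring
      · ext y; simp
    exact h2.exp
  have hg' : ∀ x : Evec m, fderiv ℝ (fun x : Evec m => Real.exp (-(‖x‖ ^ 2 / 2))) x v =
      -(⟪v, x⟫ * Real.exp (-(‖x‖ ^ 2 / 2))) := by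
    intro x
    rw [(hg x).fderiv]
    simp [real_inner_comm, mul_comm]
  have hI : ∀ x, ev P x * fderiv ℝ (fun x : Evec m => Real.exp (-(‖x‖ ^ 2 / 2))) x v =
      -(ev (linP v * P) x * Real.exp (-(‖x‖ ^ 2 / 2))) := by
    intro x
    rw [hg', ev_mul, ev_linP]
    ring
  have key := integral_mul_fderiv_eq_neg_fderiv_mul_of_integrable (μ := volume) (f := ev P)
    (g := fun x : Evec m => Real.exp (-(‖x‖ ^ 2 / 2))) (v := v)
    (by simpa only [fderiv_ev] using integrable_ev_mul_gaussian (dd v P))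
    (by simp only [hI]; exact (integrable_ev_mul_gaussian (linP v * P)).neg)
    (integrable_ev_mul_gaussian P) (fun x _ => differentiable_ev P x)
    (fun x _ => (hg x).differentiableAt)
  simp only [hI, fderiv_ev, integral_neg, neg_inj] at key
  exact key

lemma linP_eb (i : Fin m) : linP (eb i) = (MvPolynomial.X i : MvPolynomial (Fin m) ℝ) :=
  ev_injective fun x => by simp [ev_linP, EuclideanSpace.inner_single_left]

lemma gm_X_mul (i : Fin m) (P : MvPolynomial (Fin m) ℝ) :
    gm (MvPolynomial.X i * P) = gm (dd (eb i) P) := by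
  rw [← linP_eb, gm_linP_mul]

lemma dd_linP (v w : Evec m) : dd v (linP w) = MvPolynomial.C ⟪w, v⟫ := by
  simp [linP, dd_X, inner_eq_sum]

lemma gm_rsqP_pow_succ (j : ℕ) :
    gm (rsqP m ^ (j + 1)) = (m + 2 * j) * gm (rsqP m ^ j) := by
  have hr : ∀ i : Fin m, dd (eb i) (rsqP m) = (2 : ℝ) • MvPolynomial.X i := by
    intro i
    refine ev_injective fun x => ?_
    simp only [rsqP, map_sum, dd_mul, dd_X, ev_sum, ev_add, ev_mul, ev_X, ev_C, ev_smul]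
    rw [Finset.sum_eq_single i]
    · simp; ring
    · intro b _ hb; simp [hb]
    · simp
  have h1 : rsqP m ^ (j + 1) = ∑ i, MvPolynomial.X i * (MvPolynomial.X i * rsqP m ^ j) := by
    rw [pow_succ', rsqP, Finset.sum_mul]
    simp only [mul_assoc]
  have h2 : ∀ i : Fin m, dd (eb i) (MvPolynomial.X i * rsqP m ^ j) =
      rsqP m ^ j + (2 * j : ℝ) • (MvPolynomial.X i * MvPolynomial.X i * rsqP m ^ (j - 1)) := by
    intro i
    rw [dd_mul, Derivation.leibniz_pow, hr, dd_X]
    refine ev_injective fun x => ?_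
    simp only [ev_add, ev_mul, ev_smul, smul_eq_mul, nsmul_eq_mul, ev_X, ev_C, ev_pow]
    simp [ev]
    ring
  have h3 : ∑ i : Fin m, (2 * j : ℝ) •
      (MvPolynomial.X i * MvPolynomial.X i * rsqP m ^ (j - 1)) = (2 * j : ℝ) • rsqP m ^ j := by
    rw [← Finset.smul_sum, ← Finset.sum_mul, ← rsqP]
    rcases j with _ | j
    · simp
    · rw [Nat.add_sub_cancel, ← pow_succ']
  rw [h1, gm_sum]
  simp only [gm_X_mul, h2]
  rw [← gm_sum, Finset.sum_add_distrib, h3, gm_add, gm_smul]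
  rw [gm_sum, Finset.sum_const, Finset.card_univ, Fintype.card_fin, nsmul_eq_mul]
  ring

lemma gm_rsqP_pow (j : ℕ) :
    gm (rsqP m ^ j) = (∏ i ∈ Finset.range j, ((m : ℝ) + 2 * i)) * gm (1 : MvPolynomial (Fin m) ℝ) := by
  induction j with
  | zero => simp
  | succ j ih => rw [gm_rsqP_pow_succ, ih, Finset.prod_range_succ]; ring

lemma gm_harmonic {j : ℕ} (hj : 0 < j) {h : MvPolynomial (Fin m) ℝ} (hh : HarmP j h) :
    gm h = 0 := by
  have h1 := congrArg gm hh.1.sum_X_mul_pderiv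
  simp only [gm_sum, ← dd_eb, gm_X_mul] at h1
  rw [← gm_sum, hh.2, ← Nat.cast_smul_eq_nsmul ℝ, gm_smul] at h1
  have h0 : gm (0 : MvPolynomial (Fin m) ℝ) = 0 := by simp [gm]
  rw [h0] at h1
  rcases mul_eq_zero.1 h1.symm with h2 | h2
  · exact absurd h2 (by positivity)
  · exact h2

lemma gm_linP_pow_mul (ν : Evec m) (i : ℕ) : ∀ {j : ℕ} {h : MvPolynomial (Fin m) ℝ},
    HarmP j h → i ≤ j → gm (linP ν ^ i * h) =
      if i = j then j.factorial * ev h ν * gm (1 : MvPolynomial (Fin m) ℝ) else 0 := by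
  induction i using Nat.strong_induction_on with
  | _ i ih =>
    intro j h hh hij
    rcases i with _ | i
    · rw [pow_zero, one_mul]
      split_ifs with h0
      · subst h0
        have hc := hh.1
        rw [← MvPolynomial.totalDegree_zero_iff_isHomogeneous,
          MvPolynomial.totalDegree_eq_zero_iff_eq_C] at hc
        rw [hc, ev_C, ← mul_one (MvPolynomial.C _), ← MvPolynomial.smul_eq_C_mul, gm_smul]
        simp
      · exact gm_harmonic (by omega) hh
    · rw [pow_succ', mul_assoc, gm_linP_mul, dd_mul, Derivation.leibniz_pow, dd_linP, gm_add,
        ih i (by omega) (hh.dd ν) (by omega)]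
      have h0 : gm (h * i • linP ν ^ (i - 1) • MvPolynomial.C ⟪ν, ν⟫) = 0 := by
        rcases i with _ | i
        · simp [gm]
        · have : h * (i + 1) • linP ν ^ (i + 1 - 1) • MvPolynomial.C ⟪ν, ν⟫ =
              ((i + 1 : ℕ) * ⟪ν, ν⟫) • (linP ν ^ i * h) := by
            rw [← Nat.cast_smul_eq_nsmul ℝ]
            simp only [MvPolynomial.smul_eq_C_mul, Nat.add_sub_cancel, map_mul, smul_eq_mul]
            ring
          rw [this, gm_smul, ih i (by omega) hh (by omega), if_neg (by omega), mul_zero]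
      rw [h0, add_zero]
      by_cases hj : i + 1 = j
      · subst hj
        simp only [Nat.add_sub_cancel, if_true, ev_euler hh.1, Nat.factorial_succ]
        push_cast
        ring
      · rw [if_neg hj, if_neg (by omega)]

end Gaussian

section SphereMeans

variable {m : ℕ}

lemma angularMean_congr {F G : Evec m → ℝ} (h : ∀ ω, ‖ω‖ = 1 → F ω = G ω) :
    angularMean F = angularMean G := by
  rw [angularMean, angularMean]
  congr 1
  exact integral_congr_ae (.of_forall fun ω => h _ (by simp))

lemma angularMean_sum_ev {ι : Type*} (s : Finset ι) (c : ι → ℝ)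
    (Q : ι → MvPolynomial (Fin m) ℝ) :
    angularMean (fun ω => ∑ i ∈ s, c i * ev (Q i) ω) = ∑ i ∈ s, c i * angularMean (ev (Q i)) := by
  simp only [angularMean]
  rw [integral_finsetSum, Finset.sum_div]
  · simp only [integral_const_mul, mul_div_assoc]
  · intro i _
    have : Continuous fun ω : sphere (0 : Evec m) 1 => c i * ev (Q i) ω :=
      continuous_const.mul ((continuous_ev _).comp continuous_subtype_val)
    exact this.integrable_of_hasCompactSupport (HasCompactSupport.of_compactSpace _)

lemma gm_eq_angularMean (hm : 0 < m) {j : ℕ} {Q : MvPolynomial (Fin m) ℝ}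
    (hQ : Q.IsHomogeneous (2 * j)) : gm Q = angularMean (ev Q) * gm (rsqP m ^ j) := by
  have h1 := integral_angular_mul_radial hm (fun y => ev Q y / ‖y‖ ^ (2 * j)) (by
    intro c y hc
    rw [ev_homogeneous hQ, norm_smul, Real.norm_eq_abs, abs_of_pos hc, mul_pow,
      mul_div_mul_left _ _ (by positivity)]) (fun t => t ^ (2 * j) * Real.exp (-(t ^ 2 / 2)))
  rw [angularMean_congr (G := ev Q) (fun ω hω => by simp [hω])] at h1
  rw [gm, gm]
  convert! h1 using 2
  · funext y
    rcases eq_or_ne y 0 with rfl | hy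
    · rcases j with _ | j
      · simp
      · have := ev_homogeneous hQ 0 (0 : Evec m)
        simp at this
        simp [this]
    · have := norm_ne_zero_iff.2 hy
      field_simp
  · refine integral_congr_ae (.of_forall fun y => ?_)
    simp only [ev_pow, ev_rsqP, pow_mul]

lemma isHomogeneous_linP (v : Evec m) : (linP v).IsHomogeneous 1 :=
  MvPolynomial.IsHomogeneous.sum _ _ _ fun _ _ => MvPolynomial.isHomogeneous_C_mul_X _ _

lemma prod_add_two_mul_pos (hm : 0 < m) (j : ℕ) : 0 < ∏ i ∈ Finset.range j, ((m : ℝ) + 2 * i) :=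
  Finset.prod_pos fun i _ => by positivity

lemma angularMean_linP_pow_self (hm : 0 < m) (ν : Evec m) {j : ℕ} {h : MvPolynomial (Fin m) ℝ}
    (hh : HarmP j h) : angularMean (ev (linP ν ^ j * h)) =
      j.factorial * ev h ν / ∏ i ∈ Finset.range j, ((m : ℝ) + 2 * i) := by
  have h1 := gm_eq_angularMean hm (j := j) (Q := linP ν ^ j * h)
    (by simpa [two_mul] using ((isHomogeneous_linP ν).pow j).mul hh.1)
  rw [gm_linP_pow_mul ν j hh le_rfl, if_pos rfl, gm_rsqP_pow, ← mul_assoc] at h1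
  rw [eq_div_iff (prod_add_two_mul_pos hm j).ne']
  exact (mul_right_cancel₀ gm_one_pos.ne' h1).symm

lemma angularMean_linP_pow_of_lt (hm : 0 < m) (ν : Evec m) {j : ℕ} {h : MvPolynomial (Fin m) ℝ}
    (hh : HarmP (j + 2) h) : angularMean (ev (linP ν ^ j * h)) = 0 := by
  have h1 := gm_eq_angularMean hm (j := j + 1) (Q := linP ν ^ j * h)
    (by convert! ((isHomogeneous_linP ν).pow j).mul hh.1 using 1; ring)
  rw [gm_linP_pow_mul ν j hh (by omega), if_neg (by omega), gm_rsqP_pow] at h1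
  rcases mul_eq_zero.1 h1.symm with h2 | h2
  · exact h2
  · exact absurd h2 (mul_pos (prod_add_two_mul_pos hm _) gm_one_pos).ne'

lemma HarmP.iterate_dd {k : ℕ} {P : MvPolynomial (Fin m) ℝ} (hP : HarmP k P) (v : Evec m) (i : ℕ) :
    HarmP (k - i) ((_root_.dd v)^[i] P) := by
  induction i with
  | zero => exact hP
  | succ i ih =>
    rw [Function.iterate_succ_apply', ← Nat.sub_sub]
    exact ih.dd v

lemma ev_iterate_dd_self {k : ℕ} {P : MvPolynomial (Fin m) ℝ} (hP : HarmP k P) (v : Evec m)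
    (i : ℕ) : ev ((dd v)^[i] P) v = k.descFactorial i * ev P v := by
  induction i with
  | zero => simp
  | succ i ih =>
    rw [Function.iterate_succ_apply', ev_euler (hP.iterate_dd v i).1, ih, Nat.descFactorial_succ]
    push_cast
    ring

lemma sum_descFactorial_div_prod (k : ℕ) : ∀ b : ℝ, 2 < b →
    ∑ j ∈ Finset.range (k + 1), (-2) ^ j * (k.descFactorial j : ℝ) /
      ∏ i ∈ Finset.range j, (b + 2 * i) = (b - 2) / (b + 2 * k - 2) := by
  induction k with
  | zero =>
    intro b hb
    have : b - 2 ≠ 0 := by linarith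
    simp [div_self this]
  | succ k ih =>
    intro b hb
    rw [Finset.sum_range_succ']
    have h1 : ∀ j ∈ Finset.range (k + 1), (-2) ^ (j + 1) * ((k + 1).descFactorial (j + 1) : ℝ) /
        ∏ i ∈ Finset.range (j + 1), (b + 2 * i) = (-2 * (k + 1) / b) *
          ((-2) ^ j * (k.descFactorial j : ℝ) / ∏ i ∈ Finset.range j, (b + 2 + 2 * i)) := by
      intro j _
      rw [Finset.prod_range_succ', Nat.succ_descFactorial_succ]
      have : ∏ i ∈ Finset.range j, (b + 2 * ((i + 1 : ℕ) : ℝ)) =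
          ∏ i ∈ Finset.range j, (b + 2 + 2 * i) :=
        Finset.prod_congr rfl fun i _ => by push_cast; ring
      rw [this]
      have h2 : 0 < ∏ i ∈ Finset.range j, (b + 2 + 2 * (i : ℝ)) :=
        Finset.prod_pos fun i _ => by positivity
      push_cast
      field_simp
      ring
    rw [Finset.sum_congr rfl h1, ← Finset.mul_sum, ih (b + 2) (by linarith)]
    have h3 : b + 2 + 2 * k - 2 ≠ 0 := by have : (0 : ℝ) ≤ k := by positivity
                                          linarith
    have h4 : b + 2 * (k + 1) - 2 ≠ 0 := by convert! h3 using 1; ring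
    simp
    field_simp
    ring

lemma reflv_of_norm_eq_one {ω : Evec m} (hω : ‖ω‖ = 1) (ν : Evec m) :
    reflv ω ν = (-2 * ⟪ν, ω⟫) • ω + ν := by
  simp only [reflv, hω, real_inner_comm ω ν]
  module

lemma ev_reflv {k : ℕ} {P : MvPolynomial (Fin m) ℝ} (hP : P.IsHomogeneous k) {ω : Evec m}
    (hω : ‖ω‖ = 1) (ν : Evec m) : ev P (reflv ω ν) = ∑ i ∈ Finset.range (k + 1),
      (-2 * ⟪ν, ω⟫) ^ (k - i) / i.factorial * ev ((dd ν)^[i] P) ω := by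
  have h := ev_add_smul hP ((-2 * ⟪ν, ω⟫) • ω) ν 1
  rw [one_smul, ← reflv_of_norm_eq_one hω] at h
  rw [h]
  refine Finset.sum_congr rfl fun i hmem => ?_
  have hi : ((dd ν)^[i] P).IsHomogeneous (k - i) := by
    clear h hmem
    induction i with
    | zero => exact hP
    | succ i ih =>
      rw [Function.iterate_succ_apply', ← Nat.sub_sub]
      exact isHomogeneous_dd ih ν
  rw [ev_homogeneous hi]
  ring

/-- The mean over the sphere of `p (R_ω ν)` for `p ∈ ℋ_k`. -/
lemma angularMean_reflv (hm : 2 < m) {k : ℕ} {P : MvPolynomial (Fin m) ℝ} (hP : HarmP k P)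
    (ν : Evec m) :
    angularMean (fun ω => ev P (reflv ω ν)) = ((m : ℝ) - 2) / (m + 2 * k - 2) * ev P ν := by
  rw [angularMean_congr (G := fun ω => ∑ i ∈ Finset.range (k + 1),
    ((-2) ^ (k - i) / i.factorial) * ev (linP ν ^ (k - i) * (dd ν)^[i] P) ω)]
  · rw [angularMean_sum_ev]
    simp only [angularMean_linP_pow_self (by omega) ν (hP.iterate_dd ν _),
      ev_iterate_dd_self hP]
    rw [← sum_descFactorial_div_prod k m (by exact_mod_cast hm), Finset.sum_mul,
      ← Finset.sum_range_reflect]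
    refine Finset.sum_congr rfl fun j hj => ?_
    have hj : j ≤ k := by simpa [Nat.lt_succ_iff] using hj
    rw [show k - (k + 1 - 1 - j) = j by omega, show k + 1 - 1 - j = k - j by omega]
    have e1 := Nat.factorial_mul_descFactorial (n := k) (k := k - j) (by omega)
    have e2 := Nat.factorial_mul_descFactorial hj
    rw [Nat.sub_sub_self hj, ← e2] at e1
    have e3 : (j.factorial : ℝ) * k.descFactorial (k - j) =
        (k - j).factorial * k.descFactorial j := by exact_mod_cast e1
    have h2 := (prod_add_two_mul_pos (m := m) (by omega) j).ne'
    have h3 : ((k - j).factorial : ℝ) ≠ 0 := by positivity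
    field_simp
    linear_combination ev P ν * e3
  · intro ω hω
    rw [ev_reflv hP.1 hω]
    refine Finset.sum_congr rfl fun i _ => ?_
    rw [ev_mul, ev_pow, ev_linP, mul_pow]
    ring

lemma angularMean_dd_dd_reflv (hm : 0 < m) {k : ℕ} {P : MvPolynomial (Fin m) ℝ} (hP : HarmP k P)
    (ν : Evec m) : angularMean (fun ω => ev (dd ω (dd ω P)) (reflv ω ν)) = 0 := by
  rcases Nat.lt_or_ge k 2 with hk | hk
  · have : ∀ ω : Evec m, dd ω (dd ω P) = 0 := fun ω =>
      dd_eq_zero_of_isHomogeneous_zero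
        (by simpa [show k - 1 = 0 by omega] using (hP.dd ω).1) ω
    simp [angularMean, this]
  obtain ⟨k, rfl⟩ := Nat.exists_eq_add_of_le' hk
  rw [angularMean_congr (G := fun ω => ∑ i ∈ Finset.range (k + 1),
    ((-2) ^ (k - i) / i.factorial * ((k - i + 2 : ℕ) * ((k - i + 2 : ℕ) - 1))) *
      ev (linP ν ^ (k - i) * (dd ν)^[i] P) ω)]
  · rw [angularMean_sum_ev]
    refine Finset.sum_eq_zero fun i hi => ?_
    have hi : i ≤ k := by simpa [Nat.lt_succ_iff] using hi
    rw [angularMean_linP_pow_of_lt hm ν, mul_zero]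
    simpa [show k + 2 - i = k - i + 2 by omega] using hP.iterate_dd ν i
  · intro ω hω
    rw [ev_reflv (k := k) ((hP.dd ω).dd ω).1 hω]
    refine Finset.sum_congr rfl fun i hi => ?_
    have hi : i ≤ k := by simpa [Nat.lt_succ_iff] using hi
    have hcomm : (dd ν)^[i] (dd ω (dd ω P)) = dd ω (dd ω ((dd ν)^[i] P)) := by
      have : Function.Commute (dd ν) (dd ω) := fun Q => dd_comm ν ω Q
      rw [(this.iterate_left i).eq, (this.iterate_left i).eq]
    have hh := hP.iterate_dd ν i
    rw [show k + 2 - i = k - i + 2 by omega] at hh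
    rw [hcomm, ev_euler_dd hh.1, ev_euler hh.1, ev_mul, ev_pow, ev_linP, mul_pow]
    push_cast
    ring

end SphereMeans

/-- The quadratic map `x ↦ |x|² R_x ν`. -/
def conj {m : ℕ} (ν x : Evec m) : Evec m := ‖x‖ ^ 2 • ν - (2 * ⟪x, ν⟫) • x

/-- The symbol of the bosonic Laplacian: for `f(x,u) = ∑ φ_α(x) p_α(u)` one has
`𝒟_k f = ∑ ∂_i ∂_j φ_α · symb N e_i e_j p_α` with `N = m + 2k - 2`. -/
def symb {m : ℕ} (N : ℝ) (a b : Evec m) (P : MvPolynomial (Fin m) ℝ) :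
    MvPolynomial (Fin m) ℝ :=
  ⟪a, b⟫ • P - (2 / N) • (linP a * dd b P + linP b * dd a P)
    + (4 / (N * (N - 2))) • (rsqP m * dd b (dd a P))

/-- The fundamental solution `|x|^{-N} symb(a,b) P (|x|² R_x ν)`. -/
def fsol {m : ℕ} (N : ℝ) (P : MvPolynomial (Fin m) ℝ) (ν a b x : Evec m) : ℝ :=
  (‖x‖ ^ 2) ^ (-(N / 2)) * ev (symb N a b P) (conj ν x)

/-- The divergence of the fundamental solution in its second index. -/
def fdiv {m : ℕ} (N : ℝ) (P : MvPolynomial (Fin m) ℝ) (ν a x : Evec m) : ℝ :=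
  (‖x‖ ^ 2) ^ (-(N / 2)) * (-((m : ℝ) - 2) * (⟪x, a⟫ / ‖x‖ ^ 2 * ev P (conj ν x))
    + 4 / N * (⟪x, a⟫ * ev (dd ν P) (conj ν x) - ⟪ν, a⟫ * ev (dd x P) (conj ν x)
      + ⟪x, ν⟫ * ev (dd a P) (conj ν x))
    + 8 * ‖ν‖ ^ 2 / (N * (N - 2)) * (‖x‖ ^ 2 * ev (dd x (dd a P)) (conj ν x)))

section FundamentalSolution

variable {m : ℕ}

lemma ev_sub (P Q : MvPolynomial (Fin m) ℝ) (x : Evec m) : ev (P - Q) x = ev P x - ev Q x := by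
  simp [ev]

lemma ev_symb (N : ℝ) (a b : Evec m) (P : MvPolynomial (Fin m) ℝ) (u : Evec m) :
    ev (symb N a b P) u = ⟪a, b⟫ * ev P u - 2 / N * (⟪a, u⟫ * ev (dd b P) u + ⟪b, u⟫ * ev (dd a P) u)
      + 4 / (N * (N - 2)) * (‖u‖ ^ 2 * ev (dd b (dd a P)) u) := by
  simp only [symb, ev_add, ev_sub, ev_smul, ev_mul, ev_linP, ev_rsqP]

lemma dd_rsqP (v : Evec m) : dd v (rsqP m) = (2 : ℝ) • linP v := by
  refine ev_injective fun x => ?_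
  simp only [rsqP, map_sum, dd_mul, dd_X, ev_sum, ev_add, ev_mul, ev_X, ev_C, ev_smul, linP,
    Finset.mul_sum]
  exact Finset.sum_congr rfl fun i _ => by ring

lemma ev_dd_symb (N : ℝ) (a b v : Evec m) (P : MvPolynomial (Fin m) ℝ) (u : Evec m) :
    ev (dd v (symb N a b P)) u = ⟪a, b⟫ * ev (dd v P) u
      - 2 / N * (⟪a, v⟫ * ev (dd b P) u + ⟪b, v⟫ * ev (dd a P) u
        + ⟪a, u⟫ * ev (dd v (dd b P)) u + ⟪b, u⟫ * ev (dd v (dd a P)) u)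
      + 4 / (N * (N - 2)) * (2 * ⟪v, u⟫ * ev (dd b (dd a P)) u
        + ‖u‖ ^ 2 * ev (dd v (dd b (dd a P))) u) := by
  simp only [symb, map_add, map_sub, Derivation.map_smul, dd_mul, dd_linP, dd_rsqP,
    ev_add, ev_sub, ev_smul, ev_mul, ev_linP, ev_rsqP, ev_C]
  ring

lemma inner_eb (i : Fin m) (v : Evec m) : ⟪eb i, v⟫ = v i := by
  simp [EuclideanSpace.inner_single_left]

lemma sum_eb_inner (v w : Evec m) : ∑ i, v i * ⟪eb i, w⟫ = ⟪v, w⟫ := by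
  simp [inner_eq_sum]

lemma sum_mul_ev_symb (N : ℝ) (a v : Evec m) (P : MvPolynomial (Fin m) ℝ) (u : Evec m) :
    ∑ j, v j * ev (symb N a (eb j) P) u = ev (symb N a v P) u := by
  have h1 : ∀ j, v j * ev (symb N a (eb j) P) u =
      ev P u * (v j * ⟪eb j, a⟫) - 2 / N * (⟪a, u⟫ * (v j * ev (dd (eb j) P) u)
        + (v j * ⟪eb j, u⟫) * ev (dd a P) u)
      + 4 / (N * (N - 2)) * (‖u‖ ^ 2 * (v j * ev (dd (eb j) (dd a P)) u)) := by
    intro j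
    rw [ev_symb, real_inner_comm]
    ring
  simp only [h1, Finset.sum_add_distrib, Finset.sum_sub_distrib, ← Finset.mul_sum,
    ← Finset.sum_mul, sum_eb_inner, ← ev_dd_eq_sum]
  rw [ev_symb, real_inner_comm]
  ring

lemma sum_smul_symb (N : ℝ) (a v : Evec m) (P : MvPolynomial (Fin m) ℝ) :
    ∑ j, v j • symb N a (eb j) P = symb N a v P :=
  ev_injective fun u => by rw [← sum_mul_ev_symb, ev_sum]; simp only [ev_smul]

lemma sum_mul_ev_dd_symb (N : ℝ) (a v w : Evec m) (P : MvPolynomial (Fin m) ℝ) (u : Evec m) :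
    ∑ j, v j * ev (dd w (symb N a (eb j) P)) u = ev (dd w (symb N a v P)) u := by
  rw [← sum_smul_symb N a v, map_sum, ev_sum]
  simp [ev_smul]

lemma sum_ev_dd_dd_eb {k : ℕ} {P : MvPolynomial (Fin m) ℝ} (hP : HarmP k P) (u : Evec m) :
    ∑ i, ev (dd (eb i) (dd (eb i) P)) u = 0 := by
  rw [← ev_sum, hP.2, ev_zero]

/-- The divergence of `symb` in its second index is a multiple of the gradient. -/
lemma sum_ev_dd_eb_symb (N : ℝ) (a : Evec m) {k : ℕ} {P : MvPolynomial (Fin m) ℝ}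
    (hP : HarmP k P) (u : Evec m) :
    ∑ j, ev (dd (eb j) (symb N a (eb j) P)) u =
      (1 - 2 / N * (m + k) + 8 * (k - 1) / (N * (N - 2))) * ev (dd a P) u := by
  have h1 : ∀ j, ev (dd (eb j) (symb N a (eb j) P)) u =
      a j * ev (dd (eb j) P) u
      - 2 / N * (a j * ev (dd (eb j) P) u + 1 * ev (dd a P) u
        + ⟪a, u⟫ * ev (dd (eb j) (dd (eb j) P)) u + u j * ev (dd (eb j) (dd a P)) u)
      + 4 / (N * (N - 2)) * (2 * (u j * ev (dd (eb j) (dd a P)) u)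
        + ‖u‖ ^ 2 * ev (dd (eb j) (dd (eb j) (dd a P))) u) := by
    intro j
    have : ⟪(eb j : Evec m), eb j⟫ = 1 := by simp
    rw [ev_dd_symb, real_inner_comm (eb j) a, inner_eb j a, inner_eb j u, this]
    ring
  simp only [h1, Finset.sum_add_distrib, Finset.sum_sub_distrib, ← Finset.mul_sum,
    ← ev_dd_eq_sum, sum_ev_dd_dd_eb hP, sum_ev_dd_dd_eb (hP.dd a),
    ev_euler_dd hP.1]
  simp
  ring

lemma hasFDerivAt_conj (ν x : Evec m) : HasFDerivAt (conj ν)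
    ((2 • innerSL ℝ x).smulRight ν - ((2 * ⟪x, ν⟫) • ContinuousLinearMap.id ℝ (Evec m)
      + (2 • innerSL ℝ ν).smulRight x)) x := by
  have h1 := (hasStrictFDerivAt_norm_sq x).hasFDerivAt.smul_const ν
  have h2 : HasFDerivAt (fun x : Evec m => 2 * ⟪x, ν⟫) (2 • innerSL ℝ ν) x := by
    have := ((innerSL ℝ ν).hasFDerivAt (x := x)).const_mul (2 : ℝ)
    convert! this using 1
    · funext y; simp [real_inner_comm]
    · ext y; simp [two_mul]
  exact h1.sub (h2.smul (hasFDerivAt_id x))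

lemma hasFDerivAt_ev_conj (Q : MvPolynomial (Fin m) ℝ) (ν x : Evec m) :
    DifferentiableAt ℝ (fun x => ev Q (conj ν x)) x :=
  (differentiable_ev Q _).comp x (hasFDerivAt_conj ν x).differentiableAt

lemma fderiv_ev_conj (Q : MvPolynomial (Fin m) ℝ) (ν x v : Evec m) :
    fderiv ℝ (fun x => ev Q (conj ν x)) x v = 2 * ⟪x, v⟫ * ev (dd ν Q) (conj ν x)
      - 2 * ⟪ν, v⟫ * ev (dd x Q) (conj ν x) - 2 * ⟪x, ν⟫ * ev (dd v Q) (conj ν x) := by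
  have h := ((differentiable_ev Q (conj ν x)).hasFDerivAt.comp x (hasFDerivAt_conj ν x)).fderiv
  simp only [Function.comp_def] at h
  rw [h]
  simp only [ContinuousLinearMap.comp_apply, fderiv_ev]
  simp [ev_dd_sub, ev_dd_add, ev_dd_smul]
  ring

lemma hasFDerivAt_norm_sq_rpow (s : ℝ) {x : Evec m} (hx : x ≠ 0) :
    HasFDerivAt (fun x : Evec m => (‖x‖ ^ 2) ^ s)
      ((2 * s * (‖x‖ ^ 2) ^ s / ‖x‖ ^ 2) • innerSL ℝ x) x := by
  have hx' : ‖x‖ ^ 2 ≠ 0 := by simpa using hx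
  have h := (hasStrictFDerivAt_norm_sq x).hasFDerivAt.rpow_const (p := s) (Or.inl hx')
  convert! h using 1
  ext y
  rw [Real.rpow_sub_one hx']
  simp
  ring

lemma fderiv_norm_sq_rpow (s : ℝ) {x : Evec m} (hx : x ≠ 0) (v : Evec m) :
    fderiv ℝ (fun x : Evec m => (‖x‖ ^ 2) ^ s) x v =
      2 * s * (‖x‖ ^ 2) ^ s / ‖x‖ ^ 2 * ⟪x, v⟫ := by
  rw [(hasFDerivAt_norm_sq_rpow s hx).fderiv]
  simp

lemma euler_conj {k : ℕ} {P : MvPolynomial (Fin m) ℝ} (hP : P.IsHomogeneous k) (ν x : Evec m) :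
    ‖x‖ ^ 2 * ev (dd ν P) (conj ν x) - 2 * ⟪x, ν⟫ * ev (dd x P) (conj ν x) =
      k * ev P (conj ν x) := by
  rw [← ev_euler hP, conj, ev_dd_sub, ev_dd_smul, ev_dd_smul]

lemma euler_conj_dd {k : ℕ} {P : MvPolynomial (Fin m) ℝ} (hP : P.IsHomogeneous k) (ν x v : Evec m) :
    ‖x‖ ^ 2 * ev (dd ν (dd v P)) (conj ν x) - 2 * ⟪x, ν⟫ * ev (dd x (dd v P)) (conj ν x) =
      ((k : ℝ) - 1) * ev (dd v P) (conj ν x) := by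
  rw [← ev_euler_dd hP, conj, ev_dd_sub, ev_dd_smul, ev_dd_smul]

lemma norm_sq_conj (ν x : Evec m) : ‖conj ν x‖ ^ 2 = (‖x‖ ^ 2) ^ 2 * ‖ν‖ ^ 2 := by
  rw [conj, norm_sub_sq_real]
  simp only [norm_smul, mul_pow, inner_smul_left, inner_smul_right, real_inner_comm x ν,
    Real.norm_eq_abs, sq_abs]
  simp
  ring

/-- The fundamental solution, differentiated once and traced. -/
lemma sum_fderiv_fsol {k : ℕ} {N : ℝ} (hN : N = m + 2 * k - 2) (hN2 : 2 < N)
    {P : MvPolynomial (Fin m) ℝ} (hP : HarmP k P) (ν a : Evec m) {x : Evec m} (hx : x ≠ 0) :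
    ∑ j, fderiv ℝ (fsol N P ν a (eb j)) x (eb j) = fdiv N P ν a x := by
  have hx' : ‖x‖ ^ 2 ≠ 0 := by simpa using hx
  have h1 : ∀ j, fderiv ℝ (fsol N P ν a (eb j)) x (eb j) =
      (‖x‖ ^ 2) ^ (-(N / 2)) * (2 * (x j * ev (dd ν (symb N a (eb j) P)) (conj ν x))
      - 2 * (ν j * ev (dd x (symb N a (eb j) P)) (conj ν x))
      - 2 * ⟪x, ν⟫ * ev (dd (eb j) (symb N a (eb j) P)) (conj ν x))
      + -N * (‖x‖ ^ 2) ^ (-(N / 2)) / ‖x‖ ^ 2 * (x j * ev (symb N a (eb j) P) (conj ν x)) := by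
    intro j
    have : fderiv ℝ (fsol N P ν a (eb j)) x = _ :=
      fderiv_fun_mul (hasFDerivAt_norm_sq_rpow (-(N / 2)) hx).differentiableAt
        (hasFDerivAt_ev_conj (symb N a (eb j) P) ν x)
    rw [this]
    simp only [add_apply, FunLike.coe_smul, Pi.smul_apply, smul_eq_mul, fderiv_ev_conj,
      fderiv_norm_sq_rpow _ hx]
    rw [real_inner_comm (eb j) x, real_inner_comm (eb j) ν]
    rw [inner_eb, inner_eb]
    ring
  simp only [h1, Finset.sum_add_distrib, Finset.sum_sub_distrib, ← Finset.mul_sum,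
    sum_mul_ev_dd_symb, sum_mul_ev_symb, sum_ev_dd_eb_symb N a hP]
  rw [ev_symb, ev_dd_symb, ev_dd_symb, fdiv, norm_sq_conj]
  have e1 := euler_conj hP.1 ν x
  have e2 := euler_conj_dd hP.1 ν x a
  have i1 : ⟪x, conj ν x⟫ = -(‖x‖ ^ 2 * ⟪x, ν⟫) := by
    simp only [conj, inner_sub_right, inner_smul_right, real_inner_self_eq_norm_sq]; ring
  have i2 : ⟪ν, conj ν x⟫ = ‖x‖ ^ 2 * ‖ν‖ ^ 2 - 2 * ⟪x, ν⟫ ^ 2 := by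
    simp only [conj, inner_sub_right, inner_smul_right, real_inner_self_eq_norm_sq,
      real_inner_comm x ν]; ring
  have i3 : ⟪a, conj ν x⟫ = ‖x‖ ^ 2 * ⟪ν, a⟫ - 2 * ⟪x, ν⟫ * ⟪x, a⟫ := by
    simp only [conj, inner_sub_right, inner_smul_right]
    rw [real_inner_comm a ν, real_inner_comm a x]
  rw [i1, i2, i3, real_inner_comm ν x, real_inner_comm x a, real_inner_comm ν a,
    dd_comm x ν P, dd_comm ν x, dd_comm x ν (dd a P)]
  have hc : ⟪ν, x⟫ = ⟪x, ν⟫ := real_inner_comm _ _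
  simp only [hc]
  have hN0 : N ≠ 0 := by linarith
  have hN20 : N - 2 ≠ 0 := by linarith
  generalize (‖x‖ ^ 2) ^ (-(N / 2)) = G
  have hm : (m : ℝ) = N + 2 - 2 * k := by rw [hN]; ring
  rw [hm]
  linear_combination (norm := (field_simp; ring)) 2 * G * ⟪x, a⟫ / ‖x‖ ^ 2 * e1
    + G * ⟪x, ν⟫ * (4 / N + 16 / (N * (N - 2))) * e2

end FundamentalSolution

section DivergenceFree

variable {m : ℕ}

lemma hasFDerivAt_ev_dd_self_conj (Q : MvPolynomial (Fin m) ℝ) (ν x : Evec m) :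
    DifferentiableAt ℝ (fun x => ev (dd x Q) (conj ν x)) x ∧
    ∀ v, fderiv ℝ (fun x => ev (dd x Q) (conj ν x)) x v = ev (dd v Q) (conj ν x)
      + fderiv ℝ (fun y => ev (dd x Q) (conj ν y)) x v := by
  have hp : ∀ j, HasFDerivAt (fun x : Evec m => x j) (EuclideanSpace.proj (𝕜 := ℝ) j) x :=
    fun j => (EuclideanSpace.proj (𝕜 := ℝ) j).hasFDerivAt
  have hq : ∀ j, HasFDerivAt (fun x => ev (dd (eb j) Q) (conj ν x)) _ x :=
    fun j => (hasFDerivAt_ev_conj (dd (eb j) Q) ν x).hasFDerivAt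
  have h1 := HasFDerivAt.fun_sum (u := Finset.univ) fun j _ => (hp j).mul (hq j)
  have h2 := HasFDerivAt.fun_sum (u := Finset.univ) fun j _ => (hq j).const_mul (x j)
  simp only [Pi.mul_apply, ← ev_dd_eq_sum] at h1 h2
  refine ⟨h1.differentiableAt, fun v => ?_⟩
  rw [h1.fderiv, h2.fderiv]
  simp [Finset.sum_add_distrib, ev_dd_eq_sum v, add_comm, mul_comm]


/-- The divergence of `fdiv`, with the homogeneous factor cleared. -/
def fdivNum (N : ℝ) (P : MvPolynomial (Fin m) ℝ) (ν a x : Evec m) : ℝ :=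
  -((m : ℝ) - 2) * (⟪x, a⟫ * ev P (conj ν x))
    + 4 / N * (‖x‖ ^ 2 * (⟪x, a⟫ * ev (dd ν P) (conj ν x) - ⟪ν, a⟫ * ev (dd x P) (conj ν x)
      + ⟪x, ν⟫ * ev (dd a P) (conj ν x)))
    + 8 * ‖ν‖ ^ 2 / (N * (N - 2)) * (‖x‖ ^ 2 * (‖x‖ ^ 2 * ev (dd x (dd a P)) (conj ν x)))

lemma fdiv_eq (N : ℝ) (P : MvPolynomial (Fin m) ℝ) (ν a : Evec m) {x : Evec m} (hx : x ≠ 0) :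
    fdiv N P ν a x = (‖x‖ ^ 2) ^ (-(N / 2) - 1) * fdivNum N P ν a x := by
  have hx' : ‖x‖ ^ 2 ≠ 0 := by simpa using hx
  rw [Real.rpow_sub_one hx', fdiv, fdivNum]
  field_simp

lemma hasFDerivAt_inner_const (a x : Evec m) :
    HasFDerivAt (fun x : Evec m => ⟪x, a⟫) (innerSL ℝ a) x := by
  convert! (innerSL ℝ a).hasFDerivAt (x := x) using 1
  funext y
  simp [real_inner_comm]

lemma hasFDerivAt_fdivNum (N : ℝ) (P : MvPolynomial (Fin m) ℝ) (ν a x : Evec m) :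
    DifferentiableAt ℝ (fdivNum N P ν a) x ∧ ∀ v, fderiv ℝ (fdivNum N P ν a) x v =
  -((m : ℝ) - 2) * (⟪a, v⟫ * ev P (conj ν x)
      + ⟪x, a⟫ * fderiv ℝ (fun x => ev P (conj ν x)) x v)
    + 4 / N * (2 * ⟪x, v⟫ * (⟪x, a⟫ * ev (dd ν P) (conj ν x) - ⟪ν, a⟫ * ev (dd x P) (conj ν x)
      + ⟪x, ν⟫ * ev (dd a P) (conj ν x))
      + ‖x‖ ^ 2 * (⟪a, v⟫ * ev (dd ν P) (conj ν x)
        + ⟪x, a⟫ * fderiv ℝ (fun x => ev (dd ν P) (conj ν x)) x v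
        - ⟪ν, a⟫ * (ev (dd v P) (conj ν x) + fderiv ℝ (fun y => ev (dd x P) (conj ν y)) x v)
        + ⟪ν, v⟫ * ev (dd a P) (conj ν x)
        + ⟪x, ν⟫ * fderiv ℝ (fun x => ev (dd a P) (conj ν x)) x v))
    + 8 * ‖ν‖ ^ 2 / (N * (N - 2)) * (4 * ‖x‖ ^ 2 * ⟪x, v⟫ * ev (dd x (dd a P)) (conj ν x)
      + ‖x‖ ^ 2 * (‖x‖ ^ 2 * (ev (dd v (dd a P)) (conj ν x)
        + fderiv ℝ (fun y => ev (dd x (dd a P)) (conj ν y)) x v))) := by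
  have hr := (hasStrictFDerivAt_norm_sq x).hasFDerivAt
  have hp := fun Q => (hasFDerivAt_ev_conj Q ν x).hasFDerivAt
  have hd := fun Q => (hasFDerivAt_ev_dd_self_conj Q ν x).1.hasFDerivAt
  have hi := fun b => hasFDerivAt_inner_const b x
  have h : HasFDerivAt (fdivNum N P ν a) _ x :=
    ((((hi a).fun_mul (hp P)).const_mul (-((m : ℝ) - 2))).fun_add
    ((hr.fun_mul ((((hi a).fun_mul (hp (dd ν P))).fun_sub ((hd P).const_mul ⟪ν, a⟫)).fun_add
      ((hi ν).fun_mul (hp (dd a P))))).const_mul (4 / N))).fun_add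
    ((hr.fun_mul (hr.fun_mul (hd (dd a P)))).const_mul (8 * ‖ν‖ ^ 2 / (N * (N - 2))))
  refine ⟨h.differentiableAt, fun v => ?_⟩
  rw [h.fderiv]
  simp only [add_apply, sub_apply, FunLike.coe_smul, Pi.smul_apply,
    smul_eq_mul, innerSL_apply_apply, (hasFDerivAt_ev_dd_self_conj _ ν x).2, two_smul]
  ring

lemma sum_fderiv_fdiv {k : ℕ} {N : ℝ} (hN : N = m + 2 * k - 2) (hN2 : 2 < N)
    {P : MvPolynomial (Fin m) ℝ} (hP : HarmP k P) (ν : Evec m) {x : Evec m} (hx : x ≠ 0) :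
    ∑ j, fderiv ℝ (fdiv N P ν (eb j)) x (eb j) = 0 := by
  have hx' : ‖x‖ ^ 2 ≠ 0 := by simpa using hx
  have h1 : ∀ j, fderiv ℝ (fdiv N P ν (eb j)) x (eb j) =
      (‖x‖ ^ 2) ^ (-(N / 2) - 1) * fderiv ℝ (fdivNum N P ν (eb j)) x (eb j)
      + -(N + 2) * (‖x‖ ^ 2) ^ (-(N / 2) - 1) / ‖x‖ ^ 2 * (x j * fdivNum N P ν (eb j) x) := by
    intro j
    have he : fdiv N P ν (eb j) =ᶠ[𝓝 x]
        fun x => (‖x‖ ^ 2) ^ (-(N / 2) - 1) * fdivNum N P ν (eb j) x := by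
      filter_upwards [isOpen_ne.mem_nhds hx] with y hy using fdiv_eq N P ν (eb j) hy
    rw [he.fderiv_eq, fderiv_fun_mul (hasFDerivAt_norm_sq_rpow _ hx).differentiableAt
        (hasFDerivAt_fdivNum N P ν (eb j) x).1]
    simp only [add_apply, FunLike.coe_smul, Pi.smul_apply, smul_eq_mul,
      fderiv_norm_sq_rpow _ hx]
    rw [real_inner_comm (eb j) x, inner_eb]
    ring
  have hxx : ∑ j, x j * x j = ‖x‖ ^ 2 := by rw [← inner_eq_sum, real_inner_self_eq_norm_sq]
  have hvv : ∑ j, ν j * ν j = ‖ν‖ ^ 2 := by rw [← inner_eq_sum, real_inner_self_eq_norm_sq]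
  have hxv : ∑ j, x j * ν j = ⟪x, ν⟫ := by rw [← inner_eq_sum]
  have hone : ∀ j, (eb j : Evec m) j = 1 := fun j => by simp
  have hl : ∀ (w : Evec m) j, ⟪w, eb j⟫ = w j := fun w j => by rw [real_inner_comm, inner_eb]
  set u := conj ν x with hu
  have h2 : ∀ j, x j * fdivNum N P ν (eb j) x =
      -((m : ℝ) - 2) * (x j * x j) * ev P u
      + 4 / N * (‖x‖ ^ 2 * ((x j * x j) * ev (dd ν P) u - (x j * ν j) * ev (dd x P) u
        + ⟪x, ν⟫ * (x j * ev (dd (eb j) P) u)))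
      + 8 * ‖ν‖ ^ 2 / (N * (N - 2)) * (‖x‖ ^ 2 * (‖x‖ ^ 2 *
        (x j * ev (dd (eb j) (dd x P)) u))) := by
    intro j
    rw [fdivNum, hl, hl, dd_comm x (eb j)]
    ring
  have h3 : ∀ j, fderiv ℝ (fdivNum N P ν (eb j)) x (eb j) =
      -((m : ℝ) - 2) * (ev P u + 2 * (x j * x j) * ev (dd ν P) u
        - 2 * (x j * ν j) * ev (dd x P) u - 2 * ⟪x, ν⟫ * (x j * ev (dd (eb j) P) u))
      + 4 / N * (2 * ((x j * x j) * ev (dd ν P) u - (x j * ν j) * ev (dd x P) u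
        + ⟪x, ν⟫ * (x j * ev (dd (eb j) P) u))
        + ‖x‖ ^ 2 * (ev (dd ν P) u + 2 * (x j * x j) * ev (dd ν (dd ν P)) u
          - 4 * (x j * ν j) * ev (dd ν (dd x P)) u
          + 2 * (ν j * ν j) * ev (dd x (dd x P)) u
          - 2 * ⟪x, ν⟫ * ⟪x, ν⟫ * ev (dd (eb j) (dd (eb j) P)) u))
      + 8 * ‖ν‖ ^ 2 / (N * (N - 2)) * (4 * ‖x‖ ^ 2 * (x j * ev (dd (eb j) (dd x P)) u)
        + ‖x‖ ^ 2 * (‖x‖ ^ 2 * (ev (dd (eb j) (dd (eb j) P)) u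
          + 2 * (x j * ev (dd (eb j) (dd ν (dd x P))) u)
          - 2 * (ν j * ev (dd (eb j) (dd x (dd x P))) u)
          - 2 * ⟪x, ν⟫ * ev (dd (eb j) (dd (eb j) (dd x P))) u))) := by
    intro j
    rw [(hasFDerivAt_fdivNum N P ν (eb j) x).2]
    simp only [fderiv_ev_conj, hl, ← hu]
    rw [dd_comm x ν P, dd_comm x (eb j) P, dd_comm x (eb j) (dd x P), dd_comm ν (eb j) (dd x P),
      dd_comm ν (eb j) P, hone]
    ring
  simp only [h1, Finset.sum_add_distrib, ← Finset.mul_sum]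
  simp only [h2, h3, Finset.sum_add_distrib, Finset.sum_sub_distrib, ← Finset.mul_sum,
    ← Finset.sum_mul, hxx, hvv, hxv, ← ev_dd_eq_sum, sum_ev_dd_dd_eb hP,
    sum_ev_dd_dd_eb (hP.dd x), Finset.sum_const, Finset.card_univ, Fintype.card_fin, nsmul_eq_mul]
  have e1 := euler_conj hP.1 ν x
  have e2 := euler_conj_dd hP.1 ν x ν
  rw [← hu] at e1 e2
  rw [dd_comm x ν P] at e2
  rw [dd_comm x ν (dd x P)]
  have hN0 : N ≠ 0 := by linarith
  have hN20 : N - 2 ≠ 0 := by linarith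
  generalize (‖x‖ ^ 2) ^ (-(N / 2) - 1) = G
  have hm : (m : ℝ) = N + 2 - 2 * k := by rw [hN]; ring
  rw [hm]
  linear_combination (norm := (field_simp; ring)) -2 * ((N + 2 - 2 * k) - 2) * G * e1
    + 8 / N * ‖x‖ ^ 2 * G * e2

end DivergenceFree

/-- A smooth radial function vanishing on the unit ball and equal to `1` for `|x|² ≥ 2`. -/
def cutoff {m : ℕ} (x : Evec m) : ℝ := Real.smoothTransition (‖x‖ ^ 2 - 1)

section Green

variable {m : ℕ}

lemma contDiff_cutoff : ContDiff ℝ 2 (cutoff : Evec m → ℝ) :=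
  (Real.smoothTransition.contDiff (n := 2)).comp ((contDiff_norm_sq ℝ).sub contDiff_const)

lemma cutoff_eq_zero {x : Evec m} (hx : ‖x‖ ≤ 1) : cutoff x = 0 :=
  Real.smoothTransition.zero_of_nonpos (by nlinarith [norm_nonneg x])

lemma cutoff_eq_one {x : Evec m} (hx : 2 ≤ ‖x‖) : cutoff x = 1 :=
  Real.smoothTransition.one_of_one_le (by nlinarith [norm_nonneg x])

lemma pdv_cutoff (i : Fin m) (x : Evec m) :
    pdv i cutoff x = 2 * deriv Real.smoothTransition (‖x‖ ^ 2 - 1) * x i := by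
  have h1 : HasDerivAt Real.smoothTransition _ (‖x‖ ^ 2 - 1) :=
    ((Real.smoothTransition.contDiff (n := 1)).differentiable one_ne_zero _).hasDerivAt
  have h2 := h1.comp_hasFDerivAt x ((hasStrictFDerivAt_norm_sq x).hasFDerivAt.sub_const 1)
  rw [pdv, show (cutoff : Evec m → ℝ) = Real.smoothTransition ∘ fun x => ‖x‖ ^ 2 - 1 from rfl,
    h2.fderiv]
  simp only [smul_apply, add_apply, innerSL_apply_apply, two_smul, smul_eq_mul]
  rw [real_inner_comm, inner_eb]
  ring

lemma contDiff_cutoff_mul {n : WithTop ℕ∞} (hn : n ≤ 2) {g : Evec m → ℝ}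
    (hg : ContDiffOn ℝ n g {0}ᶜ) : ContDiff ℝ n (fun x => cutoff x * g x) := by
  refine contDiff_iff_contDiffAt.2 fun x => ?_
  by_cases hx : x = 0
  · refine (contDiffAt_const (c := (0 : ℝ))).congr_of_eventuallyEq ?_
    filter_upwards [ball_mem_nhds x one_pos] with y hy
    rw [cutoff_eq_zero (by simpa [hx] using (mem_ball.1 hy).le), zero_mul]
  · exact (contDiff_cutoff.of_le hn).contDiffAt.mul
      (hg.contDiffAt (isOpen_compl_singleton.mem_nhds hx))

lemma contDiff_pdv {n n' : WithTop ℕ∞} (hn : n' + 1 ≤ n) (i : Fin m) {g : Evec m → ℝ}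
    (hg : ContDiff ℝ n g) : ContDiff ℝ n' (pdv i g) :=
  (hg.fderiv_right hn).clm_apply contDiff_const

lemma contDiffOn_pdv {n n' : WithTop ℕ∞} (hn : n' + 1 ≤ n) (i : Fin m) {g : Evec m → ℝ}
    (hg : ContDiffOn ℝ n g {0}ᶜ) : ContDiffOn ℝ n' (pdv i g) {0}ᶜ :=
  (hg.fderiv_of_isOpen isOpen_compl_singleton hn).clm_apply contDiffOn_const

lemma hasCompactSupport_pdv (i : Fin m) {g : Evec m → ℝ} (hg : HasCompactSupport g) :
    HasCompactSupport (pdv i g) :=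
  hg.fderiv_apply ℝ _

lemma integral_pdv_mul (i : Fin m) {φ g : Evec m → ℝ} (hφ : ContDiff ℝ 1 φ)
    (hc : HasCompactSupport φ) (hg : ContDiff ℝ 1 g) :
    ∫ x, pdv i φ x * g x = -∫ x, φ x * pdv i g x := by
  have h := integral_mul_fderiv_eq_neg_fderiv_mul_of_integrable (μ := volume) (f := φ) (g := g)
    (v := (eb i : Evec m)) ?_ ?_ ?_ (fun x _ => hφ.differentiable one_ne_zero x)
    (fun x _ => hg.differentiable one_ne_zero x)
  · change ∫ x, φ x * pdv i g x = _ at h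
    rw [h, neg_neg]
    rfl
  · exact ((contDiff_pdv (n' := 0) (by simp) i hφ).continuous.mul
      hg.continuous).integrable_of_hasCompactSupport (hasCompactSupport_pdv i hc).mul_right
  · exact (hφ.continuous.mul (contDiff_pdv (n' := 0) (by simp) i
      hg).continuous).integrable_of_hasCompactSupport hc.mul_right
  · exact (hφ.continuous.mul hg.continuous).integrable_of_hasCompactSupport hc.mul_right

lemma cutoff_eventuallyEq_zero : (cutoff : Evec m → ℝ) =ᶠ[𝓝 0] fun _ => 0 := by
  filter_upwards [ball_mem_nhds (0 : Evec m) one_pos] with y hy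
  exact cutoff_eq_zero (by simpa using (mem_ball.1 hy).le)

lemma pdv_cutoff_eventuallyEq_zero (i : Fin m) : pdv i cutoff =ᶠ[𝓝 0] fun _ => 0 := by
  filter_upwards [cutoff_eventuallyEq_zero.fderiv (𝕜 := ℝ)] with y hy
  simp [pdv, hy]

lemma continuous_pdv_cutoff_mul (i : Fin m) {g : Evec m → ℝ} (hg : ContinuousOn g {0}ᶜ) :
    Continuous fun x => pdv i cutoff x * g x := by
  refine continuous_iff_continuousAt.2 fun x => ?_
  by_cases hx : x = 0
  · refine (continuousAt_const (y := (0 : ℝ))).congr ?_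
    rw [hx]
    filter_upwards [pdv_cutoff_eventuallyEq_zero i] with y hy
    simp [hy]
  · exact (contDiff_pdv (n' := 1) (by norm_num) i contDiff_cutoff).continuous.continuousAt.mul
      (hg.continuousAt (isOpen_compl_singleton.mem_nhds hx))

lemma pdv_cutoff_mul (i : Fin m) {g : Evec m → ℝ} (hg : ContDiffOn ℝ 1 g {0}ᶜ) (x : Evec m) :
    pdv i (fun x => cutoff x * g x) x = pdv i cutoff x * g x + cutoff x * pdv i g x := by
  by_cases hx : x = 0
  · have : (fun x => cutoff x * g x) =ᶠ[𝓝 0] fun _ => 0 := by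
      filter_upwards [cutoff_eventuallyEq_zero] with y hy
      simp [hy]
    rw [hx, (pdv_cutoff_eventuallyEq_zero i).eq_of_nhds, cutoff_eventuallyEq_zero.eq_of_nhds, pdv,
      this.fderiv_eq]
    simp
  · have := fderiv_fun_mul (contDiff_cutoff.differentiable two_ne_zero x)
      ((hg.contDiffAt (isOpen_compl_singleton.mem_nhds hx)).differentiableAt one_ne_zero)
    simp only [pdv, this, add_apply, FunLike.coe_smul, Pi.smul_apply, smul_eq_mul]
    ring

lemma hasCompactSupport_pdv_cutoff_mul (i : Fin m) (g : Evec m → ℝ) :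
    HasCompactSupport fun x => pdv i cutoff x * g x := by
  refine HasCompactSupport.intro (isCompact_closedBall (0 : Evec m) 2) fun x hx => ?_
  have hx : 2 < ‖x‖ := by simpa using hx
  have : (cutoff : Evec m → ℝ) =ᶠ[𝓝 x] fun _ => 1 := by
    filter_upwards [(isOpen_lt continuous_const continuous_norm).mem_nhds hx] with y hy
    exact cutoff_eq_one (le_of_lt hy)
  simp [pdv, this.fderiv_eq]

/-- Green's formula for a twice differentiated test function, cut off near the origin. -/
lemma integral_cutoff_green {S : Fin m → Fin m → Evec m → ℝ} {V : Fin m → Evec m → ℝ}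
    (hS : ∀ i j, ContDiffOn ℝ 2 (S i j) {0}ᶜ)
    (hV : ∀ i, ∀ x ≠ 0, ∑ j, pdv j (S i j) x = V i x)
    (hdiv : ∀ x ≠ 0, ∑ i, pdv i (V i) x = 0)
    {φ : Evec m → ℝ} (hφ : ContDiff ℝ 2 φ) (hc : HasCompactSupport φ) :
    ∫ x, ∑ i, ∑ j, pdv j (pdv i φ) x * (cutoff x * S i j x) =
      (∫ x, φ x * ∑ i, pdv i cutoff x * V i x)
        - ∫ x, ∑ i, ∑ j, pdv i φ x * (pdv j cutoff x * S i j x) := by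
  have hV1 : ∀ i, ContDiffOn ℝ 1 (V i) {0}ᶜ := fun i =>
    (ContDiffOn.sum (s := Finset.univ) fun j _ =>
      contDiffOn_pdv (n' := 1) (by norm_num) j (hS i j)).congr fun x hx => (hV i x hx).symm
  have hU := fun i j => contDiff_cutoff_mul le_rfl (hS i j)
  have hX := fun i => contDiff_cutoff_mul (by norm_num) (hV1 i)
  have hφi : ∀ i, ContDiff ℝ 1 (pdv i φ) := fun i => contDiff_pdv (by norm_num) i hφ
  have hφ1 : ContDiff ℝ 1 φ := hφ.of_le (by norm_num)
  have int1 : ∀ {f g : Evec m → ℝ}, Continuous f → HasCompactSupport f → Continuous g →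
      Integrable fun x => f x * g x := fun hf hfc hg =>
    (hf.mul hg).integrable_of_hasCompactSupport hfc.mul_right
  have hpU : ∀ i j, Continuous (pdv j fun x => cutoff x * S i j x) := fun i j =>
    (contDiff_pdv (n' := 1) (by norm_num) j (hU i j)).continuous
  have hpX : ∀ i, Continuous (pdv i fun x => cutoff x * V i x) := fun i =>
    (contDiff_pdv (n' := 0) (by norm_num) i (hX i)).continuous
  have hci : ∀ i, HasCompactSupport (pdv i φ) := fun i => hasCompactSupport_pdv i hc
  have cutV : ∀ i x, cutoff x * ∑ j, pdv j (S i j) x = cutoff x * V i x := by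
    intro i x
    by_cases hx : x = 0
    · simp [hx, cutoff_eq_zero]
    · rw [hV i x hx]
  have cutdiv : ∀ x : Evec m, cutoff x * ∑ i, pdv i (V i) x = 0 := by
    intro x
    by_cases hx : x = 0
    · simp [hx, cutoff_eq_zero]
    · rw [hdiv x hx, mul_zero]
  calc ∫ x, ∑ i, ∑ j, pdv j (pdv i φ) x * (cutoff x * S i j x)
      = ∑ i, ∑ j, ∫ x, pdv j (pdv i φ) x * (cutoff x * S i j x) := by
        have : ∀ i j, Integrable fun x => pdv j (pdv i φ) x * (cutoff x * S i j x) := fun i j =>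
          int1 (contDiff_pdv (n' := 0) (by norm_num) j (hφi i)).continuous
            (hasCompactSupport_pdv j (hci i)) (hU i j).continuous
        rw [integral_finsetSum _ fun i _ => integrable_finsetSum _ fun j _ => this i j]
        exact Finset.sum_congr rfl fun i _ => integral_finsetSum _ fun j _ => this i j
    _ = ∑ i, ∑ j, -∫ x, pdv i φ x * pdv j (fun x => cutoff x * S i j x) x :=
        Finset.sum_congr rfl fun i _ => Finset.sum_congr rfl fun j _ =>
          integral_pdv_mul j (hφi i) (hci i) ((hU i j).of_le (by norm_num))
    _ = -∫ x, ∑ i, ∑ j, pdv i φ x * pdv j (fun x => cutoff x * S i j x) x := by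
        have : ∀ i j, Integrable fun x => pdv i φ x * pdv j (fun x => cutoff x * S i j x) x :=
          fun i j => int1 (hφi i).continuous (hci i) (hpU i j)
        rw [integral_finsetSum _ fun i _ => integrable_finsetSum _ fun j _ => this i j,
          ← Finset.sum_neg_distrib]
        refine Finset.sum_congr rfl fun i _ => ?_
        rw [integral_finsetSum _ fun j _ => this i j, ← Finset.sum_neg_distrib]
    _ = -∫ x, ((∑ i, ∑ j, pdv i φ x * (pdv j cutoff x * S i j x))
          + ∑ i, pdv i φ x * (cutoff x * V i x)) := by
        congr 1
        refine integral_congr_ae (Eventually.of_forall fun x => ?_)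
        simp only [pdv_cutoff_mul _ ((hS _ _).of_le (by norm_num)), ← Finset.mul_sum,
          Finset.sum_add_distrib, cutV, mul_add]
    _ = -(∫ x, ∑ i, ∑ j, pdv i φ x * (pdv j cutoff x * S i j x))
          + ∑ i, ∫ x, φ x * pdv i (fun x => cutoff x * V i x) x := by
        have h1 : ∀ i j, Integrable fun x => pdv i φ x * (pdv j cutoff x * S i j x) := fun i j =>
          int1 (hφi i).continuous (hci i) (continuous_pdv_cutoff_mul j (hS i j).continuousOn)
        have h2 : ∀ i, Integrable fun x => pdv i φ x * (cutoff x * V i x) := fun i =>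
          int1 (hφi i).continuous (hci i) (hX i).continuous
        rw [integral_add (integrable_finsetSum _ fun i _ => integrable_finsetSum _ fun j _ => h1 i j)
          (integrable_finsetSum _ fun i _ => h2 i), integral_finsetSum _ fun i _ => h2 i, neg_add,
          ← Finset.sum_neg_distrib]
        congr 1
        refine Finset.sum_congr rfl fun i _ => ?_
        rw [integral_pdv_mul i hφ1 hc (hX i), neg_neg]
    _ = -(∫ x, ∑ i, ∑ j, pdv i φ x * (pdv j cutoff x * S i j x))
          + ∫ x, φ x * ∑ i, pdv i cutoff x * V i x := by
        rw [← integral_finsetSum _ fun i _ => int1 hφ1.continuous hc (hpX i)]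
        congr 1
        refine integral_congr_ae (Eventually.of_forall fun x => ?_)
        simp only [pdv_cutoff_mul _ (hV1 _), ← Finset.mul_sum, Finset.sum_add_distrib, cutdiv,
          add_zero]
    _ = _ := by ring

end Green

section GreenLimit

variable {m : ℕ}

lemma exists_norm_le_of_homogeneous {g : Evec m → ℝ} (hg : ContinuousOn g {0}ᶜ)
    (hom : ∀ c > 0, ∀ x, g (c • x) = (c ^ (m - 2))⁻¹ * g x) :
    ∃ C, ∀ x ≠ 0, ‖g x‖ ≤ C * (‖x‖ ^ (m - 2))⁻¹ := by
  obtain ⟨C, hC⟩ := (isCompact_sphere (0 : Evec m) 1).exists_bound_of_continuousOn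
    (hg.mono fun x hx => by rintro rfl; simp at hx)
  refine ⟨C, fun x hx => ?_⟩
  have hx' : 0 < ‖x‖ := norm_pos_iff.2 hx
  have h := hom ‖x‖ hx' (‖x‖⁻¹ • x)
  rw [smul_smul, mul_inv_cancel₀ hx'.ne', one_smul] at h
  rw [h, norm_mul, mul_comm, norm_inv, norm_pow, norm_norm]
  gcongr
  exact hC _ (by simp [norm_smul, hx'.ne'])

lemma aestronglyMeasurable_of_continuousOn (hm : 0 < m) {g : Evec m → ℝ}
    (hg : ContinuousOn g {0}ᶜ) : AEStronglyMeasurable g volume := by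
  have := evec_nontrivial hm
  have h := hg.aestronglyMeasurable (μ := volume) (measurableSet_singleton 0).compl
  rwa [restrict_compl_singleton] at h

lemma locallyIntegrable_of_homogeneous (hm : 2 ≤ m) {g : Evec m → ℝ} (hg : ContinuousOn g {0}ᶜ)
    (hom : ∀ c > 0, ∀ x, g (c • x) = (c ^ (m - 2))⁻¹ * g x) : LocallyIntegrable g := by
  have := evec_nontrivial (by lia : 0 < m)
  obtain ⟨C, hC⟩ := exists_norm_le_of_homogeneous hg hom
  refine locallyIntegrable_of_norm_le_rpow (C := C) (α := ((m - 2 : ℕ) : ℝ)) (by simp; lia)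
    (by simp; lia) ?_ (aestronglyMeasurable_of_continuousOn (by lia) hg)
  filter_upwards [compl_mem_ae_iff.2 (measure_singleton (0 : Evec m))] with x hx
  rw [Real.rpow_neg (norm_nonneg x), Real.rpow_natCast]
  exact hC x hx

lemma pdv_comp_smul (i : Fin m) (δ : ℝ) (f : Evec m → ℝ) :
    pdv i (fun x => f (δ • x)) = fun x => δ * pdv i f (δ • x) := by
  funext x
  simp [pdv, fderiv_comp_smul]

lemma pdv_const_mul_comp_smul (i : Fin m) (c δ : ℝ) {f : Evec m → ℝ} (hf : Differentiable ℝ f) :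
    pdv i (fun x => c * f (δ • x)) = fun x => c * (δ * pdv i f (δ • x)) := by
  funext x
  have : DifferentiableAt ℝ (fun x => f (δ • x)) x :=
    (hf _).comp x (differentiable_id.const_smul δ x)
  simp [pdv, fderiv_const_mul this, fderiv_comp_smul]

/-- Green's formula for a homogeneous double-divergence-free matrix field with a point
singularity at the origin. -/
lemma integral_green (hm : 2 ≤ m) {S : Fin m → Fin m → Evec m → ℝ} {V : Fin m → Evec m → ℝ}
    (hS : ∀ i j, ContDiffOn ℝ 2 (S i j) {0}ᶜ)
    (hom : ∀ i j, ∀ c > 0, ∀ x, S i j (c • x) = (c ^ (m - 2))⁻¹ * S i j x)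
    (hV : ∀ i, ∀ x ≠ 0, ∑ j, pdv j (S i j) x = V i x)
    (hdiv : ∀ x ≠ 0, ∑ i, pdv i (V i) x = 0)
    {φ : Evec m → ℝ} (hφ : ContDiff ℝ 2 φ) (hc : HasCompactSupport φ) :
    ∫ x, ∑ i, ∑ j, pdv j (pdv i φ) x * S i j x =
      φ 0 * ∫ x, ∑ i, pdv i cutoff x * V i x := by
  have := evec_nontrivial (by lia : 0 < m)
  have hV1 : ∀ i, ContinuousOn (V i) {0}ᶜ := fun i =>
    (ContDiffOn.sum (s := Finset.univ) fun j _ => contDiffOn_pdv (n' := 1) (by norm_num) j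
      (hS i j)).continuousOn.congr fun x hx => (hV i x hx).symm
  have hφi : ∀ i, ContDiff ℝ 1 (pdv i φ) := fun i => contDiff_pdv (by norm_num) i hφ
  have hφij : ∀ i j, Continuous (pdv j (pdv i φ)) := fun i j =>
    (contDiff_pdv (n' := 0) (by norm_num) j (hφi i)).continuous
  have hci : ∀ i, HasCompactSupport (pdv i φ) := fun i => hasCompactSupport_pdv i hc
  have intK : ∀ j {g : Evec m → ℝ}, ContinuousOn g {0}ᶜ →
      Integrable fun x => pdv j cutoff x * g x := fun j g hg =>
    (continuous_pdv_cutoff_mul j hg).integrable_of_hasCompactSupport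
      (hasCompactSupport_pdv_cutoff_mul j g)
  have intP : ∀ i j (δ : ℝ), Integrable fun x => pdv i φ (δ • x) * (pdv j cutoff x * S i j x) :=
    fun i j δ => (((hφi i).continuous.comp (continuous_const_smul δ)).mul
      (continuous_pdv_cutoff_mul j (hS i j).continuousOn)).integrable_of_hasCompactSupport
        (hasCompactSupport_pdv_cutoff_mul j (S i j)).mul_left
  have key : ∀ δ > 0, ∫ x, ∑ i, ∑ j, pdv j (pdv i φ) x * (cutoff (δ⁻¹ • x) * S i j x) =
      (∫ x, φ (δ • x) * ∑ i, pdv i cutoff x * V i x)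
        - δ * ∑ i, ∑ j, ∫ x, pdv i φ (δ • x) * (pdv j cutoff x * S i j x) := by
    intro δ hδ
    have hcδ : HasCompactSupport fun x : Evec m => φ (δ • x) :=
      hc.comp_homeomorph (Homeomorph.smulOfNeZero δ hδ.ne')
    have h := integral_cutoff_green hS hV hdiv (φ := fun x => φ (δ • x))
      (hφ.comp (contDiff_const_smul δ)) hcδ
    have hsc : ∀ i j x, S i j x = δ ^ (m - 2) * S i j (δ • x) := fun i j x => by
      rw [hom i j δ hδ, mul_inv_cancel_left₀ (pow_pos hδ _).ne']
    have hl : ∫ x, ∑ i, ∑ j, pdv j (pdv i fun x => φ (δ • x)) x * (cutoff x * S i j x) =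
        ∫ x, ∑ i, ∑ j, pdv j (pdv i φ) x * (cutoff (δ⁻¹ • x) * S i j x) := by
      have h1 := Measure.integral_comp_smul_of_nonneg (volume : Measure (Evec m)) (fun x => δ ^ m *
        ∑ i, ∑ j, pdv j (pdv i φ) x * (cutoff (δ⁻¹ • x) * S i j x)) δ (hR := hδ.le)
      rw [integral_const_mul, integral_const_mul, finrank_euclideanSpace_fin, smul_eq_mul,
        inv_mul_cancel_left₀ (pow_pos hδ _).ne'] at h1
      rw [← h1, ← integral_const_mul]
      refine integral_congr_ae (Eventually.of_forall fun x => ?_)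
      simp only [pdv_comp_smul, pdv_const_mul_comp_smul _ _ _ ((hφi _).differentiable one_ne_zero),
        smul_smul, inv_mul_cancel₀ hδ.ne', one_smul, Finset.mul_sum]
      refine Finset.sum_congr rfl fun i _ => Finset.sum_congr rfl fun j _ => ?_
      have : δ ^ m = δ ^ 2 * δ ^ (m - 2) := by rw [← pow_add]; congr 1; lia
      rw [hsc i j x, this]
      ring
    rw [← hl, h]
    congr 1
    simp only [pdv_comp_smul, mul_assoc]
    have intQ := fun i j => (intP i j δ).const_mul δ
    rw [integral_finsetSum _ fun i _ => integrable_finsetSum _ fun j _ => intQ i j, Finset.mul_sum]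
    refine Finset.sum_congr rfl fun i _ => ?_
    rw [integral_finsetSum _ fun j _ => intQ i j, Finset.mul_sum]
    exact Finset.sum_congr rfl fun j _ => integral_const_mul _ _
  have lim1 : Tendsto (fun δ : ℝ => ∫ x, ∑ i, ∑ j, pdv j (pdv i φ) x *
      (cutoff (δ⁻¹ • x) * S i j x)) (𝓝[>] 0) (𝓝 (∫ x, ∑ i, ∑ j, pdv j (pdv i φ) x * S i j x)) := by
    have hint : ∀ i j, Integrable fun x => pdv j (pdv i φ) x * S i j x := fun i j =>
      (locallyIntegrable_of_homogeneous hm (hS i j).continuousOn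
        (hom i j)).integrable_smul_left_of_hasCompactSupport (hφij i j)
        (hasCompactSupport_pdv j (hci i))
    refine tendsto_integral_filter_of_dominated_convergence
      (fun x => ∑ i, ∑ j, ‖pdv j (pdv i φ) x * S i j x‖) ?_ ?_
      (integrable_finsetSum _ fun i _ => integrable_finsetSum _ fun j _ => (hint i j).norm) ?_
    · refine Eventually.of_forall fun δ => ?_
      refine Finset.aestronglyMeasurable_fun_sum _ fun i _ =>
        Finset.aestronglyMeasurable_fun_sum _ fun j _ => (hφij i j).aestronglyMeasurable.mul ?_
      exact (contDiff_cutoff.continuous.comp (continuous_const_smul δ⁻¹)).aestronglyMeasurable.mul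
        (aestronglyMeasurable_of_continuousOn (by lia) (hS i j).continuousOn)
    · refine Eventually.of_forall fun δ => Eventually.of_forall fun x => ?_
      refine (norm_sum_le _ _).trans (Finset.sum_le_sum fun i _ => (norm_sum_le _ _).trans
        (Finset.sum_le_sum fun j _ => ?_))
      rw [mul_left_comm, norm_mul, cutoff, Real.norm_of_nonneg (Real.smoothTransition.nonneg _)]
      exact mul_le_of_le_one_left (norm_nonneg _) (Real.smoothTransition.le_one _)
    · filter_upwards [compl_mem_ae_iff.2 (measure_singleton (0 : Evec m))] with x hx
      refine tendsto_const_nhds.congr' ?_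
      have hx' : 0 < ‖x‖ := norm_pos_iff.2 hx
      filter_upwards [Ioo_mem_nhdsGT (by positivity : 0 < ‖x‖ / 2)] with δ hδ
      have : cutoff (δ⁻¹ • x) = 1 := by
        refine cutoff_eq_one ?_
        rw [norm_smul, norm_inv, Real.norm_of_nonneg hδ.1.le, le_inv_mul_iff₀ hδ.1]
        linarith [hδ.2]
      simp [this]
  have limK : ∀ {ψ K : Evec m → ℝ}, Continuous ψ → HasCompactSupport ψ → Integrable K →
      Tendsto (fun δ : ℝ => ∫ x, ψ (δ • x) * K x) (𝓝[>] 0) (𝓝 (ψ 0 * ∫ x, K x)) := by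
    intro ψ K hψ hψc hK
    obtain ⟨C, hC⟩ := hψc.exists_bound_of_continuous hψ
    rw [← integral_const_mul]
    refine tendsto_integral_filter_of_dominated_convergence (fun x => C * ‖K x‖) ?_ ?_
      (hK.norm.const_mul C) ?_
    · exact Eventually.of_forall fun δ =>
        (hψ.comp (continuous_const_smul δ)).aestronglyMeasurable.mul hK.aestronglyMeasurable
    · refine Eventually.of_forall fun δ => Eventually.of_forall fun x => ?_
      rw [norm_mul]
      gcongr
      exact hC _
    · refine Eventually.of_forall fun x => Tendsto.mul_const _ ?_
      have : Continuous fun δ : ℝ => ψ (δ • x) := by fun_prop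
      simpa using (this.tendsto 0).mono_left nhdsWithin_le_nhds
  have lim2 := limK hφ.continuous hc (integrable_finsetSum Finset.univ fun i _ => intK i (hV1 i))
  have lim3 := tendsto_finsetSum Finset.univ fun i _ => tendsto_finsetSum Finset.univ fun j _ =>
    limK (hφi i).continuous (hci i) (intK j (hS i j).continuousOn)
  have lim4 := lim2.sub ((tendsto_id.mono_left nhdsWithin_le_nhds).mul lim3)
  rw [zero_mul, sub_zero] at lim4
  exact tendsto_nhds_unique (lim1.congr' (by
    filter_upwards [self_mem_nhdsWithin] with δ hδ using key δ hδ)) lim4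

end GreenLimit

section FundamentalSolutionGreen

variable {m : ℕ}

lemma isHomogeneous_smul {k : ℕ} {P : MvPolynomial (Fin m) ℝ} (hP : P.IsHomogeneous k) (c : ℝ) :
    (c • P).IsHomogeneous k :=
  (MvPolynomial.homogeneousSubmodule (Fin m) ℝ k).smul_mem c hP

lemma isHomogeneous_rsqP : (rsqP m).IsHomogeneous 2 :=
  MvPolynomial.IsHomogeneous.sum _ _ _ fun i _ =>
    (MvPolynomial.isHomogeneous_X ℝ i).mul (MvPolynomial.isHomogeneous_X ℝ i)

lemma dd_dd_eq_zero {P : MvPolynomial (Fin m) ℝ} {k : ℕ} (hk : k < 2) (hP : P.IsHomogeneous k)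
    (a b : Evec m) : dd b (dd a P) = 0 :=
  dd_eq_zero_of_isHomogeneous_zero (by simpa [show k - 1 = 0 by lia] using isHomogeneous_dd hP a) b

lemma harmP_symb {k : ℕ} (hk : 1 ≤ k) {N : ℝ} (hN : N = m + 2 * k - 2) (hN2 : 2 < N)
    {P : MvPolynomial (Fin m) ℝ} (hP : HarmP k P) (a b : Evec m) : HarmP k (symb N a b P) := by
  constructor
  · have h1 : ∀ v w : Evec m, (linP v * dd w P).IsHomogeneous k := fun v w => by
      simpa [show 1 + (k - 1) = k by lia] using (isHomogeneous_linP v).mul (isHomogeneous_dd hP.1 w)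
    have h2 : (rsqP m * dd b (dd a P)).IsHomogeneous k := by
      rcases Nat.lt_or_ge k 2 with hk2 | hk2
      · rw [dd_dd_eq_zero hk2 hP.1, mul_zero]
        exact MvPolynomial.isHomogeneous_zero _ _ _
      · simpa [show 2 + (k - 1 - 1) = k by lia] using
          isHomogeneous_rsqP.mul (isHomogeneous_dd (isHomogeneous_dd hP.1 a) b)
    exact ((isHomogeneous_smul hP.1 _).sub
      (isHomogeneous_smul ((h1 a b).add (h1 b a)) _)).add (isHomogeneous_smul h2 _)
  · refine ev_injective fun u => ?_
    rw [ev_sum, ev_zero]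
    have hone : ∀ j, ⟪(eb j : Evec m), eb j⟫ = (1 : ℝ) := fun j => by simp
    have h : ∀ j, ev (dd (eb j) (dd (eb j) (symb N a b P))) u =
        ⟪a, b⟫ * ev (dd (eb j) (dd (eb j) P)) u
        - 2 / N * (2 * (a j * ev (dd (eb j) (dd b P)) u)
          + 2 * (b j * ev (dd (eb j) (dd a P)) u)
          + ⟪a, u⟫ * ev (dd (eb j) (dd (eb j) (dd b P))) u
          + ⟪b, u⟫ * ev (dd (eb j) (dd (eb j) (dd a P))) u)
        + 4 / (N * (N - 2)) * (2 * ev (dd b (dd a P)) u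
          + 4 * (u j * ev (dd (eb j) (dd b (dd a P))) u)
          + ‖u‖ ^ 2 * ev (dd (eb j) (dd (eb j) (dd b (dd a P)))) u) := by
      intro j
      simp only [symb, map_add, map_sub, Derivation.map_smul, dd_mul, dd_linP, dd_rsqP, dd_C,
        ev_add, ev_sub, ev_smul, ev_mul, ev_linP, ev_rsqP, ev_C, ev_zero, hone]
      rw [inner_eb, real_inner_comm (eb j) a, real_inner_comm (eb j) b, inner_eb, inner_eb]
      ring
    have e := ev_euler (isHomogeneous_dd (isHomogeneous_dd hP.1 a) b) u
    have e' : ev (dd u (dd b (dd a P))) u = ((k : ℝ) - 2) * ev (dd b (dd a P)) u := by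
      rcases Nat.lt_or_ge k 2 with hk2 | hk2
      · simp [dd_dd_eq_zero hk2 hP.1]
      · rw [e]
        congr 1
        rw [Nat.sub_sub]
        push_cast [hk2]
        ring
    simp only [h, Finset.sum_add_distrib, Finset.sum_sub_distrib, ← Finset.mul_sum,
      ← ev_dd_eq_sum, sum_ev_dd_dd_eb hP, sum_ev_dd_dd_eb (hP.dd _),
      sum_ev_dd_dd_eb ((hP.dd a).dd b), Finset.sum_const, Finset.card_univ, Fintype.card_fin,
      nsmul_eq_mul, e', dd_comm a b]
    have hm : (m : ℝ) = N + 2 - 2 * k := by rw [hN]; ring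
    have hN0 : N ≠ 0 := by linarith
    have hN20 : N - 2 ≠ 0 := by linarith
    rw [hm]
    field_simp
    ring

lemma conj_eq (ν : Evec m) {x : Evec m} (hx : x ≠ 0) : conj ν x = ‖x‖ ^ 2 • reflv x ν := by
  have : ‖x‖ ^ 2 ≠ 0 := by simpa using hx
  rw [conj, reflv, smul_sub, smul_smul]
  congr 2
  field_simp

lemma ev_conj {k : ℕ} {P : MvPolynomial (Fin m) ℝ} (hP : P.IsHomogeneous k) (ν : Evec m)
    {x : Evec m} (hx : x ≠ 0) : ev P (conj ν x) = (‖x‖ ^ 2) ^ k * ev P (reflv x ν) := by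
  rw [conj_eq ν hx, ev_homogeneous hP]

lemma norm_sq_rpow_mul_pow {k : ℕ} {N : ℝ} (hm : 2 ≤ m) (hN : N = m + 2 * k - 2) {x : Evec m}
    (hx : x ≠ 0) : (‖x‖ ^ 2) ^ (-(N / 2)) * (‖x‖ ^ 2) ^ k = (‖x‖ ^ (m - 2))⁻¹ := by
  have hx' : 0 < ‖x‖ := norm_pos_iff.2 hx
  rw [← Real.rpow_natCast (‖x‖ ^ 2) k, ← Real.rpow_add (by positivity), ← Real.rpow_natCast,
    ← Real.rpow_mul hx'.le, ← Real.rpow_natCast, ← Real.rpow_neg hx'.le, Nat.cast_sub hm, hN]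
  congr 1
  push_cast
  ring

lemma fsol_eq {k : ℕ} (hk : 1 ≤ k) {N : ℝ} (hm : 2 ≤ m) (hN : N = m + 2 * k - 2) (hN2 : 2 < N)
    {P : MvPolynomial (Fin m) ℝ} (hP : HarmP k P) (ν a b : Evec m) {x : Evec m} (hx : x ≠ 0) :
    fsol N P ν a b x = (‖x‖ ^ (m - 2))⁻¹ * ev (symb N a b P) (reflv x ν) := by
  rw [fsol, ev_conj (harmP_symb hk hN hN2 hP a b).1 ν hx, ← mul_assoc,
    norm_sq_rpow_mul_pow hm hN hx]

lemma reflv_smul {c : ℝ} (hc : c ≠ 0) (x ν : Evec m) : reflv (c • x) ν = reflv x ν := by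
  by_cases hx : x = 0
  · simp [hx]
  have : ‖x‖ ^ 2 ≠ 0 := by simpa using hx
  rw [reflv, reflv, smul_smul, norm_smul, mul_pow, Real.norm_eq_abs, sq_abs, real_inner_smul_left]
  congr 2
  field_simp

lemma fsol_zero {N : ℝ} (hN2 : 2 < N) (P : MvPolynomial (Fin m) ℝ) (ν a b : Evec m) :
    fsol N P ν a b 0 = 0 := by
  rw [fsol, norm_zero, zero_pow two_ne_zero, Real.zero_rpow (by linarith), zero_mul]

lemma fsol_smul {k : ℕ} (hk : 1 ≤ k) {N : ℝ} (hm : 2 ≤ m) (hN : N = m + 2 * k - 2) (hN2 : 2 < N)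
    {P : MvPolynomial (Fin m) ℝ} (hP : HarmP k P) (ν a b : Evec m) {c : ℝ} (hc : 0 < c)
    (x : Evec m) : fsol N P ν a b (c • x) = (c ^ (m - 2))⁻¹ * fsol N P ν a b x := by
  by_cases hx : x = 0
  · simp [hx, fsol_zero hN2]
  rw [fsol_eq hk hm hN hN2 hP _ _ _ (smul_ne_zero hc.ne' hx), fsol_eq hk hm hN hN2 hP _ _ _ hx,
    reflv_smul hc.ne', norm_smul, mul_pow, Real.norm_eq_abs, abs_of_pos hc, mul_inv, mul_assoc]

lemma contDiff_conj (ν : Evec m) {n : WithTop ℕ∞} : ContDiff ℝ n (conj ν) := by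
  have h1 : ContDiff ℝ n fun x : Evec m => ‖x‖ ^ 2 := contDiff_norm_sq ℝ
  have h2 : ContDiff ℝ n fun x : Evec m => ⟪x, ν⟫ := contDiff_id.inner ℝ contDiff_const
  exact (h1.smul contDiff_const).sub ((contDiff_const.mul h2).smul contDiff_id)

lemma contDiffOn_fsol (N : ℝ) (P : MvPolynomial (Fin m) ℝ) (ν a b : Evec m) :
    ContDiffOn ℝ 2 (fsol N P ν a b) {0}ᶜ := by
  refine ContDiffOn.mul ?_ (((contDiff_ev _).of_le le_top).comp (contDiff_conj ν)).contDiffOn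
  intro x hx
  exact ((contDiff_norm_sq ℝ).contDiffAt.rpow_const_of_ne (by simpa using hx)).contDiffWithinAt

/-- The flux density of the fundamental solution. -/
def fluxDensity (N : ℝ) (P : MvPolynomial (Fin m) ℝ) (ν x : Evec m) : ℝ :=
  -((m : ℝ) - 2) * ev P (reflv x ν) + 4 / N * ev (dd ν P) (reflv x ν)
    + 8 * ‖ν‖ ^ 2 / (N * (N - 2)) * ((‖x‖ ^ 2)⁻¹ * ev (dd x (dd x P)) (reflv x ν))

lemma sum_mul_fdiv {k : ℕ} (hk : 1 ≤ k) {N : ℝ} (hm : 2 ≤ m) (hN : N = m + 2 * k - 2)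
    {P : MvPolynomial (Fin m) ℝ} (hP : HarmP k P) (ν : Evec m) {x : Evec m} (hx : x ≠ 0) :
    ∑ j, x j * fdiv N P ν (eb j) x = (‖x‖ ^ (m - 2))⁻¹ * fluxDensity N P ν x := by
  have hx' : ‖x‖ ^ 2 ≠ 0 := by simpa using hx
  have hxx : ∑ j, x j * x j = ‖x‖ ^ 2 := by rw [← inner_eq_sum, real_inner_self_eq_norm_sq]
  have hxv : ∑ j, x j * ν j = ⟪x, ν⟫ := by rw [← inner_eq_sum]
  have hl : ∀ (w : Evec m) j, ⟪w, eb j⟫ = w j := fun w j => by rw [real_inner_comm, inner_eb]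
  set u := conj ν x with hu
  have h2 : ∀ j, x j * fdiv N P ν (eb j) x = (‖x‖ ^ 2) ^ (-(N / 2)) * (
      -((m : ℝ) - 2) / ‖x‖ ^ 2 * (x j * x j) * ev P u
      + 4 / N * ((x j * x j) * ev (dd ν P) u - (x j * ν j) * ev (dd x P) u
        + ⟪x, ν⟫ * (x j * ev (dd (eb j) P) u))
      + 8 * ‖ν‖ ^ 2 / (N * (N - 2)) * (‖x‖ ^ 2 *
        (x j * ev (dd (eb j) (dd x P)) u))) := by
    intro j
    rw [fdiv, hl, hl, dd_comm x (eb j)]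
    ring
  simp only [h2, Finset.sum_add_distrib, Finset.sum_sub_distrib, ← Finset.mul_sum,
    ← Finset.sum_mul, hxx, hxv, ← ev_dd_eq_sum, hu]
  rw [← norm_sq_rpow_mul_pow hm hN hx, mul_assoc (_ ^ (-(N / 2))) (_ ^ k)]
  congr 1
  rw [ev_conj hP.1 ν hx, ev_conj (isHomogeneous_dd hP.1 ν) ν hx]
  have h3 : ev (dd x (dd x P)) (conj ν x) * (‖x‖ ^ 2) ^ 2
      = (‖x‖ ^ 2) ^ k * ev (dd x (dd x P)) (reflv x ν) := by
    rcases Nat.lt_or_ge k 2 with hk2 | hk2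
    · simp [dd_dd_eq_zero hk2 hP.1]
    · rw [ev_conj (isHomogeneous_dd (isHomogeneous_dd hP.1 x) x) ν hx]
      obtain ⟨l, rfl⟩ := Nat.exists_eq_add_of_le hk2
      rw [show 2 + l - 1 - 1 = l by lia]
      ring
  obtain ⟨l, rfl⟩ := Nat.exists_eq_add_of_le hk
  rw [fluxDensity, Nat.add_sub_cancel_left]
  generalize ‖x‖ ^ 2 = ρ at *
  have h3' : ev (dd x (dd x P)) (conj ν x) * ρ
      = ρ ^ (1 + l) * (ρ⁻¹ * ev (dd x (dd x P)) (reflv x ν)) := by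
    field_simp
    linear_combination h3
  linear_combination (norm := (field_simp; ring)) 8 * ‖ν‖ ^ 2 / (N * (N - 2)) * h3'

lemma integrable_toSphere {F : Evec m → ℝ} (hF : Continuous F) :
    Integrable (fun ω : sphere (0 : Evec m) 1 => F ω) (volume : Measure (Evec m)).toSphere :=
  (hF.comp continuous_subtype_val).integrable_of_hasCompactSupport
    (HasCompactSupport.of_compactSpace _)

lemma angularMean_add {F G : Evec m → ℝ} (hF : Continuous F) (hG : Continuous G) :
    angularMean (fun ω => F ω + G ω) = angularMean F + angularMean G := by
  simp only [angularMean]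
  rw [integral_add (integrable_toSphere hF) (integrable_toSphere hG), add_div]

lemma angularMean_const_mul (c : ℝ) (F : Evec m → ℝ) :
    angularMean (fun ω => c * F ω) = c * angularMean F := by
  simp only [angularMean]
  rw [integral_const_mul, mul_div_assoc]

lemma continuous_ev_dd_dd_self_conj (P : MvPolynomial (Fin m) ℝ) (ν : Evec m) :
    Continuous fun x => ev (dd x (dd x P)) (conj ν x) := by
  have h : (fun x => ev (dd x (dd x P)) (conj ν x)) =
      fun x => ∑ j, x j * ev (dd x (dd (eb j) P)) (conj ν x) := by
    funext x
    rw [ev_dd_eq_sum]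
    exact Finset.sum_congr rfl fun j _ => by rw [dd_comm]
  rw [h]
  refine continuous_finsetSum _ fun j _ => Continuous.mul (by fun_prop) ?_
  exact continuous_iff_continuousAt.2 fun x =>
    (hasFDerivAt_ev_dd_self_conj (dd (eb j) P) ν x).1.continuousAt

lemma conj_of_norm_eq_one {ω : Evec m} (hω : ‖ω‖ = 1) (ν : Evec m) : conj ν ω = reflv ω ν := by
  rw [conj_eq ν (norm_ne_zero_iff.1 (by simp [hω])), hω, one_pow, one_smul]

lemma angularMean_fluxDensity {k : ℕ} (hk : 1 ≤ k) {N : ℝ} (hm : 2 < m) (hN : N = m + 2 * k - 2)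
    {P : MvPolynomial (Fin m) ℝ} (hP : HarmP k P) (ν : Evec m) :
    angularMean (fluxDensity N P ν) = -(((m : ℝ) - 2) * (m - 4) / (N - 2)) * ev P ν := by
  have hc := fun Q : MvPolynomial (Fin m) ℝ =>
    (continuous_ev Q).comp (contDiff_conj ν (n := 0)).continuous
  have h0 : ∀ Q : MvPolynomial (Fin m) ℝ, angularMean (ev Q ∘ conj ν) =
      angularMean (fun ω => ev Q (reflv ω ν)) :=
    fun Q => angularMean_congr fun ω hω => by simp [conj_of_norm_eq_one hω]
  have h1 : angularMean (fun x => ev (dd x (dd x P)) (conj ν x)) = 0 := by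
    rw [← angularMean_dd_dd_reflv (by lia : 0 < m) hP ν]
    exact angularMean_congr fun ω hω => by simp [conj_of_norm_eq_one hω]
  rw [angularMean_congr (G := fun x => (-((m : ℝ) - 2) * (ev P ∘ conj ν) x
      + 4 / N * (ev (dd ν P) ∘ conj ν) x)
      + 8 * ‖ν‖ ^ 2 / (N * (N - 2)) * ev (dd x (dd x P)) (conj ν x)),
    angularMean_add (((hc _).const_mul _).fun_add ((hc _).const_mul _))
      ((continuous_ev_dd_dd_self_conj P ν).const_mul _),
    angularMean_add ((hc _).const_mul _) ((hc _).const_mul _), angularMean_const_mul,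
    angularMean_const_mul, angularMean_const_mul, h0, h0, h1, angularMean_reflv hm hP,
    angularMean_reflv hm (hP.dd ν), ev_euler hP.1]
  · obtain ⟨l, rfl⟩ := Nat.exists_eq_add_of_le hk
    have hm' : (2 : ℝ) < m := by exact_mod_cast hm
    have hl : (0 : ℝ) ≤ l := l.cast_nonneg
    have hN0 : (m : ℝ) + 2 * (1 + l) - 2 ≠ 0 := by linarith
    have hN2 : (m : ℝ) + 2 * (1 + l) - 2 - 2 ≠ 0 := by linarith
    have hN3 : (m : ℝ) + 2 * l - 2 ≠ 0 := by linarith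
    rw [hN, Nat.add_sub_cancel_left]
    push_cast
    field_simp
    ring
  · intro ω hω
    simp [fluxDensity, conj_of_norm_eq_one hω, hω]

lemma fluxDensity_smul (N : ℝ) (P : MvPolynomial (Fin m) ℝ) (ν : Evec m) {c : ℝ} (hc : 0 < c)
    (x : Evec m) : fluxDensity N P ν (c • x) = fluxDensity N P ν x := by
  have h : ∀ (Q : MvPolynomial (Fin m) ℝ) u, ev (dd (c • x) Q) u = c * ev (dd x Q) u :=
    fun Q u => ev_dd_smul ..
  rw [fluxDensity, fluxDensity, reflv_smul hc.ne', h, dd_comm, h, norm_smul, mul_pow,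
    Real.norm_eq_abs, sq_abs]
  congr 2
  field_simp

/-- The radial weight in the flux of the fundamental solution. -/
def fluxWeight (m : ℕ) : ℝ :=
  ∫ x : Evec m, 2 * deriv Real.smoothTransition (‖x‖ ^ 2 - 1) * (‖x‖ ^ (m - 2))⁻¹

lemma deriv_smoothTransition_eq_zero {t : ℝ} (ht : t < 0 ∨ 1 < t) :
    deriv Real.smoothTransition t = 0 := by
  rcases ht with ht | ht
  · have h : Real.smoothTransition =ᶠ[𝓝 t] fun _ => 0 := by
      filter_upwards [Iio_mem_nhds ht] with s hs using Real.smoothTransition.zero_of_nonpos hs.le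
    rw [h.deriv_eq, deriv_const]
  · have h : Real.smoothTransition =ᶠ[𝓝 t] fun _ => 1 := by
      filter_upwards [Ioi_mem_nhds ht] with s hs using Real.smoothTransition.one_of_one_le hs.le
    rw [h.deriv_eq, deriv_const]

lemma fluxWeight_pos (hm : 0 < m) : 0 < fluxWeight m := by
  have := evec_nontrivial hm
  have hst : ContDiff ℝ 1 Real.smoothTransition := Real.smoothTransition.contDiff
  have hd : Continuous (deriv Real.smoothTransition) := hst.continuous_deriv le_rfl
  obtain ⟨t, ht, ht'⟩ := exists_deriv_eq_slope Real.smoothTransition zero_lt_one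
    hst.continuous.continuousOn (hst.differentiable one_ne_zero).differentiableOn
  obtain ⟨x, hx⟩ := exists_norm_eq (Evec m) (Real.sqrt_nonneg (1 + t))
  refine Continuous.integral_pos_of_hasCompactSupport_nonneg_nonzero (x := x) ?_ ?_ ?_ ?_
  · rw [continuous_iff_continuousAt]
    intro y
    rcases eq_or_ne y 0 with rfl | hy
    · refine (continuousAt_const (y := (0 : ℝ))).congr ?_
      filter_upwards [ball_mem_nhds (0 : Evec m) one_pos] with z hz
      rw [mem_ball_zero_iff] at hz
      rw [deriv_smoothTransition_eq_zero (.inl (by nlinarith [norm_nonneg z]))]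
      simp
    · refine ContinuousAt.mul (by fun_prop) (ContinuousAt.inv₀ (by fun_prop) ?_)
      exact pow_ne_zero _ (norm_ne_zero_iff.2 hy)
  · refine HasCompactSupport.intro (isCompact_closedBall (0 : Evec m) 2) fun y hy => ?_
    rw [mem_closedBall_zero_iff, not_le] at hy
    rw [deriv_smoothTransition_eq_zero (.inr (by nlinarith))]
    simp
  · intro y
    have : 0 ≤ deriv Real.smoothTransition (‖y‖ ^ 2 - 1) :=
      Real.smoothTransition.monotone.deriv_nonneg
    simp only [Pi.zero_apply]
    positivity
  · have h1 : ‖x‖ ^ 2 - 1 = t := by rw [hx, Real.sq_sqrt (by linarith [ht.1])]; ring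
    have hx0 : ‖x‖ ≠ 0 := by
      rw [hx]
      exact (Real.sqrt_pos.2 (by linarith [ht.1])).ne'
    rw [h1, ht']
    simp [hx0]

lemma integral_sum_pdv_cutoff_mul_fdiv {k : ℕ} (hk : 1 ≤ k) {N : ℝ} (hm : 2 < m)
    (hN : N = m + 2 * k - 2) {P : MvPolynomial (Fin m) ℝ} (hP : HarmP k P) (ν : Evec m) :
    ∫ x, ∑ i, pdv i cutoff x * fdiv N P ν (eb i) x =
      -(((m : ℝ) - 2) * (m - 4) / (N - 2)) * ev P ν * fluxWeight m := by
  have := evec_nontrivial (by lia : 0 < m)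
  rw [← angularMean_fluxDensity hk hm hN hP ν, fluxWeight, ← integral_angular_mul_radial
    (by lia) (fluxDensity N P ν) (fun c y hc => fluxDensity_smul N P ν hc y)
    (fun t => 2 * deriv Real.smoothTransition (t ^ 2 - 1) * (t ^ (m - 2))⁻¹)]
  refine integral_congr_ae ?_
  filter_upwards [compl_mem_ae_iff.2 (measure_singleton (0 : Evec m))] with x hx
  simp only [pdv_cutoff, mul_assoc, ← Finset.mul_sum, sum_mul_fdiv hk hm.le hN hP ν hx]
  ring

/-- The representation formula for the bosonic Laplacian. -/
lemma integral_fsol {k : ℕ} (hk : 1 ≤ k) {N : ℝ} (hm : 2 < m)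
    (hN : N = m + 2 * k - 2) {P : MvPolynomial (Fin m) ℝ} (hP : HarmP k P) (ν y : Evec m)
    {φ : Evec m → ℝ} (hφ : ContDiff ℝ 2 φ) (hc : HasCompactSupport φ) :
    ∫ x, ∑ i, ∑ j, pdv j (pdv i φ) x * fsol N P ν (eb i) (eb j) (x - y) =
      φ y * (-(((m : ℝ) - 2) * (m - 4) / (N - 2)) * ev P ν * fluxWeight m) := by
  have hN2 : 2 < N := by
    have : (1 : ℝ) ≤ k := by exact_mod_cast hk
    have : (2 : ℝ) < m := by exact_mod_cast hm
    linarith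
  have hpd : ∀ (i : Fin m) (g : Evec m → ℝ), pdv i (fun x => g (x + y)) =
      fun x => pdv i g (x + y) := fun i g => by
    funext x
    rw [pdv, fderiv_comp_add_right, pdv]
  have h := integral_green hm.le (fun i j => contDiffOn_fsol N P ν (eb i) (eb j))
    (fun i j c hc x => fsol_smul hk hm.le hN hN2 hP ν _ _ hc x)
    (fun i x hx => sum_fderiv_fsol hN hN2 hP ν (eb i) hx)
    (fun x hx => sum_fderiv_fdiv hN hN2 hP ν hx) (φ := fun x => φ (x + y))
    (hφ.comp (contDiff_id.add contDiff_const))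
    (hc.comp_homeomorph (Homeomorph.addRight y))
  simp only [hpd, integral_sum_pdv_cutoff_mul_fdiv hk hm hN hP ν, zero_add] at h
  rw [← h, ← integral_add_right_eq_self _ y]
  simp

end FundamentalSolutionGreen

/-- The truncated power `s^{-m/2-1}`, supported on `s > R²`. -/
def tailKernel (m : ℕ) (R s : ℝ) : ℝ := if R ^ 2 < s then s ^ (-((m : ℝ) / 2) - 1) else 0

section LineIntegral

lemma tailKernel_nonneg (m : ℕ) (R s : ℝ) : 0 ≤ tailKernel m R s := by
  rw [tailKernel]
  split_ifs with h
  · exact Real.rpow_nonneg ((sq_nonneg R).trans h.le) _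
  · rfl

lemma measurable_tailKernel (m : ℕ) (R : ℝ) : Measurable (tailKernel m R) :=
  Measurable.ite measurableSet_Ioi (by fun_prop) measurable_const

lemma integral_Ioi_mul_tailKernel {m : ℕ} (hm : 0 < m) {R D : ℝ} (hR : 0 < R) (hD0 : 0 ≤ D)
    (hD : D < R ^ 2) :
    IntegrableOn (fun t => t * tailKernel m R (t ^ 2 + D)) (Set.Ioi 0) ∧
    ∫ t in Set.Ioi 0, t * tailKernel m R (t ^ 2 + D) = (R ^ m)⁻¹ / m := by
  have hT : 0 < R ^ 2 - D := by linarith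
  have hT0 := Real.sqrt_pos.2 hT
  set T := √(R ^ 2 - D)
  have hTT : T ^ 2 = R ^ 2 - D := Real.sq_sqrt hT.le
  have hm' : (0 : ℝ) < m := by exact_mod_cast hm
  set g : ℝ → ℝ := fun t => -((t ^ 2 + D) ^ (-((m : ℝ) / 2))) / m
  set g' : ℝ → ℝ := fun t => t * (t ^ 2 + D) ^ (-((m : ℝ) / 2) - 1)
  have hderiv : ∀ t ∈ Set.Ici T, HasDerivAt g (g' t) t := by
    intro t ht
    have ht' : 0 < t := hT0.trans_le ht
    have h1 : HasDerivAt (fun t : ℝ => t ^ 2 + D) (2 * t) t := by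
      simpa using (hasDerivAt_pow 2 t).add_const D
    have h2 := (h1.rpow_const (p := -((m : ℝ) / 2)) (.inl (by positivity))).neg.div_const (m : ℝ)
    convert! h2 using 1
    simp only [g']
    field_simp
  have hnn : ∀ t ∈ Set.Ioi T, 0 ≤ g' t := fun t ht => by
    have : 0 < t := hT0.trans ht
    positivity
  have hlim : Tendsto g atTop (𝓝 0) := by
    have h1 : Tendsto (fun t : ℝ => t ^ 2 + D) atTop atTop :=
      tendsto_atTop_add_const_right _ _ (tendsto_pow_atTop two_ne_zero)
    have h2 := ((tendsto_rpow_neg_atTop (y := (m : ℝ) / 2) (by positivity)).comp h1).neg.div_const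
      (m : ℝ)
    simpa using h2
  have hind : ∀ t ∈ Set.Ioi (0 : ℝ), t * tailKernel m R (t ^ 2 + D) =
      (Set.Ioi T).indicator g' t := by
    intro t ht
    have : R ^ 2 < t ^ 2 + D ↔ T < t := by
      rw [← sub_lt_iff_lt_add, ← hTT]
      exact pow_lt_pow_iff_left₀ hT0.le (le_of_lt ht) two_ne_zero
    by_cases h : T < t
    · rw [Set.indicator_of_mem (Set.mem_Ioi.2 h), tailKernel, if_pos (this.2 h)]
    · rw [Set.indicator_of_notMem (by simpa using h), tailKernel, if_neg (fun h' => h (this.1 h')), mul_zero]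
  have hI := integrableOn_Ioi_deriv_of_nonneg' hderiv hnn hlim
  have hsub : Set.Ioi T ⊆ Set.Ioi 0 := Set.Ioi_subset_Ioi hT0.le
  constructor
  · rw [integrableOn_congr_fun hind measurableSet_Ioi]
    exact ((integrable_indicator_iff measurableSet_Ioi).2 hI).integrableOn
  · rw [setIntegral_congr_fun measurableSet_Ioi hind, setIntegral_indicator measurableSet_Ioi,
      Set.inter_eq_right.2 hsub, integral_Ioi_of_hasDerivAt_of_nonneg' hderiv hnn hlim]
    simp only [g, hTT, sub_add_cancel]
    rw [← Real.rpow_natCast R 2, ← Real.rpow_mul hR.le, ← Real.rpow_natCast R m,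
      ← Real.rpow_neg hR.le]
    push_cast
    rw [show (2 : ℝ) * -(m / 2) = -m by ring]
    ring

lemma integral_Ioi_mul_tailKernel_symm {m : ℕ} (hm : 0 < m) {R b D : ℝ} (hR : 0 < R) (hD0 : 0 ≤ D)
    (hD : b ^ 2 + D < R ^ 2) :
    ∫ t in Set.Ioi 0, t * (tailKernel m R ((t - b) ^ 2 + D) + tailKernel m R ((t + b) ^ 2 + D)) =
      2 * ((R ^ m)⁻¹ / m) := by
  obtain ⟨h1, h2⟩ := integral_Ioi_mul_tailKernel hm hR hD0 (by nlinarith [sq_nonneg b])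
  set K := tailKernel m R
  have hK : ∀ t : ℝ, |t| ≤ |b| → K (t ^ 2 + D) = 0 := fun t ht => by
    have := sq_le_sq.2 ht
    exact if_neg (by linarith)
  set J : ℝ → ℝ → ℝ := fun c => (Set.Ioi |b|).indicator fun t => (t + c) * K (t ^ 2 + D)
  have hJ : ∀ c : ℝ, |c| = |b| → Integrable (J c) := by
    intro c hc
    rw [integrable_indicator_iff measurableSet_Ioi]
    refine ((h1.mono_set (Set.Ioi_subset_Ioi (abs_nonneg b))).const_mul 2).mono' ?_ ?_
    · exact ((measurable_id.add_const c).mul ((measurable_tailKernel m R).comp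
        ((measurable_id.pow_const 2).add_const D))).aestronglyMeasurable
    · filter_upwards [ae_restrict_mem measurableSet_Ioi] with t ht
      have ht' : |b| < t := ht
      have hk := tailKernel_nonneg m R (t ^ 2 + D)
      rw [norm_mul, Real.norm_eq_abs, Real.norm_eq_abs, abs_of_nonneg hk, ← mul_assoc]
      refine mul_le_mul_of_nonneg_right (abs_le.2 ⟨?_, ?_⟩) hk
      · linarith [neg_abs_le c, abs_nonneg b]
      · linarith [le_abs_self c, abs_nonneg b]
  have hshift : ∀ c : ℝ, |c| = |b| → ∀ t,
      (Set.Ioi 0).indicator (fun t => t * K ((t - c) ^ 2 + D)) t = J c (t - c) := by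
    intro c hc t
    have hc1 := neg_abs_le c
    have hc2 := le_abs_self c
    by_cases ht : |b| < t - c
    · have ht0 : 0 < t := by linarith
      simp only [J]
      rw [Set.indicator_of_mem (Set.mem_Ioi.2 ht), Set.indicator_of_mem (Set.mem_Ioi.2 ht0)]
      simp
    · simp only [J]
      rw [Set.indicator_of_notMem (s := Set.Ioi |b|) (by simpa using ht), Set.indicator_apply]
      split_ifs with h
      · have h' : 0 < t := h
        rw [hK (t - c) (abs_le.2 ⟨by linarith, by linarith⟩), mul_zero]
      · rfl
  have hb : |-b| = |b| := abs_neg b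
  have hsum : ∀ t, (Set.Ioi 0).indicator (fun t => t * (K ((t - b) ^ 2 + D) + K ((t + b) ^ 2 + D))) t
      = J b (t - b) + J (-b) (t - -b) := by
    intro t
    rw [← hshift b rfl, ← hshift (-b) hb, Set.indicator_apply, Set.indicator_apply,
      Set.indicator_apply]
    split_ifs <;> simp [mul_add]
  rw [← integral_indicator measurableSet_Ioi, integral_congr_ae (.of_forall hsum),
    integral_add ((hJ b rfl).comp_sub_right b) ((hJ (-b) hb).comp_sub_right (-b)),
    integral_sub_right_eq_self, integral_sub_right_eq_self, ← integral_add (hJ b rfl) (hJ (-b) hb),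
    ← h2, ← integral_const_mul, ← integral_indicator measurableSet_Ioi]
  refine integral_congr_ae (.of_forall fun t => ?_)
  simp only [J, Set.indicator_apply, Set.mem_Ioi]
  by_cases ht : |b| < t
  · rw [if_pos ht, if_pos ht, if_pos ((abs_nonneg b).trans_lt ht)]
    ring
  · rw [if_neg ht, if_neg ht]
    split_ifs with h
    · rw [hK t (by rw [abs_of_pos h]; exact not_lt.1 ht)]
      ring
    · simp

end LineIntegral

section ExteriorIntegral

variable {m : ℕ}

lemma integral_radial_tailKernel (hm : 2 ≤ m) {R : ℝ} (hR : 0 < R) {z ω : Evec m} (hz : ‖z‖ < R)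
    (hω : ‖ω‖ = 1) {F : Evec m → ℝ} (hF : ∀ c : ℝ, c ≠ 0 → ∀ y, F (c • y) = F y) :
    ∫ t in Set.Ioi (0 : ℝ), t ^ (m - 1) * ((‖t • ω‖ ^ (m - 2))⁻¹ * F (t • ω) *
      (tailKernel m R (‖t • ω - z‖ ^ 2) + tailKernel m R (‖t • ω + z‖ ^ 2))) =
    F ω * (2 * ((R ^ m)⁻¹ / m)) := by
  have hb : ⟪ω, z⟫ ^ 2 ≤ ‖z‖ ^ 2 := by
    have := abs_real_inner_le_norm ω z
    rw [hω, one_mul] at this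
    exact sq_le_sq.2 (by rwa [abs_norm])
  have hz2 : ‖z‖ ^ 2 < R ^ 2 := by gcongr
  rw [← integral_Ioi_mul_tailKernel_symm (by lia : 0 < m) (b := ⟪ω, z⟫)
    (D := ‖z‖ ^ 2 - ⟪ω, z⟫ ^ 2) hR (by linarith) (by linarith), ← integral_const_mul]
  refine setIntegral_congr_fun measurableSet_Ioi fun t ht => ?_
  have ht' : 0 < t := ht
  have h1 : ‖t • ω - z‖ ^ 2 = (t - ⟪ω, z⟫) ^ 2 + (‖z‖ ^ 2 - ⟪ω, z⟫ ^ 2) := by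
    rw [norm_sub_sq_real, norm_smul, hω, real_inner_smul_left, Real.norm_eq_abs, mul_one, sq_abs]
    ring
  have h2 : ‖t • ω + z‖ ^ 2 = (t + ⟪ω, z⟫) ^ 2 + (‖z‖ ^ 2 - ⟪ω, z⟫ ^ 2) := by
    rw [norm_add_sq_real, norm_smul, hω, real_inner_smul_left, Real.norm_eq_abs, mul_one, sq_abs]
    ring
  have h3 : t ^ (m - 1) = t * t ^ (m - 2) := by
    rw [← pow_succ', show m - 2 + 1 = m - 1 by lia]
  simp only [h1, h2, hF t ht'.ne', norm_smul, hω, Real.norm_eq_abs, abs_of_pos ht', mul_one, h3]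
  field_simp

lemma integral_tailKernel (hm : 2 ≤ m) {R : ℝ} (hR : 0 < R) {z : Evec m} (hz : ‖z‖ < R)
    {F : Evec m → ℝ} (hF : ∀ c : ℝ, c ≠ 0 → ∀ y, F (c • y) = F y)
    (hG : Integrable fun w => (‖w‖ ^ (m - 2))⁻¹ * F w * tailKernel m R (‖w - z‖ ^ 2)) :
    ∫ w, (‖w‖ ^ (m - 2))⁻¹ * F w * tailKernel m R (‖w - z‖ ^ 2) =
      angularMean F * ((R ^ m)⁻¹ * volume.real (ball (0 : Evec m) 1)) := by
  have hm0 : 0 < m := by lia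
  have := evec_nontrivial hm0
  set G : Evec m → ℝ := fun w => (‖w‖ ^ (m - 2))⁻¹ * F w * tailKernel m R (‖w - z‖ ^ 2)
  set H : Evec m → ℝ := fun w => (‖w‖ ^ (m - 2))⁻¹ * F w *
    (tailKernel m R (‖w - z‖ ^ 2) + tailKernel m R (‖w + z‖ ^ 2))
  have hGH : ∀ w, H w = G w + G (-w) := by
    intro w
    have h1 : F (-w) = F w := by simpa using hF (-1) (by norm_num) w
    have h2 : ‖-w - z‖ = ‖w + z‖ := by rw [← norm_neg]; congr 1; abel
    simp only [G, H, h1, h2, norm_neg]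
    ring
  have hH : Integrable H := (hG.add hG.comp_neg).congr (.of_forall fun w => (hGH w).symm)
  have hGn : ∫ w, H w = 2 * ∫ w, G w := by
    rw [integral_congr_ae (.of_forall hGH), integral_add hG hG.comp_neg, integral_neg_eq_self,
      two_mul]
  have hval : ∫ w, H w = (∫ ω : sphere (0 : Evec m) 1, F ω ∂(volume : Measure (Evec m)).toSphere)
      * (2 * ((R ^ m)⁻¹ / m)) := by
    rw [integral_eq_integral_prod_sphere hm0, integral_prod _ (integrable_prod_sphere hm0 hH),
      ← integral_mul_const]
    refine integral_congr_ae (.of_forall fun ω => ?_)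
    have hω : ‖(ω : Evec m)‖ = 1 := by simp
    simp only []
    rw [integral_volumeIoiPow (m - 1) (fun t => H (t • (ω : Evec m))),
      ← integral_radial_tailKernel hm hR hz hω hF]
  have hm' : (m : ℝ) ≠ 0 := by positivity
  have hV : (volume : Measure (Evec m)).toSphere.real Set.univ
      = m * volume.real (ball (0 : Evec m) 1) := by
    rw [Measure.toSphere_real_apply_univ]
    simp
  have hpos := toSphere_real_pos hm0
  rw [hV] at hpos
  have hV0 : volume.real (ball (0 : Evec m) 1) ≠ 0 := fun h => by simp [h] at hpos
  rw [angularMean, hV]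
  have : ∫ w, G w = (∫ w, H w) / 2 := by rw [hGn]; ring
  rw [this, hval]
  field_simp

end ExteriorIntegral

section Reflections

variable {m : ℕ}

lemma reflv_eq_reflection (x ν : Evec m) : reflv x ν = (ℝ ∙ x)ᗮ.reflection ν := by
  rw [Submodule.reflection_orthogonal_apply, Submodule.reflection_singleton_apply, reflv]
  simp only [RCLike.ofReal_real_eq_id, id_eq]
  module

lemma norm_reflv (x ν : Evec m) : ‖reflv x ν‖ = ‖ν‖ := by
  rw [reflv_eq_reflection, LinearIsometryEquiv.norm_map]

lemma reflv_reflv_comm (x ω ν : Evec m) :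
    reflv x (reflv ω ν) = reflv (reflv x ω) (reflv x ν) := by
  rw [reflv.eq_def (reflv x ω), norm_reflv, reflv_eq_reflection x, reflv_eq_reflection x,
    reflv_eq_reflection x, LinearIsometryEquiv.inner_map_map, reflv, map_sub, map_smul]

lemma reflv_sub_reflv {x y : Evec m} (hx : x ≠ 0) (hy : y ≠ 0) (hxy : y ≠ x) (ν : Evec m) :
    reflv (y - x) (reflv y ν) = reflv x (reflv
      (EuclideanGeometry.inversion 0 1 x - EuclideanGeometry.inversion 0 1 y) ν) := by
  have hA : ‖x‖ ^ 2 ≠ 0 := by simpa using hx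
  have hB : ‖y‖ ^ 2 ≠ 0 := by simpa using hy
  have hC : ‖y‖ ^ 2 - 2 * ⟪x, y⟫ + ‖x‖ ^ 2 ≠ 0 := by
    rw [real_inner_comm, ← norm_sub_sq_real]
    simpa [sub_eq_zero] using hxy
  have h1 : EuclideanGeometry.inversion 0 1 x - EuclideanGeometry.inversion 0 1 y =
      (‖x‖ ^ 2 * ‖y‖ ^ 2)⁻¹ • (‖y‖ ^ 2 • x - ‖x‖ ^ 2 • y) := by
    simp only [EuclideanGeometry.inversion, vsub_eq_sub, vadd_eq_add, sub_zero, add_zero,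
      dist_zero_right, smul_sub, smul_smul, div_pow, one_pow]
    congr 2 <;> field_simp
  rw [h1, reflv_smul (by positivity)]
  have h2 : ‖‖y‖ ^ 2 • x - ‖x‖ ^ 2 • y‖ ^ 2 =
      ‖x‖ ^ 2 * ‖y‖ ^ 2 * (‖y‖ ^ 2 - 2 * ⟪x, y⟫ + ‖x‖ ^ 2) := by
    rw [norm_sub_sq_real, norm_smul, norm_smul, real_inner_smul_left, real_inner_smul_right]
    simp only [Real.norm_eq_abs, abs_pow, abs_norm]
    ring
  have hc : ⟪y, x⟫ = ⟪x, y⟫ := real_inner_comm _ _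
  simp only [reflv, h2, norm_sub_sq_real, inner_sub_left, inner_sub_right, real_inner_smul_left,
    real_inner_smul_right, real_inner_self_eq_norm_sq, hc]
  generalize ‖x‖ ^ 2 = A at *
  generalize ‖y‖ ^ 2 = B at *
  generalize ⟪x, y⟫ = c at *
  generalize ⟪x, ν⟫ = s at *
  generalize ⟪y, ν⟫ = t at *
  match_scalars <;> field_simp <;> ring

lemma angularMean_comp_isometry (hm : 0 < m) (L : Evec m ≃ₗᵢ[ℝ] Evec m) {F : Evec m → ℝ}
    (hF : ∀ (c : ℝ) (y : Evec m), 0 < c → F (c • y) = F y) :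
    angularMean (fun ω => F (L ω)) = angularMean F := by
  set τ : ℝ → ℝ := (Set.Iio 1).indicator 1
  have hτ : ∫ y : Evec m, τ ‖y‖ = volume.real (ball (0 : Evec m) 1) := by
    rw [← integral_indicator_one measurableSet_ball]
    refine integral_congr_ae (.of_forall fun y => ?_)
    by_cases hy : ‖y‖ < 1 <;> simp [τ, hy]
  have hpos : 0 < volume.real (ball (0 : Evec m) 1) := 
    ENNReal.toReal_pos (measure_ball_pos volume _ one_pos).ne' measure_ball_lt_top.ne
  have h1 := integral_angular_mul_radial hm F hF τ
  have h2 := integral_angular_mul_radial hm (fun y => F (L y))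
    (fun c y hc => by rw [map_smul, hF c _ hc]) τ
  have h3 : ∫ y, F (L y) * τ ‖y‖ = ∫ y, F y * τ ‖y‖ := by
    simpa using L.measurePreserving.integral_comp L.toHomeomorph.measurableEmbedding
      (fun y => F y * τ ‖y‖)
  rw [h3, h1, hτ] at h2
  exact (mul_right_cancel₀ hpos.ne' h2).symm

lemma angularMean_reflv_reflv (hm : 2 < m) {k : ℕ} {P : MvPolynomial (Fin m) ℝ} (hP : HarmP k P)
    (x ν : Evec m) : angularMean (fun ω => ev P (reflv x (reflv ω ν))) =
      ((m : ℝ) - 2) / (m + 2 * k - 2) * ev P (reflv x ν) := by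
  rw [← angularMean_reflv hm hP, ← angularMean_comp_isometry (by lia) (ℝ ∙ x)ᗮ.reflection
    (F := fun ω => ev P (reflv ω (reflv x ν)))
    (fun c y hc => by rw [reflv_smul hc.ne'])]
  simp only [← reflv_eq_reflection, ← reflv_reflv_comm]

end Reflections

section Inversion

variable {m : ℕ}

open EuclideanGeometry in
lemma image_inversion_compl_closedBall {ρ : ℝ} (hρ : 0 < ρ) :
    inversion (0 : Evec m) 1 '' (closedBall 0 ρ⁻¹)ᶜ = ball 0 ρ \ {0} := by
  have h : ∀ y : Evec m, y ≠ 0 → ‖inversion (0 : Evec m) 1 y‖ = ‖y‖⁻¹ := fun y hy => by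
    simpa using dist_inversion_center (0 : Evec m) y 1
  ext y
  constructor
  · rintro ⟨η, hη, rfl⟩
    rw [Set.mem_compl_iff, mem_closedBall_zero_iff, not_le] at hη
    have hη0 : η ≠ 0 := norm_pos_iff.1 ((inv_pos.2 hρ).trans hη)
    refine ⟨?_, by simpa [inversion_eq_center] using hη0⟩
    rw [mem_ball_zero_iff, h η hη0]
    exact inv_lt_of_inv_lt₀ hρ hη
  · rintro ⟨hy, hy0⟩
    refine ⟨inversion 0 1 y, ?_, inversion_inversion _ one_ne_zero y⟩
    rw [Set.mem_compl_iff, mem_closedBall_zero_iff, not_le, h y hy0]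
    rw [mem_ball_zero_iff] at hy
    exact (inv_lt_inv₀ hρ (norm_pos_iff.2 hy0)).2 hy

open EuclideanGeometry in
lemma abs_det_fderiv_inversion (η : Evec m) :
    |((1 / dist η 0) ^ 2 • ((ℝ ∙ (η - 0))ᗮ.reflection : Evec m →L[ℝ] Evec m)).det| =
      (‖η‖ ^ (2 * m))⁻¹ := by
  have h := Submodule.det_reflection (𝕜 := ℝ) (ℝ ∙ (η - 0))ᗮ
  rw [ContinuousLinearMap.det, ContinuousLinearMap.toLinearMap_smul, LinearMap.det_smul]
  erw [h]
  simp [abs_mul, abs_pow, pow_mul]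

end Inversion

section Shell

variable {m : ℕ}

lemma measurable_reflv {α : Type*} [MeasurableSpace α] {g h : α → Evec m} (hg : Measurable g)
    (hh : Measurable h) : Measurable fun p => reflv (g p) (h p) := by
  unfold reflv
  fun_prop

lemma exists_abs_ev_le (P : MvPolynomial (Fin m) ℝ) (R : ℝ) :
    ∃ C, 0 ≤ C ∧ ∀ u : Evec m, ‖u‖ ≤ R → |ev P u| ≤ C := by
  obtain ⟨C, hC⟩ := (isCompact_closedBall (0 : Evec m) R).exists_bound_of_continuousOn
    (continuous_ev P).continuousOn
  refine ⟨max C 0, le_max_right _ _, fun u hu => ?_⟩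
  exact (hC u (by simpa using hu)).trans (le_max_left _ _)

lemma integrableOn_ball_riesz (P : MvPolynomial (Fin m) ℝ) {ρ : ℝ} {x : Evec m} (hx : ρ < ‖x‖)
    (ν : Evec m) : IntegrableOn
      (fun y => (‖y - x‖ ^ (m - 2))⁻¹ * ev P (reflv (y - x) (reflv y ν))) (ball 0 ρ) := by
  obtain ⟨C, hC0, hC⟩ := exists_abs_ev_le P ‖ν‖
  have hmeas : Measurable fun y : Evec m =>
      (‖y - x‖ ^ (m - 2))⁻¹ * ev P (reflv (y - x) (reflv y ν)) :=
    (by fun_prop : Measurable fun y : Evec m => (‖y - x‖ ^ (m - 2))⁻¹).mul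
      ((continuous_ev P).measurable.comp (measurable_reflv (by fun_prop)
        (measurable_reflv measurable_id measurable_const)))
  refine Measure.integrableOn_of_bounded (M := ((‖x‖ - ρ) ^ (m - 2))⁻¹ * C)
    measure_ball_lt_top.ne hmeas.aestronglyMeasurable
    ((ae_restrict_iff' measurableSet_ball).2 (.of_forall fun y hy => ?_))
  rw [mem_ball_zero_iff] at hy
  have h1 : ‖x‖ - ρ ≤ ‖y - x‖ := by
    have := norm_sub_norm_le x y
    rw [norm_sub_rev] at this
    linarith
  rw [norm_mul, Real.norm_eq_abs, Real.norm_eq_abs, abs_of_nonneg (by positivity)]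
  have h0 : 0 < ‖x‖ - ρ := sub_pos.2 hx
  gcongr
  exact hC _ (by rw [norm_reflv, norm_reflv])

open EuclideanGeometry in
lemma integral_ball_riesz (hm : 2 < m) {k : ℕ} {P : MvPolynomial (Fin m) ℝ} (hP : HarmP k P)
    {ρ : ℝ} (hρ : 0 < ρ) {x : Evec m} (hx : ρ < ‖x‖) (ν : Evec m) :
    ∫ y in ball 0 ρ, (‖y - x‖ ^ (m - 2))⁻¹ * ev P (reflv (y - x) (reflv y ν)) =
      ((m : ℝ) - 2) / (m + 2 * k - 2) * volume.real (ball (0 : Evec m) ρ) *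
        ((‖x‖ ^ (m - 2))⁻¹ * ev P (reflv x ν)) := by
  have := evec_nontrivial (m := m) (by lia)
  have hx0 : x ≠ 0 := norm_pos_iff.1 (hρ.trans hx)
  set g : Evec m → ℝ := fun y => (‖y - x‖ ^ (m - 2))⁻¹ * ev P (reflv (y - x) (reflv y ν)) with hg
  set z : Evec m := inversion 0 1 x with hz
  have hznorm : ‖z‖ = ‖x‖⁻¹ := by simpa using dist_inversion_center (0 : Evec m) x 1
  have hzlt : ‖z‖ < ρ⁻¹ := by
    rw [hznorm]
    exact (inv_lt_inv₀ (hρ.trans hx) hρ).2 hx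
  set s : Set (Evec m) := (closedBall 0 ρ⁻¹)ᶜ with hs
  have hsm : MeasurableSet s := measurableSet_closedBall.compl
  set F : Evec m → ℝ := fun w => ev P (reflv x (reflv w ν)) with hF
  have hFs : ∀ c : ℝ, c ≠ 0 → ∀ y, F (c • y) = F y := fun c hc y => by
    simp only [hF, reflv_smul hc]
  have hderiv : ∀ η ∈ s, HasFDerivWithinAt (inversion (0 : Evec m) 1)
      ((1 / dist η 0) ^ 2 • ((ℝ ∙ (η - 0))ᗮ.reflection : Evec m →L[ℝ] Evec m)) s η := by
    intro η hη
    refine (hasFDerivAt_inversion ?_).hasFDerivWithinAt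
    rintro rfl
    simp [hs, hρ.le] at hη
  have hinj : Set.InjOn (inversion (0 : Evec m) 1) s := (inversion_injective _ one_ne_zero).injOn
  have himg : inversion (0 : Evec m) 1 '' s = ball 0 ρ \ {0} := image_inversion_compl_closedBall hρ
  set K : Evec m → ℝ := fun w => (‖w‖ ^ (m - 2))⁻¹ * F w * tailKernel m ρ⁻¹ (‖w - z‖ ^ 2) with hK
  have hpt : ∀ η ∈ s, |((1 / dist η 0) ^ 2 • ((ℝ ∙ (η - 0))ᗮ.reflection :
      Evec m →L[ℝ] Evec m)).det| • g (inversion 0 1 η) = (‖x‖ ^ (m - 2))⁻¹ * K (z - η) := by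
    intro η hη
    have hη' : ρ⁻¹ < ‖η‖ := by simpa [hs] using hη
    have hη0 : 0 < ‖η‖ := (inv_pos.2 hρ).trans hη'
    have hx' : 0 < ‖x‖ := hρ.trans hx
    have hmem : inversion (0 : Evec m) 1 η ∈ ball 0 ρ \ {0} := himg ▸ Set.mem_image_of_mem _ hη
    have hne : inversion (0 : Evec m) 1 η ≠ x := by
      rintro h
      rw [h, Set.mem_sdiff, mem_ball_zero_iff] at hmem
      exact hx.not_gt hmem.1
    have hdist : ‖inversion (0 : Evec m) 1 η - x‖ = ‖x‖ / ‖η‖ * ‖z - η‖ := by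
      have hzz : z ≠ 0 := by rw [← norm_pos_iff, hznorm]; positivity
      have h := dist_inversion_inversion (norm_pos_iff.1 hη0) hzz 1
      rw [hz, inversion_inversion _ one_ne_zero, ← hz, dist_eq_norm, dist_zero_right,
        dist_zero_right, hznorm, dist_eq_norm, norm_sub_rev η z] at h
      rw [h]
      field_simp
    have htail : tailKernel m ρ⁻¹ (‖z - η - z‖ ^ 2) = (‖η‖ ^ (m + 2))⁻¹ := by
      rw [sub_sub_cancel_left, norm_neg, tailKernel, if_pos (by gcongr), ← Real.rpow_natCast ‖η‖ 2,
        ← Real.rpow_mul hη0.le, ← Real.rpow_natCast ‖η‖ (m + 2), ← Real.rpow_neg hη0.le]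
      congr 1
      push_cast
      ring
    rw [abs_det_fderiv_inversion, smul_eq_mul]
    simp only [hg, hK, htail, hF]
    rw [reflv_sub_reflv hx0 (by simpa using hmem.2) hne, inversion_inversion _ one_ne_zero, hdist,
      mul_pow, div_pow]
    obtain ⟨n, rfl⟩ := Nat.exists_eq_add_of_lt hm
    have e1 : 2 + n + 1 - 2 = n + 1 := by lia
    rw [e1]
    field_simp
    ring
  have hind : s.indicator (fun η => (‖x‖ ^ (m - 2))⁻¹ * K (z - η)) =
      fun η => (‖x‖ ^ (m - 2))⁻¹ * K (z - η) := by
    refine Set.indicator_eq_self.2 fun η hη => ?_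
    contrapose! hη
    have hη' : ‖η‖ ≤ ρ⁻¹ := by simpa [hs] using hη
    simp only [Function.mem_support, not_not, hK, sub_sub_cancel_left, norm_neg, tailKernel]
    rw [if_neg (by simpa using pow_le_pow_left₀ (norm_nonneg η) hη' 2)]
    simp
  have hgi : IntegrableOn g (ball 0 ρ \ {0}) :=
    (integrableOn_ball_riesz P hx ν).mono_set Set.sdiff_subset
  have hKi : Integrable K := by
    rw [← himg, integrableOn_image_iff_integrableOn_abs_det_fderiv_smul _ hsm hderiv hinj,
      integrableOn_congr_fun hpt hsm, ← integrable_indicator_iff hsm, hind,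
      integrable_const_mul_iff (by simp [hx0])] at hgi
    simpa using hgi.comp_sub_left z
  have h1 : ∫ y in ball 0 ρ, g y = (‖x‖ ^ (m - 2))⁻¹ * ∫ w, K w := by
    rw [← integral_sub_left_eq_self K volume z, ← integral_const_mul, ← hind,
      integral_indicator hsm, ← setIntegral_congr_fun hsm hpt,
      ← integral_image_eq_integral_abs_det_fderiv_smul _ hsm hderiv hinj, himg]
    exact (setIntegral_congr_set (sdiff_null_ae_eq_self (measure_singleton _))).symm
  rw [h1, integral_tailKernel hm.le (inv_pos.2 hρ) hzlt hFs hKi, angularMean_reflv_reflv hm hP,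
    measureReal_def, measureReal_def, Measure.addHaar_ball volume _ hρ.le, ENNReal.toReal_mul,
    ENNReal.toReal_ofReal (by positivity), finrank_euclideanSpace_fin, inv_pow, inv_inv]
  ring

end Shell

/-- The kernel `|x - y|^{2-m} P(R_{x-y} R_y ν)`. -/
def rieszKernel {m : ℕ} (P : MvPolynomial (Fin m) ℝ) (ν x y : Evec m) : ℝ :=
  (‖x - y‖ ^ (m - 2))⁻¹ * ev P (reflv (x - y) (reflv y ν))

section Fubini

variable {m : ℕ}

lemma continuousOn_reflv (ν : Evec m) : ContinuousOn (fun x => reflv x ν) {0}ᶜ := by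
  unfold reflv
  have h : ContinuousOn (fun x : Evec m => 2 * ⟪x, ν⟫ / ‖x‖ ^ 2) {0}ᶜ :=
    ContinuousOn.div (by fun_prop) (by fun_prop) fun x hx => by simpa using hx
  exact continuousOn_const.sub (h.smul continuousOn_id)

lemma locallyIntegrable_riesz (hm : 2 ≤ m) (P : MvPolynomial (Fin m) ℝ) (ν : Evec m) :
    LocallyIntegrable fun x : Evec m => (‖x‖ ^ (m - 2))⁻¹ * ev P (reflv x ν) := by
  refine locallyIntegrable_of_homogeneous hm ?_ fun c hc x => ?_
  · refine ContinuousOn.mul (ContinuousOn.inv₀ (by fun_prop) fun x hx => ?_)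
      ((continuous_ev P).comp_continuousOn (continuousOn_reflv ν))
    have : 0 < ‖x‖ := norm_pos_iff.2 hx
    positivity
  · rw [reflv_smul hc.ne', norm_smul, mul_pow, Real.norm_eq_abs, abs_of_pos hc, mul_inv, mul_assoc]

lemma integrable_mul_rieszKernel (hm : 2 ≤ m) (P : MvPolynomial (Fin m) ℝ) (ν y : Evec m)
    {h : Evec m → ℝ} (hh : Continuous h) (hc : HasCompactSupport h) :
    Integrable fun x => h x * rieszKernel P ν x y := by
  have h1 := (locallyIntegrable_riesz hm P (reflv y ν)).integrable_smul_left_of_hasCompactSupport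
    (g := fun x => h (x + y)) (by fun_prop) (hc.comp_homeomorph (Homeomorph.addRight y))
  simpa [rieszKernel] using h1.comp_sub_right y

lemma integrable_prod_rieszKernel (hm : 2 ≤ m) (P : MvPolynomial (Fin m) ℝ) (ν : Evec m) (ρ : ℝ)
    {h : Evec m → ℝ} (hh : Continuous h) (hc : HasCompactSupport h) :
    Integrable (fun p : Evec m × Evec m => h p.1 * rieszKernel P ν p.1 p.2)
      (volume.prod (volume.restrict (ball 0 ρ))) := by
  obtain ⟨C, hC0, hC⟩ := exists_abs_ev_le P ‖ν‖
  obtain ⟨M, hM⟩ := hh.bounded_above_of_compact_support hc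
  obtain ⟨R, hR⟩ := hc.isCompact.isBounded.subset_closedBall (0 : Evec m)
  have hL : Integrable ((closedBall (0 : Evec m) (R + ρ)).indicator
      fun x => (‖x‖ ^ (m - 2))⁻¹) := by
    have := locallyIntegrable_riesz hm 1 ν
    simp only [ev_one, mul_one] at this
    exact (this.integrableOn_isCompact (isCompact_closedBall _ _)).integrable_indicator
      measurableSet_closedBall
  have hconst : Integrable (fun _ => M * C) (volume.restrict (ball (0 : Evec m) ρ)) :=
    integrableOn_const measure_ball_lt_top.ne
  have hmeas : Measurable fun p : Evec m × Evec m => h p.1 * rieszKernel P ν p.1 p.2 :=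
    (hh.measurable.comp measurable_fst).mul
      ((by fun_prop : Measurable fun p : Evec m × Evec m => (‖p.1 - p.2‖ ^ (m - 2))⁻¹).mul
        ((continuous_ev P).measurable.comp (measurable_reflv (by fun_prop)
          (measurable_reflv measurable_snd measurable_const))))
  refine (hconst.convolution_integrand (ContinuousLinearMap.mul ℝ ℝ) hL).mono'
    hmeas.aestronglyMeasurable ?_
  filter_upwards [Measure.quasiMeasurePreserving_snd.ae (ae_restrict_mem measurableSet_ball)]
    with p hp
  rw [mem_ball_zero_iff] at hp
  have hM0 : 0 ≤ M := (norm_nonneg _).trans (hM 0)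
  by_cases hx : h p.1 = 0
  · rw [hx, zero_mul, norm_zero]
    exact mul_nonneg (by positivity) (Set.indicator_nonneg (fun _ _ => by positivity) _)
  · have hpR : ‖p.1‖ ≤ R := by simpa using hR (subset_tsupport _ hx)
    have hmem : p.1 - p.2 ∈ closedBall (0 : Evec m) (R + ρ) := by
      rw [mem_closedBall_zero_iff]
      exact (norm_sub_le _ _).trans (add_le_add hpR hp.le)
    rw [Set.indicator_of_mem hmem, ContinuousLinearMap.mul_apply', rieszKernel, norm_mul, norm_mul,
      Real.norm_of_nonneg (by positivity : 0 ≤ (‖p.1 - p.2‖ ^ (m - 2))⁻¹), mul_comm _ ‖ev P _‖,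
      ← mul_assoc]
    gcongr
    · exact hM _
    · exact hC _ (by rw [norm_reflv, norm_reflv])

lemma rieszKernel_eq (P : MvPolynomial (Fin m) ℝ) (ν x y : Evec m) :
    rieszKernel P ν x y = (‖y - x‖ ^ (m - 2))⁻¹ * ev P (reflv (y - x) (reflv y ν)) := by
  rw [rieszKernel, norm_sub_rev, ← reflv_smul (neg_ne_zero.2 one_ne_zero) (x - y)]
  simp

lemma integral_ball_integral_rieszKernel (hm : 2 < m) {k : ℕ} {β : Type*} [Fintype β]
    {Q : β → MvPolynomial (Fin m) ℝ} (hQ : ∀ b, HarmP k (Q b)) {h : β → Evec m → ℝ}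
    (hh : ∀ b, Continuous (h b)) (hc : ∀ b, HasCompactSupport (h b)) {ρ : ℝ} (hρ : 0 < ρ)
    (hzero : ∀ x ∈ closedBall (0 : Evec m) ρ, ∑ b, h b x • Q b = 0) (ν : Evec m) :
    ∫ y in ball 0 ρ, ∫ x, ∑ b, h b x * rieszKernel (Q b) ν x y =
      ((m : ℝ) - 2) / (m + 2 * k - 2) * volume.real (ball (0 : Evec m) ρ) *
        ∫ x, ∑ b, h b x * rieszKernel (Q b) ν x 0 := by
  rw [← integral_integral_swap, ← integral_const_mul]
  · refine integral_congr_ae (.of_forall fun x => ?_)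
    rcases le_or_gt ‖x‖ ρ with hx | hx
    · have h0 : ∀ y, ∑ b, h b x * rieszKernel (Q b) ν x y = 0 := fun y => by
        have := congrArg (fun q => (‖x - y‖ ^ (m - 2))⁻¹ * ev q (reflv (x - y) (reflv y ν)))
          (hzero x (by simpa using hx))
        simp only [ev_sum, ev_smul, ev_zero, mul_zero, Finset.mul_sum] at this
        rw [← this]
        exact Finset.sum_congr rfl fun b _ => by rw [rieszKernel]; ring
      simp [h0]
    · simp only [rieszKernel_eq _ _ x]
      rw [integral_finsetSum _ fun b _ => (integrableOn_ball_riesz (Q b) hx ν).const_mul _,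
        Finset.mul_sum]
      refine Finset.sum_congr rfl fun b _ => ?_
      rw [integral_const_mul, integral_ball_riesz hm (hQ b) hρ hx, ← rieszKernel_eq, rieszKernel]
      simp [reflv]
      ring
  · exact integrable_finsetSum _ fun b _ =>
      integrable_prod_rieszKernel hm.le (Q b) ν ρ (hh b) (hc b)

end Fubini

section CompactlySupported

variable {m : ℕ}

lemma integral_pdv_mul_rieszKernel {k : ℕ} (hk : 1 ≤ k) {N : ℝ} (hm : 2 < m)
    (hN : N = m + 2 * k - 2) {ι : Type*} [Fintype ι] {e : ι → MvPolynomial (Fin m) ℝ}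
    (he : ∀ α, HarmP k (e α)) {φ : ι → Evec m → ℝ} (hφ : ∀ α, ContDiff ℝ 2 (φ α))
    (hc : ∀ α, HasCompactSupport (φ α)) (ν y : Evec m) :
    ∫ x, ∑ b : ι × Fin m × Fin m, pdv b.2.2 (pdv b.2.1 (φ b.1)) x *
        rieszKernel (symb N (eb b.2.1) (eb b.2.2) (e b.1)) ν x y =
      -(((m : ℝ) - 2) * (m - 4) / (N - 2)) * fluxWeight m *
        ∑ α, φ α y * ev (e α) (reflv y ν) := by
  have := evec_nontrivial (by lia : 0 < m)
  have hN2 : 2 < N := by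
    have : (1 : ℝ) ≤ k := by exact_mod_cast hk
    have : (2 : ℝ) < m := by exact_mod_cast hm
    linarith
  simp only [Fintype.sum_prod_type]
  rw [integral_finsetSum _ fun α _ => integrable_finsetSum _ fun i _ => integrable_finsetSum _
    fun j _ => integrable_mul_rieszKernel hm.le _ ν y
      (contDiff_pdv (n' := 0) (n := 1) (by simp) j
        (contDiff_pdv (by norm_num) i (hφ α))).continuous
      (hasCompactSupport_pdv j (hasCompactSupport_pdv i (hc α))), Finset.mul_sum]
  refine Finset.sum_congr rfl fun α _ => ?_
  rw [show -(((m : ℝ) - 2) * (m - 4) / (N - 2)) * fluxWeight m *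
      (φ α y * ev (e α) (reflv y ν)) = φ α y * (-(((m : ℝ) - 2) * (m - 4) / (N - 2)) *
        ev (e α) (reflv y ν) * fluxWeight m) by ring,
    ← integral_fsol hk hm hN (he α) (reflv y ν) y (hφ α) (hc α)]
  refine integral_congr_ae ?_
  filter_upwards [compl_mem_ae_iff.2 (measure_singleton y)] with x hx
  refine Finset.sum_congr rfl fun i _ => Finset.sum_congr rfl fun j _ => ?_
  rw [fsol_eq hk hm.le hN hN2 (he α) _ _ _ (sub_ne_zero.2 hx), rieszKernel]

lemma integral_ball_of_compactSupport {k : ℕ} (hk : 1 ≤ k) {N : ℝ} (hm : 4 < m)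
    (hN : N = m + 2 * k - 2) {ι : Type*} [Fintype ι] {e : ι → MvPolynomial (Fin m) ℝ}
    (he : ∀ α, HarmP k (e α)) {φ : ι → Evec m → ℝ} (hφ : ∀ α, ContDiff ℝ 2 (φ α))
    (hc : ∀ α, HasCompactSupport (φ α)) {ρ : ℝ} (hρ : 0 < ρ)
    (hzero : ∀ x ∈ closedBall (0 : Evec m) ρ,
      ∑ α, ∑ i, ∑ j, pdv j (pdv i (φ α)) x • symb N (eb i) (eb j) (e α) = 0) (ν : Evec m) :
    ∫ y in ball 0 ρ, ∑ α, φ α y * ev (e α) (reflv y ν) =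
      ((m : ℝ) - 2) / N * volume.real (ball (0 : Evec m) ρ) * ∑ α, φ α 0 * ev (e α) ν := by
  have hm2 : 2 < m := by lia
  have hm4 : (4 : ℝ) < m := by exact_mod_cast hm
  have hk1 : (1 : ℝ) ≤ k := by exact_mod_cast hk
  have hN2 : 2 < N := by linarith
  have hC : -(((m : ℝ) - 2) * (m - 4) / (N - 2)) * fluxWeight m ≠ 0 := by
    have h1 := fluxWeight_pos (by lia : 0 < m)
    have h2 : 0 < (m : ℝ) - 2 := by linarith
    have h3 : 0 < (m : ℝ) - 4 := by linarith
    have h4 : 0 < N - 2 := by linarith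
    exact mul_ne_zero (neg_ne_zero.2 (by positivity)) h1.ne'
  have key := integral_ball_integral_rieszKernel hm2
    (Q := fun b : ι × Fin m × Fin m => symb N (eb b.2.1) (eb b.2.2) (e b.1))
    (fun b => harmP_symb hk hN hN2 (he b.1) _ _)
    (h := fun b => pdv b.2.2 (pdv b.2.1 (φ b.1)))
    (fun b => (contDiff_pdv (n' := 0) (n := 1) (by simp) _
      (contDiff_pdv (by norm_num) _ (hφ b.1))).continuous)
    (fun b => hasCompactSupport_pdv _ (hasCompactSupport_pdv _ (hc b.1))) hρ
    (fun x hx => by simpa only [Fintype.sum_prod_type] using hzero x hx) ν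
  simp only [integral_pdv_mul_rieszKernel hk hm2 hN he hφ hc] at key
  rw [integral_const_mul, mul_left_comm, ← hN] at key
  have h0 : reflv 0 ν = ν := by simp [reflv]
  simpa only [h0] using mul_left_cancel₀ hC key

end CompactlySupported

section Separation

variable {m : ℕ}

/-- The space of harmonic homogeneous polynomials of degree `k`. -/
def harmSubmodule (m k : ℕ) : Submodule ℝ (MvPolynomial (Fin m) ℝ) where
  carrier := {P | HarmP k P}
  zero_mem' := ⟨MvPolynomial.isHomogeneous_zero _ _ _, by simp⟩
  add_mem' hP hQ := ⟨hP.1.add hQ.1, by simp [Finset.sum_add_distrib, hP.2, hQ.2]⟩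
  smul_mem' c P hP := ⟨isHomogeneous_smul hP.1 c, by simp [← Finset.smul_sum, hP.2]⟩

instance finiteDimensional_harmSubmodule (m k : ℕ) : FiniteDimensional ℝ (harmSubmodule m k) := by
  have : FiniteDimensional ℝ (MvPolynomial.homogeneousSubmodule (Fin m) ℝ k) :=
    Module.Finite.iff_fg.2 (MvPolynomial.homogeneousSubmodule_fg _ _ k)
  exact Submodule.finiteDimensional_of_le (S₂ := MvPolynomial.homogeneousSubmodule (Fin m) ℝ k)
    fun P hP => hP.1

/-- Evaluation at a point as a linear form on harmonic polynomials. -/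
def evalForm (m k : ℕ) (u : Evec m) : harmSubmodule m k →ₗ[ℝ] ℝ where
  toFun P := ev P.1 u
  map_add' _ _ := ev_add _ _ _
  map_smul' _ _ := ev_smul _ _ _

lemma HarmP.eq_zero_of_ball {k : ℕ} {P : MvPolynomial (Fin m) ℝ} (hP : HarmP k P)
    (h : ∀ u ∈ ball (0 : Evec m) 1, ev P u = 0) : P = 0 := by
  refine ev_injective fun x => ?_
  have hx : (0 : ℝ) < ‖x‖ + 1 := by positivity
  have h1 := h ((‖x‖ + 1)⁻¹ • x) (by
    rw [mem_ball_zero_iff, norm_smul, norm_inv, Real.norm_of_nonneg hx.le, inv_mul_lt_iff₀ hx]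
    linarith)
  rw [ev_homogeneous hP.1] at h1
  simpa [hx.ne'] using h1

lemma exists_interpolation (m k : ℕ) : ∃ (s : Finset (ball (0 : Evec m) 1))
    (e : s → MvPolynomial (Fin m) ℝ), (∀ α, HarmP k (e α)) ∧
      ∀ P, HarmP k P → P = ∑ α : s, ev P α.1.1 • e α := by
  obtain ⟨s, hs⟩ := Finset.exists_inf_le
    fun u : ball (0 : Evec m) 1 => LinearMap.ker (evalForm m k u)
  let T : harmSubmodule m k →ₗ[ℝ] (s → ℝ) := LinearMap.pi fun α => evalForm m k α.1
  have hT : LinearMap.ker T = ⊥ := by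
    rw [eq_bot_iff]
    intro P hP
    have hP' : P ∈ s.inf fun u : ball (0 : Evec m) 1 => LinearMap.ker (evalForm m k u) := by
      rw [Submodule.mem_finsetInf]
      exact fun u hu => congrFun hP ⟨u, hu⟩
    exact Subtype.ext (P.2.eq_zero_of_ball fun u hu => hs ⟨u, hu⟩ hP')
  obtain ⟨L, hL⟩ := T.exists_leftInverse_of_injective hT
  refine ⟨s, fun α => (L (Pi.single α 1)).1, fun α => (L (Pi.single α 1)).2, fun P hP => ?_⟩
  have h1 : L (T ⟨P, hP⟩) = ⟨P, hP⟩ := LinearMap.congr_fun hL _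
  rw [← LinearMap.sum_single_apply (fun _ => ℝ) (T ⟨P, hP⟩), map_sum] at h1
  have h2 : P = ∑ α, (L (Pi.single α (T ⟨P, hP⟩ α))).1 := by
    rw [← AddSubmonoidClass.coe_finsetSum, h1]
  refine h2.trans (Finset.sum_congr rfl fun α _ => ?_)
  rw [show Pi.single α (T ⟨P, hP⟩ α) = ev P α.1.1 • Pi.single α (1 : ℝ) by
    rw [← Pi.single_smul', smul_eq_mul, mul_one]; rfl, map_smul]
  rfl

end Separation

section BosonicLaplacian

variable {m : ℕ} {ι : Type*} [Fintype ι] {Ω : Set (Evec m)} {f : Evec m → Evec m → ℝ}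
  {φ : ι → Evec m → ℝ} {e : ι → MvPolynomial (Fin m) ℝ}

lemma pd1_eq_sum (hΩ : IsOpen Ω) (hφ : ∀ α, DifferentiableOn ℝ (φ α) Ω)
    (hf : ∀ x ∈ Ω, ∀ u ∈ ball (0 : Evec m) 1, f x u = ∑ α, φ α x * ev (e α) u) (i : Fin m) :
    ∀ x ∈ Ω, ∀ u ∈ ball (0 : Evec m) 1, pd1 i f x u = ∑ α, pdv i (φ α) x * ev (e α) u := by
  intro x hx u hu
  have h : (fun y => f y u) =ᶠ[𝓝 x] fun y => ∑ α, φ α y * ev (e α) u := by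
    filter_upwards [hΩ.mem_nhds hx] with y hy using hf y hy u hu
  have hd : ∀ α, DifferentiableAt ℝ (φ α) x := fun α => (hφ α).differentiableAt (hΩ.mem_nhds hx)
  rw [pd1, h.fderiv_eq, fderiv_fun_sum fun α _ => (hd α).mul_const _]
  simp only [fderiv_mul_const (hd _), sum_apply, smul_apply,
    smul_eq_mul, pdv, mul_comm]

lemma pd2_eq_sum
    (hf : ∀ x ∈ Ω, ∀ u ∈ ball (0 : Evec m) 1, f x u = ∑ α, φ α x * ev (e α) u) (i : Fin m) :
    ∀ x ∈ Ω, ∀ u ∈ ball (0 : Evec m) 1,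
      pd2 i f x u = ∑ α, φ α x * ev (dd (eb i) (e α)) u := by
  intro x hx u hu
  have h : (fun v => f x v) =ᶠ[𝓝 u] fun v => ∑ α, φ α x * ev (e α) v := by
    filter_upwards [isOpen_ball.mem_nhds hu] with v hv using hf x hx v hv
  have hd : ∀ α, DifferentiableAt ℝ (ev (e α)) u := fun α => (differentiable_ev _).differentiableAt
  rw [pd2, h.fderiv_eq, fderiv_fun_sum fun α _ => (hd α).const_mul _]
  simp only [fderiv_const_mul (hd _), sum_apply,
    smul_apply, smul_eq_mul, fderiv_ev]

lemma pdv_comm (hΩ : IsOpen Ω) {g : Evec m → ℝ} (hg : ContDiffOn ℝ 2 g Ω) (i j : Fin m)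
    {x : Evec m} (hx : x ∈ Ω) : pdv i (pdv j g) x = pdv j (pdv i g) x := by
  have hat : ContDiffAt ℝ 2 g x := hg.contDiffAt (hΩ.mem_nhds hx)
  have hd : DifferentiableAt ℝ (fderiv ℝ g) x :=
    (hat.fderiv_right (m := 1) (by norm_num)).differentiableAt one_ne_zero
  have h : ∀ a b : Fin m, pdv a (pdv b g) x = fderiv ℝ (fderiv ℝ g) x (eb a) (eb b) := fun a b => by
    have : pdv b g = fun y => fderiv ℝ g y (eb b) := rfl
    rw [pdv, this, fderiv_clm_apply hd (differentiableAt_const _)]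
    simp
  rw [h, h]
  exact hat.isSymmSndFDerivAt (by simp) _ _

lemma Dk_eq_sum {k : ℕ} {N : ℝ} (hN : N = m + 2 * k - 2) (hΩ : IsOpen Ω)
    (hφ : ∀ α, ContDiffOn ℝ 2 (φ α) Ω)
    (hf : ∀ x ∈ Ω, ∀ u ∈ ball (0 : Evec m) 1, f x u = ∑ α, φ α x * ev (e α) u) :
    ∀ x ∈ Ω, ∀ u ∈ ball (0 : Evec m) 1,
      Dk m k f x u = ∑ α, ∑ i, ∑ j, pdv j (pdv i (φ α)) x * ev (symb N (eb i) (eb j) (e α)) u := by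
  intro x hx u hu
  have hd0 : ∀ α, DifferentiableOn ℝ (φ α) Ω := fun α => (hφ α).differentiableOn two_ne_zero
  have hd1 : ∀ i α, DifferentiableOn ℝ (pdv i (φ α)) Ω := fun i α =>
    (((hφ α).fderiv_of_isOpen hΩ (m := 1) (by norm_num)).clm_apply
      contDiffOn_const).differentiableOn one_ne_zero
  have h1 := fun i => pd1_eq_sum hΩ hd0 hf i
  have h11 := fun i => pd1_eq_sum hΩ (hd1 i) (h1 i) i
  have h21 := fun j => pd2_eq_sum (h1 j) j
  have h121 := fun i j => pd1_eq_sum hΩ (hd1 j) (h21 j) i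
  have h2121 := fun i j => pd2_eq_sum (h121 i j) i
  have hs : ∀ α i j, pdv i (pdv j (φ α)) x = pdv j (pdv i (φ α)) x := fun α i j =>
    pdv_comm hΩ (hφ α) i j hx
  have hα : ∀ α, ∑ i, ∑ j, pdv j (pdv i (φ α)) x * ev (symb N (eb i) (eb j) (e α)) u =
      ∑ i, pdv i (pdv i (φ α)) x * ev (e α) u
        - 4 / N * ∑ i, ∑ j, u i * (pdv i (pdv j (φ α)) x * ev (dd (eb j) (e α)) u)
        + 4 * ‖u‖ ^ 2 / (N * (N - 2)) *
          ∑ i, ∑ j, pdv i (pdv j (φ α)) x * ev (dd (eb i) (dd (eb j) (e α))) u := by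
    intro α
    have hA : ∑ i, pdv i (pdv i (φ α)) x * ev (e α) u =
        ∑ i, ∑ j, pdv j (pdv i (φ α)) x * (⟪eb i, eb j⟫ * ev (e α) u) := by
      refine Finset.sum_congr rfl fun i _ => ?_
      simp [inner_eb]
    have hB : ∑ i, ∑ j, u j * (pdv j (pdv i (φ α)) x * ev (dd (eb i) (e α)) u) =
        ∑ i, ∑ j, u i * (pdv i (pdv j (φ α)) x * ev (dd (eb j) (e α)) u) := Finset.sum_comm
    have hB' : 4 / N * ∑ i, ∑ j, u i * (pdv i (pdv j (φ α)) x * ev (dd (eb j) (e α)) u) =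
        2 / N * ∑ i, ∑ j, u i * (pdv i (pdv j (φ α)) x * ev (dd (eb j) (e α)) u) +
        2 / N * ∑ i, ∑ j, u j * (pdv j (pdv i (φ α)) x * ev (dd (eb i) (e α)) u) := by
      rw [hB]
      ring
    rw [hA, hB']
    simp only [Finset.mul_sum, ← Finset.sum_add_distrib, ← Finset.sum_sub_distrib]
    refine Finset.sum_congr rfl fun i _ => Finset.sum_congr rfl fun j _ => ?_
    rw [ev_symb, inner_eb, inner_eb, inner_eb, hs α i j, dd_comm]
    ring
  rw [Finset.sum_congr rfl fun α _ => hα α, Finset.sum_add_distrib, Finset.sum_sub_distrib,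
    ← Finset.mul_sum, ← Finset.mul_sum, Dk, show (m : ℝ) + 2 * k - 4 = N - 2 by rw [hN]; ring, ← hN]
  simp only [h11 _ x hx u hu, h121 _ _ x hx u hu, h2121 _ _ x hx u hu]
  congr 2
  · exact Finset.sum_comm
  · simp only [Finset.mul_sum]
    symm
    rw [Finset.sum_comm]
    exact Finset.sum_congr rfl fun i _ => Finset.sum_comm
  · symm
    rw [Finset.sum_comm]
    exact Finset.sum_congr rfl fun i _ => Finset.sum_comm

end BosonicLaplacian

lemma exists_contDiff_extension {m : ℕ} {g : Evec m → ℝ} {r ρ : ℝ} (hρ : 0 < ρ) (hρr : ρ < r)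
    (hg : ContDiffOn ℝ 2 g (ball 0 r)) : ∃ ψ : Evec m → ℝ, ContDiff ℝ 2 ψ ∧ HasCompactSupport ψ ∧
      Set.EqOn ψ g (ball 0 ((ρ + r) / 2)) := by
  let χ : ContDiffBump (0 : Evec m) := ⟨(ρ + r) / 2, (ρ + 3 * r) / 4, by linarith, by linarith⟩
  refine ⟨fun x => χ x * g x, ?_, χ.hasCompactSupport.mul_right, fun x hx => ?_⟩
  · rw [contDiff_iff_contDiffAt]
    intro x
    by_cases hx : ‖x‖ < r
    · exact χ.contDiff.contDiffAt.mul
        (hg.contDiffAt (isOpen_ball.mem_nhds (by simpa using hx)))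
    · refine contDiffAt_const (c := (0 : ℝ)) |>.congr_of_eventuallyEq ?_
      have hx' : x ∈ (closedBall (0 : Evec m) ((ρ + 3 * r) / 4))ᶜ := by
        simp only [Set.mem_compl_iff, mem_closedBall_zero_iff]
        linarith
      filter_upwards [isClosed_closedBall.isOpen_compl.mem_nhds hx'] with y hy
      rw [χ.zero_of_le_dist (not_le.1 fun h => hy (mem_closedBall.2 h)).le, zero_mul]
  · simp only
    rw [χ.one_of_mem_closedBall (ball_subset_closedBall hx), one_mul]

section MeanValue

variable {m : ℕ}

lemma pdv_comp_const_add (a : Evec m) (i : Fin m) (g : Evec m → ℝ) :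
    pdv i (fun x => g (a + x)) = fun x => pdv i g (a + x) := by
  funext x
  rw [pdv, pdv, fderiv_comp_add_left]

lemma C2Hk.exists_separation {k : ℕ} {Ω : Set (Evec m)} {f : Evec m → Evec m → ℝ}
    (hf : C2Hk m k Ω f) : ∃ (s : Finset (ball (0 : Evec m) 1)) (e : s → MvPolynomial (Fin m) ℝ)
      (φ : s → Evec m → ℝ), (∀ α, HarmP k (e α)) ∧ (∀ α, ContDiffOn ℝ 2 (φ α) Ω) ∧
      ∀ x ∈ Ω, ∀ u ∈ closedBall (0 : Evec m) 1, f x u = ∑ α, φ α x * ev (e α) u := by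
  obtain ⟨s, e, he, hrep⟩ := exists_interpolation m k
  refine ⟨s, e, fun α x => f x α.1, he, fun α => ?_, fun x hx u hu => ?_⟩
  · exact hf.1.comp (f := fun x : Evec m => (x, (α.1.1 : Evec m)))
      (contDiff_id.prodMk contDiff_const).contDiffOn fun x hx => ⟨hx, α.1.2⟩
  · obtain ⟨q, hq, hfq⟩ := hf.2 x hx
    obtain ⟨P, hP, rfl⟩ := hq.exists_harmP
    rw [hfq u hu, congrArg (ev · u) (hrep P hP), ev_sum]
    refine Finset.sum_congr rfl fun α _ => ?_
    rw [ev_smul, ← hfq _ (ball_subset_closedBall α.1.2)]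

lemma integral_ball_reflv_of_lt {k : ℕ} (hm : 4 < m) (hk : 1 ≤ k) {a : Evec m} {r : ℝ}
    {f : Evec m → Evec m → ℝ} (hreg : C2Hk m k (ball a r) f)
    (hD : ∀ x ∈ ball a r, ∀ u ∈ ball (0 : Evec m) 1, Dk m k f x u = 0) {ν : Evec m} (hν : ‖ν‖ < 1)
    {ρ : ℝ} (hρ : 0 < ρ) (hρr : ρ < r) :
    ∫ y in ball (0 : Evec m) ρ, f (a + y) (reflv y ν) =
      ((m : ℝ) - 2) / (m + 2 * k - 2) * volume.real (ball (0 : Evec m) ρ) * f a ν := by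
  have hN2 : 2 < (m : ℝ) + 2 * k - 2 := by
    have : (1 : ℝ) ≤ k := by exact_mod_cast hk
    have : (4 : ℝ) < m := by exact_mod_cast hm
    linarith
  obtain ⟨s, e, φ, he, hφ, hf⟩ := hreg.exists_separation
  have hmap : ∀ x : Evec m, x ∈ ball (0 : Evec m) r → a + x ∈ ball a r := fun x hx => by
    simpa using hx
  have hφa : ∀ α, ContDiffOn ℝ 2 (fun x => φ α (a + x)) (ball 0 r) := fun α =>
    (hφ α).comp (contDiff_const.add contDiff_id).contDiffOn hmap
  choose ψ hψ hψc hψe using fun α => exists_contDiff_extension hρ hρr (hφa α)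
  have hsub : closedBall (0 : Evec m) ρ ⊆ ball 0 ((ρ + r) / 2) := closedBall_subset_ball (by linarith)
  have hsub' : ball (0 : Evec m) ((ρ + r) / 2) ⊆ ball 0 r := ball_subset_ball (by linarith)
  have hpdv : ∀ α i j, ∀ x ∈ closedBall (0 : Evec m) ρ,
      pdv j (pdv i (ψ α)) x = pdv j (pdv i (φ α)) (a + x) := by
    intro α i j x hx
    have h0 : ψ α =ᶠ[𝓝 x] fun x => φ α (a + x) :=
      (hψe α).eventuallyEq_of_mem (isOpen_ball.mem_nhds (hsub hx))
    have h1 : pdv i (ψ α) =ᶠ[𝓝 x] fun x => pdv i (φ α) (a + x) := by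
      rw [← pdv_comp_const_add]
      exact h0.fderiv.fun_comp fun L => L (eb i)
    rw [pdv, h1.fderiv_eq, ← pdv, pdv_comp_const_add]
  have hmain := integral_ball_of_compactSupport hk hm rfl he hψ hψc hρ (fun x hx => ?_) ν
  · have hball : ∀ y ∈ ball (0 : Evec m) ρ, ∀ u ∈ closedBall (0 : Evec m) 1,
        f (a + y) u = ∑ α, ψ α y * ev (e α) u := fun y hy u hu => by
      have hy' := hsub (ball_subset_closedBall hy)
      rw [hf _ (hmap y (hsub' hy')) u hu]
      exact Finset.sum_congr rfl fun α _ => by rw [hψe α hy']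
    have hfa := hball 0 (mem_ball_self hρ) ν (by simpa using hν.le)
    rw [add_zero] at hfa
    rw [hfa, ← hmain]
    exact setIntegral_congr_fun measurableSet_ball fun y hy =>
      hball y hy _ (by simpa [norm_reflv] using hν.le)
  · have hx' := hmap x (hsub' (hsub hx))
    refine HarmP.eq_zero_of_ball (k := k) ?_ fun u hu => ?_
    · exact (harmSubmodule m k).sum_mem fun α _ => Submodule.sum_mem _ fun i _ =>
        Submodule.sum_mem _ fun j _ => Submodule.smul_mem _ _ (harmP_symb hk rfl hN2 (he α) _ _)
    · rw [← hD _ hx' u hu, Dk_eq_sum rfl isOpen_ball hφ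
        (fun x hx u hu => hf x hx u (ball_subset_closedBall hu)) _ hx' u hu]
      simp only [ev_sum, ev_smul, hpdv _ _ _ x hx]

lemma integral_ball_reflv {k : ℕ} (hm : 4 < m) (hk : 1 ≤ k) {a : Evec m} {r : ℝ} (hr : 0 < r)
    {f : Evec m → Evec m → ℝ} (hreg : C2Hk m k (ball a r) f)
    (hc : ContinuousOn (fun q : Evec m × Evec m => f q.1 q.2)
      (closedBall a r ×ˢ closedBall (0 : Evec m) 1))
    (hD : ∀ x ∈ ball a r, ∀ u ∈ ball (0 : Evec m) 1, Dk m k f x u = 0) {ν : Evec m} (hν : ‖ν‖ < 1) :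
    ∫ y in ball (0 : Evec m) r, f (a + y) (reflv y ν) =
      ((m : ℝ) - 2) / (m + 2 * k - 2) * volume.real (ball (0 : Evec m) r) * f a ν := by
  have := evec_nontrivial (by lia : 0 < m)
  have hmaps : ∀ y ∈ ball (0 : Evec m) r,
      (a + y, reflv y ν) ∈ closedBall a r ×ˢ closedBall (0 : Evec m) 1 := fun y hy => by
    refine ⟨ball_subset_closedBall (by simpa using hy), ?_⟩
    simpa [norm_reflv] using hν.le
  obtain ⟨M, hM⟩ := ((isCompact_closedBall a r).prod
    (isCompact_closedBall (0 : Evec m) 1)).exists_bound_of_continuousOn hc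
  have hcont : ContinuousOn (fun y => f (a + y) (reflv y ν)) (ball 0 r \ {0}) :=
    hc.comp (f := fun y => (a + y, reflv y ν)) ((by fun_prop : ContinuousOn (fun y => a + y) _).prodMk
      ((continuousOn_reflv ν).mono fun y hy => hy.2)) fun y hy => hmaps y hy.1
  have hint : IntegrableOn (fun y => f (a + y) (reflv y ν)) (ball 0 r) := by
    have : IsFiniteMeasure (volume.restrict (ball (0 : Evec m) r)) :=
      ⟨by simpa using measure_ball_lt_top⟩
    refine Integrable.of_bound ?_ M
      ((ae_restrict_iff' measurableSet_ball).2 (.of_forall fun y hy => hM _ (hmaps y hy)))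
    have := hcont.aestronglyMeasurable (μ := volume)
      (measurableSet_ball.diff (measurableSet_singleton 0))
    rwa [Measure.restrict_congr_set (sdiff_null_ae_eq_self (measure_singleton _))] at this
  set c : ℝ := ((m : ℝ) - 2) / (m + 2 * k - 2) * f a ν with hcdef
  have hconst : ∀ t, IntegrableOn (fun _ => c) (ball (0 : Evec m) t) := fun t =>
    integrableOn_const measure_ball_lt_top.ne
  have hsub : ∀ t ≤ r, ∫ y in ball (0 : Evec m) t, (f (a + y) (reflv y ν) - c) =
      (∫ y in ball (0 : Evec m) t, f (a + y) (reflv y ν)) -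
        volume.real (ball (0 : Evec m) t) * c := fun t ht => by
    rw [integral_sub (hint.mono_set (ball_subset_ball ht)) (hconst t), setIntegral_const,
      smul_eq_mul]
  obtain ⟨t, htmono, htlt, htlim⟩ := exists_seq_strictMono_tendsto' hr
  have hunion : ⋃ n, ball (0 : Evec m) (t n) = ball 0 r := by
    refine subset_antisymm (Set.iUnion_subset fun n => ball_subset_ball (htlt n).2.le) fun y hy => ?_
    obtain ⟨n, hn⟩ := (htlim.eventually_const_lt (mem_ball_zero_iff.1 hy)).exists
    exact Set.mem_iUnion.2 ⟨n, by simpa using hn⟩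
  have hlim := tendsto_setIntegral_of_monotone (μ := volume)
    (f := fun y : Evec m => f (a + y) (reflv y ν) - c) (fun n => measurableSet_ball)
    (fun n n' h => ball_subset_ball (x := (0 : Evec m)) (htmono.monotone h))
    (by rw [hunion]; exact hint.sub (hconst r))
  have hzero : ∀ n, ∫ y in ball (0 : Evec m) (t n), (f (a + y) (reflv y ν) - c) = 0 := fun n => by
    rw [hsub _ (htlt n).2.le, integral_ball_reflv_of_lt hm hk hreg hD hν (htlt n).1 (htlt n).2,
      hcdef]
    ring
  simp only [hzero, hunion] at hlim
  rw [hsub r le_rfl] at hlim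
  have h := tendsto_nhds_unique hlim tendsto_const_nhds
  rw [sub_eq_zero.1 h, hcdef]
  ring

end MeanValue

/-- mean-value property, volume version, for null solutions of the
bosonic Laplacian, `m > 4`. -/
theorem stmt_14 (m k : ℕ) (hm : 4 < m) (hk : 1 ≤ k)
    (a : Evec m) (r : ℝ) (hr : 0 < r) (f : Evec m → Evec m → ℝ)
    (hreg : C2Hk m k (ball a r) f)
    (hc : ContinuousOn (fun q : Evec m × Evec m => f q.1 q.2)
      (closedBall a r ×ˢ closedBall (0 : Evec m) 1))
    (hD : ∀ x ∈ ball a r, ∀ u ∈ ball (0 : Evec m) 1, Dk m k f x u = 0) :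
    ∀ ν : Evec m, ‖ν‖ < 1 →
      f a ν = (((m : ℝ) + 2 * k - 2) / (((m : ℝ) - 2) * (volume (ball a r)).toReal)) *
        ∫ x in ball a r, f x (reflv (x - a) ν) := by
  intro ν hν
  have hm4 : (4 : ℝ) < m := by exact_mod_cast hm
  have hV : 0 < volume.real (ball (0 : Evec m) r) :=
    ENNReal.toReal_pos (measure_ball_pos volume _ hr).ne' measure_ball_lt_top.ne
  have hshift : ∫ x in ball a r, f x (reflv (x - a) ν) =
      ∫ y in ball (0 : Evec m) r, f (a + y) (reflv y ν) := by
    rw [← integral_indicator measurableSet_ball, ← integral_indicator measurableSet_ball,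
      ← integral_add_left_eq_self _ a]
    refine integral_congr_ae (.of_forall fun y => ?_)
    by_cases hy : ‖y‖ < r <;> simp [hy]
  rw [hshift, integral_ball_reflv hm hk hr hreg hc hD hν, Measure.addHaar_ball_center volume a r,
    ← measureReal_def]
  have h2 : (m : ℝ) - 2 ≠ 0 := by linarith
  have h3 : (m : ℝ) + 2 * k - 2 ≠ 0 := by
    have : (0 : ℝ) ≤ k := by positivity
    linarith
  field_simp
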